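/- If A ⊆ ℝⁿ is a measurable set of infinite Lebesgue measure, then for Haar-almost every unimodular lattice Λ ∈ SL(n,ℝ)/SL(n,ℤ), Λ contains a nonzero vector lying in A. -/

import Mathlib

open MeasureTheory Filter Matrix Real ENNReal

noncomputable section

/-- `SL(n, ℝ)`. -/
abbrev SLR (n : ℕ) := Matrix.SpecialLinearGroup (Fin n) ℝ

instance (n : ℕ) : TopologicalSpace (SLR n) :=
  TopologicalSpace.induced (fun g => (g : Matrix (Fin n) (Fin n) ℝ)) inferInstance

/-- The image of `SL(n, ℤ)` in `SL(n, ℝ)`. -/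
def latticeGamma (n : ℕ) : Subgroup (SLR n) :=
  (Matrix.SpecialLinearGroup.map (n := Fin n) (Int.castRingHom ℝ)).range

/-- The space of unimodular lattices `X_n = SL(n,ℝ)/SL(n,ℤ)`. -/
abbrev LatticeSpace (n : ℕ) := SLR n ⧸ latticeGamma n

instance (n : ℕ) : MeasurableSpace (LatticeSpace n) := borel _

/-- The real vector `g · m` of the lattice `g ℤⁿ` coming from the integer vector `m`. -/
def vecOf (n : ℕ) (g : SLR n) (m : Fin n → ℤ) : Fin n → ℝ :=
  (g : Matrix (Fin n) (Fin n) ℝ).mulVec (fun i => (m i : ℝ))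

/-- Euclidean norm on `Fin n → ℝ`. -/
def eNorm {n : ℕ} (v : Fin n → ℝ) : ℝ := ‖(WithLp.equiv 2 (Fin n → ℝ)).symm v‖

/-- The lattice `Λ` contains a nonzero vector lying in `A`. -/
def Intersects (n : ℕ) (Λ : LatticeSpace n) (A : Set (Fin n → ℝ)) : Prop :=
  ∀ g : SLR n, (QuotientGroup.mk g : LatticeSpace n) = Λ →
    ∃ m : Fin n → ℤ, m ≠ 0 ∧ vecOf n g m ∈ A

/-- `α₁(Λ) = sup_{0 ≠ v ∈ Λ} 1/‖v‖` (Euclidean norm). -/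
def alpha1 (n : ℕ) (Λ : LatticeSpace n) : ℝ :=
  sSup {r : ℝ | ∃ g : SLR n, (QuotientGroup.mk g : LatticeSpace n) = Λ ∧
    ∃ m : Fin n → ℤ, m ≠ 0 ∧ r = 1 / eNorm (vecOf n g m)}

open scoped Topology

/-! ### The homogeneous space of lattices -/

instance (n : ℕ) : IsTopologicalGroup (SLR n) :=
  Matrix.SpecialLinearGroup.topologicalGroup

lemma isClosedEmbedding_coe_SLR (n : ℕ) :
    Topology.IsClosedEmbedding (fun g : SLR n => (g : Matrix (Fin n) (Fin n) ℝ)) :=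
  Matrix.SpecialLinearGroup.isClosedEmbedding_val

instance (n : ℕ) : PolishSpace (SLR n) :=
  haveI : PolishSpace (Matrix (Fin n) (Fin n) ℝ) :=
    inferInstanceAs (PolishSpace (Fin n → Fin n → ℝ))
  (isClosedEmbedding_coe_SLR n).polishSpace

instance (n : ℕ) : SecondCountableTopology (SLR n) := inferInstance

instance (n : ℕ) : MeasurableSpace (SLR n) := borel _

instance (n : ℕ) : BorelSpace (SLR n) := ⟨rfl⟩

instance (n : ℕ) : BorelSpace (LatticeSpace n) := ⟨rfl⟩

lemma isClosed_latticeGamma (n : ℕ) : IsClosed (latticeGamma n : Set (SLR n)) := by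
  have h : (latticeGamma n : Set (SLR n)) =
      (fun g : SLR n => (g : Matrix (Fin n) (Fin n) ℝ)) ⁻¹'
        {M | ∀ i j, M i j ∈ Set.range ((↑) : ℤ → ℝ)} := by
    ext g
    constructor
    · rintro ⟨γ, rfl⟩ i j
      exact ⟨γ i j, rfl⟩
    · intro hg
      choose f hf using hg
      have hM : (Matrix.of f).map (Int.castRingHom ℝ) = (g : Matrix (Fin n) (Fin n) ℝ) := by
        ext i j
        exact hf i j
      have hdet : (Matrix.of f).det = 1 := by
        have := (Int.castRingHom ℝ).map_det (Matrix.of f)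
        rw [RingHom.mapMatrix_apply, hM, g.2] at this
        exact Int.cast_injective (α := ℝ) (by simpa using this)
      refine ⟨⟨Matrix.of f, hdet⟩, ?_⟩
      ext i j
      exact hf i j
  rw [h]
  refine IsClosed.preimage (isClosedEmbedding_coe_SLR n).continuous ?_
  simp only [Set.ofPred_forall]
  refine isClosed_iInter fun i => isClosed_iInter fun j => ?_
  exact Int.isClosedEmbedding_coe_real.isClosed_range.preimage (continuous_apply_apply i j)

instance (n : ℕ) : T1Space (LatticeSpace n) := by
  refine ⟨fun x => ?_⟩
  obtain ⟨g, rfl⟩ := QuotientGroup.mk_surjective x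
  have hq : Topology.IsQuotientMap (QuotientGroup.mk : SLR n → LatticeSpace n) :=
    isQuotientMap_quotient_mk'
  rw [← hq.isClosed_preimage]
  have : (QuotientGroup.mk : SLR n → LatticeSpace n) ⁻¹' {QuotientGroup.mk g} =
      (fun h => g⁻¹ * h) ⁻¹' (latticeGamma n : Set (SLR n)) := by
    ext h
    simp only [Set.mem_preimage, Set.mem_singleton_iff, SetLike.mem_coe]
    rw [eq_comm, QuotientGroup.eq]
  rw [this]
  exact (isClosed_latticeGamma n).preimage (continuous_const_mul _)

instance (n : ℕ) : SecondCountableTopology (LatticeSpace n) := inferInstance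

lemma continuous_mk_latticeSpace (n : ℕ) :
    Continuous (QuotientGroup.mk : SLR n → LatticeSpace n) :=
  continuous_coinduced_rng

/-- Functions on `Y × SL(n, ℝ)` that are right invariant under `SL(n, ℤ)` descend to the space
of lattices as measurable functions. -/
lemma measurable_descend {n : ℕ} {Y Z : Type*} [TopologicalSpace Y] [PolishSpace Y]
    [MeasurableSpace Y] [BorelSpace Y] [MeasurableSpace Z] {f : Y × SLR n → Z}
    (hf : Measurable f) (hinv : ∀ y g, ∀ γ ∈ latticeGamma n, f (y, g * γ) = f (y, g)) :
    Measurable fun p : Y × LatticeSpace n => f (p.1, p.2.out) := by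
  have hsurj : Function.Surjective
      (Prod.map id QuotientGroup.mk : Y × SLR n → Y × LatticeSpace n) :=
    Function.surjective_id.prodMap QuotientGroup.mk_surjective
  have hcont : Continuous (Prod.map id QuotientGroup.mk : Y × SLR n → Y × LatticeSpace n) :=
    continuous_id.prodMap (continuous_mk_latticeSpace n)
  have hb := hcont.map_borel_eq hsurj
  rw [← BorelSpace.measurable_eq (α := Y × SLR n),
    ← BorelSpace.measurable_eq (α := Y × LatticeSpace n)] at hb
  intro s hs
  have : (Prod.map id QuotientGroup.mk : Y × SLR n → Y × LatticeSpace n) ⁻¹'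
      ((fun p : Y × LatticeSpace n => f (p.1, p.2.out)) ⁻¹' s) = f ⁻¹' s := by
    ext ⟨y, g⟩
    simp only [Set.mem_preimage, Prod.map_apply, id]
    obtain ⟨γ, hγ⟩ := QuotientGroup.mk_out_eq_mul (latticeGamma n) g
    rw [hγ, hinv y g γ γ.2]
  have h2 : MeasurableSet[MeasurableSpace.map
      (Prod.map id QuotientGroup.mk : Y × SLR n → Y × LatticeSpace n) inferInstance]
      ((fun p : Y × LatticeSpace n => f (p.1, p.2.out)) ⁻¹' s) := by
    rw [MeasurableSpace.map_def, this]
    exact hf hs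
  rwa [hb] at h2

lemma measurable_descend' {n : ℕ} {Z : Type*} [MeasurableSpace Z] {f : SLR n → Z}
    (hf : Measurable f) (hinv : ∀ g, ∀ γ ∈ latticeGamma n, f (g * γ) = f g) :
    Measurable fun x : LatticeSpace n => f x.out := by
  have := measurable_descend (Y := Unit) (f := fun p : Unit × SLR n => f p.2)
    (hf.comp measurable_snd) (fun _ => hinv)
  exact this.comp (measurable_const (a := ()) |>.prodMk measurable_id)

lemma out_smul_eq {n : ℕ} {Z : Type*} {f : SLR n → Z}
    (hinv : ∀ g, ∀ γ ∈ latticeGamma n, f (g * γ) = f g) (g : SLR n) (x : LatticeSpace n) :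
    f (g • x).out = f (g * x.out) := by
  have : g • x = QuotientGroup.mk (g * x.out) := by
    conv_lhs => rw [← QuotientGroup.out_eq' x]
    rfl
  rw [this]
  obtain ⟨γ, hγ⟩ := QuotientGroup.mk_out_eq_mul (latticeGamma n) (g * x.out)
  rw [hγ, hinv _ γ γ.2]

/-- Invariance of the expectation of functions on lattices under `SL(n, ℝ)`. -/
lemma lintegral_out_mul_left {n : ℕ} {μ : Measure (LatticeSpace n)}
    (hμ : ∀ (g : SLR n) (s : Set (LatticeSpace n)), μ ((fun x => g • x) ⁻¹' s) = μ s)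
    {f : SLR n → ℝ≥0∞} (hf : Measurable f)
    (hinv : ∀ g, ∀ γ ∈ latticeGamma n, f (g * γ) = f g) (g : SLR n) :
    ∫⁻ x, f (g * x.out) ∂μ = ∫⁻ x, f x.out ∂μ := by
  have hm : Measurable fun x : LatticeSpace n => g • x := (continuous_const_smul g).measurable
  have hmap : μ.map (fun x => g • x) = μ := by
    ext s hs
    rw [Measure.map_apply hm hs, hμ]
  conv_rhs => rw [← hmap, lintegral_map (measurable_descend' hf hinv) hm]
  exact lintegral_congr fun x => (out_smul_eq hinv g x).symm

/-! ### Counting measures of equivariant families of points -/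

/-- A countable family of points depending measurably on `g ∈ SL(n, ℝ)`, which is permuted when
`g` is replaced by `g * γ`, `γ ∈ SL(n, ℤ)`. -/
structure IsLatticeFamily {n : ℕ} {I W : Type*} [MeasurableSpace W] (p : I → SLR n → W) :
    Prop where
  measurable : ∀ i, Measurable (p i)
  perm : ∀ γ ∈ latticeGamma n, ∃ σ : Equiv.Perm I, ∀ i g, p i (g * γ) = p (σ i) g

namespace IsLatticeFamily

variable {n : ℕ} {I W : Type*} [MeasurableSpace W]
  {p : I → SLR n → W}

lemma tsum_mul_right (hp : IsLatticeFamily p) (f : W → ℝ≥0∞) (g : SLR n) {γ : SLR n}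
    (hγ : γ ∈ latticeGamma n) : ∑' i, f (p i (g * γ)) = ∑' i, f (p i g) := by
  obtain ⟨σ, hσ⟩ := hp.perm γ hγ
  simp_rw [hσ]
  exact σ.tsum_eq fun i => f (p i g)

variable [Countable I]

lemma measurable_tsum (hp : IsLatticeFamily p) {f : W → ℝ≥0∞} (hf : Measurable f) :
    Measurable fun g => ∑' i, f (p i g) :=
  Measurable.tsum fun i => hf.comp (hp.measurable i)

lemma measurable_tsum_out (hp : IsLatticeFamily p) {f : W → ℝ≥0∞} (hf : Measurable f) :
    Measurable fun x : LatticeSpace n => ∑' i, f (p i x.out) :=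
  measurable_descend' (hp.measurable_tsum hf) fun g _ hγ => hp.tsum_mul_right f g hγ

/-- The intensity measure of the random point set `p · Λ`. -/
def intensity (_ : IsLatticeFamily p) (μ : Measure (LatticeSpace n)) : Measure W :=
  μ.bind fun x => Measure.sum fun i => Measure.dirac (p i x.out)

lemma lintegral_intensity (hp : IsLatticeFamily p) (μ : Measure (LatticeSpace n))
    {f : W → ℝ≥0∞} (hf : Measurable f) :
    ∫⁻ w, f w ∂hp.intensity μ = ∫⁻ x, ∑' i, f (p i x.out) ∂μ := by
  have hk : Measurable fun x : LatticeSpace n =>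
      Measure.sum fun i => Measure.dirac (p i x.out) := by
    refine Measure.measurable_of_measurable_coe _ fun s hs => ?_
    have := hp.measurable_tsum_out (f := s.indicator 1) (measurable_one.indicator hs)
    convert this using 2 with x
    rw [Measure.sum_apply _ hs]
    simp_rw [Measure.dirac_apply' _ hs]
  rw [intensity, Measure.lintegral_bind hk.aemeasurable hf.aemeasurable]
  refine lintegral_congr fun x => ?_
  rw [lintegral_sum_measure]
  simp_rw [lintegral_dirac' _ hf]

lemma intensity_apply (hp : IsLatticeFamily p) (μ : Measure (LatticeSpace n))
    {s : Set W} (hs : MeasurableSet s) :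
    hp.intensity μ s = ∫⁻ x, ∑' i, s.indicator 1 (p i x.out) ∂μ := by
  rw [← lintegral_indicator_one hs, hp.lintegral_intensity μ (measurable_one.indicator hs)]

/-- If `SL(n, ℝ)` acts on the points, the intensity measure is invariant. -/
lemma measurePreserving_intensity (hp : IsLatticeFamily p) {μ : Measure (LatticeSpace n)}
    (hμ : ∀ (g : SLR n) (s : Set (LatticeSpace n)), μ ((fun x => g • x) ⁻¹' s) = μ s)
    (g : SLR n) {T : W → W} (hT : Measurable T) (hTp : ∀ i h, p i (g * h) = T (p i h)) :
    MeasurePreserving T (hp.intensity μ) (hp.intensity μ) := by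
  refine ⟨hT, ?_⟩
  ext s hs
  rw [Measure.map_apply hT hs, hp.intensity_apply μ hs, hp.intensity_apply μ (hT hs),
    ← lintegral_out_mul_left hμ (hp.measurable_tsum (measurable_one.indicator hs))
      (fun g γ hγ => hp.tsum_mul_right _ g hγ) g]
  simp_rw [hTp]
  rfl

end IsLatticeFamily

/-- The action of `SL(n, ℝ)` on tuples of vectors. -/
def tupleAct {n : ℕ} {ι : Type*} (g : SLR n) (U : ι → Fin n → ℝ) : ι → Fin n → ℝ :=
  fun i => (g : Matrix (Fin n) (Fin n) ℝ) *ᵥ U i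

/-- The real tuple given by an integral tuple. -/
def intTuple {n : ℕ} {ι : Type*} (m : ι → Fin n → ℤ) : ι → Fin n → ℝ := fun i j => (m i j : ℝ)

lemma tupleAct_mul {n : ℕ} {ι : Type*} (g h : SLR n) (U : ι → Fin n → ℝ) :
    tupleAct (g * h) U = tupleAct g (tupleAct h U) := by
  funext i
  simp [tupleAct]

lemma tupleAct_smul {n : ℕ} {ι : Type*} (g : SLR n) (r : ℝ) (U : ι → Fin n → ℝ) :
    tupleAct g (r • U) = r • tupleAct g U := by
  funext i
  simp [tupleAct, Matrix.mulVec_smul]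

lemma continuous_tupleAct {n : ℕ} {ι : Type*} :
    Continuous fun q : SLR n × (ι → Fin n → ℝ) => tupleAct q.1 q.2 := by
  refine continuous_pi fun i => Continuous.matrix_mulVec ?_ ?_
  · exact (isClosedEmbedding_coe_SLR n).continuous.comp continuous_fst
  · exact (continuous_apply i).comp continuous_snd

lemma tupleAct_map_intTuple {n : ℕ} {ι : Type*} (γ : Matrix.SpecialLinearGroup (Fin n) ℤ)
    (m : ι → Fin n → ℤ) :
    tupleAct (Matrix.SpecialLinearGroup.map (n := Fin n) (Int.castRingHom ℝ) γ) (intTuple m) =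
      intTuple fun i => (γ : Matrix (Fin n) (Fin n) ℤ) *ᵥ m i := by
  funext i j
  simp [tupleAct, intTuple, Matrix.mulVec, dotProduct]

/-- Multiplication by an integral unimodular matrix as a permutation of integral vectors. -/
def mulVecPerm {n : ℕ} (γ : Matrix.SpecialLinearGroup (Fin n) ℤ) :
    Equiv.Perm (Fin n → ℤ) where
  toFun m := (γ : Matrix (Fin n) (Fin n) ℤ) *ᵥ m
  invFun m := ((γ⁻¹ : Matrix.SpecialLinearGroup (Fin n) ℤ) : Matrix (Fin n) (Fin n) ℤ) *ᵥ m
  left_inv m := by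
    change (γ⁻¹).1 *ᵥ (γ.1 *ᵥ m) = m
    rw [Matrix.mulVec_mulVec]
    have : (γ⁻¹).1 * γ.1 = 1 := congrArg Subtype.val (inv_mul_cancel γ)
    rw [this, Matrix.one_mulVec]
  right_inv m := by
    change γ.1 *ᵥ ((γ⁻¹).1 *ᵥ m) = m
    rw [Matrix.mulVec_mulVec]
    have : γ.1 * (γ⁻¹).1 = 1 := congrArg Subtype.val (mul_inv_cancel γ)
    rw [this, Matrix.one_mulVec]

lemma isLatticeFamily_tuple (n : ℕ) (ι : Type*) [Countable ι] :
    IsLatticeFamily fun (m : ι → Fin n → ℤ) (g : SLR n) => tupleAct g (intTuple m) where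
  measurable m := by
    refine Continuous.measurable ?_
    exact continuous_tupleAct.comp (continuous_id.prodMk continuous_const)
  perm := by
    rintro _ ⟨γ, rfl⟩
    refine ⟨Equiv.piCongrRight fun _ => mulVecPerm γ, fun m g => ?_⟩
    rw [tupleAct_mul, tupleAct_map_intTuple]
    rfl

/-- The intensity measure of tuples of lattice vectors. -/
def tupleIntensity {n : ℕ} (ι : Type*) [Fintype ι] (μ : Measure (LatticeSpace n)) :
    Measure (ι → Fin n → ℝ) := (isLatticeFamily_tuple n ι).intensity μ

lemma lintegral_tupleIntensity {n : ℕ} {ι : Type*} [Fintype ι] (μ : Measure (LatticeSpace n))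
    {f : (ι → Fin n → ℝ) → ℝ≥0∞} (hf : Measurable f) :
    ∫⁻ U, f U ∂tupleIntensity ι μ =
      ∫⁻ x, ∑' m : ι → Fin n → ℤ, f (tupleAct x.out (intTuple m)) ∂μ :=
  (isLatticeFamily_tuple n ι).lintegral_intensity μ hf

/-! ### Contracting families in `SL(n, ℝ)` -/

section Contraction

variable {n : ℕ} {ι : Type*}

/-- The square matrix of the coordinates `e j` of a tuple of vectors. -/
def coordMatrix (e : ι → Fin n) (U : ι → Fin n → ℝ) : Matrix ι ι ℝ :=
  Matrix.of fun i j => U i (e j)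

/-- Replace the coordinate `c` of each vector of a tuple. -/
def setCoord (c : Fin n) (U : ι → Fin n → ℝ) (y : ι → ℝ) : ι → Fin n → ℝ :=
  fun i => Function.update (U i) c (y i)

/-- The coordinate `c` of each vector of a tuple. -/
def getCoord (c : Fin n) (U : ι → Fin n → ℝ) : ι → ℝ := fun i => U i c

/-- The matrix multiplying by `ε` all the coordinates but the coordinate `c`, which is replaced by
`ε (ε ^ n)⁻¹ (v c + ∑ j, x j * v (e j))`. -/
def contractionMatrix [Fintype ι] (c : Fin n) (e : ι → Fin n) (ε : ℝ) (x : ι → ℝ) :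
    Matrix (Fin n) (Fin n) ℝ :=
  Matrix.diagonal (fun l => ε * if l = c then (ε ^ n)⁻¹ else 1) *
    (1 + Matrix.vecMulVec (Pi.single c 1) (fun l => ∑ j, x j * (Pi.single (e j) 1 : Fin n → ℝ) l))

lemma det_contractionMatrix [Fintype ι] {c : Fin n} {e : ι → Fin n} (hc : ∀ j, e j ≠ c)
    {ε : ℝ} (hε : ε ≠ 0)
    (x : ι → ℝ) : (contractionMatrix c e ε x).det = 1 := by
  rw [contractionMatrix, Matrix.det_mul, Matrix.det_diagonal, Finset.prod_mul_distrib,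
    Finset.prod_ite_eq', Matrix.vecMulVec_eq Unit,
    Matrix.det_one_add_replicateCol_mul_replicateRow]
  have h : ∀ j, (Pi.single (e j) 1 : Fin n → ℝ) c = 0 := fun j => by
    rw [Pi.single_apply, if_neg (hc j).symm]
  simp [h, hε]

/-- The contracting family `contractionMatrix` in `SL(n, ℝ)`. -/
def contraction [Fintype ι] {c : Fin n} {e : ι → Fin n} (hc : ∀ j, e j ≠ c)
    {ε : ℝ} (hε : ε ≠ 0)
    (x : ι → ℝ) : SLR n := ⟨contractionMatrix c e ε x, det_contractionMatrix hc hε x⟩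

lemma tupleAct_contraction [Fintype ι] {c : Fin n} {e : ι → Fin n} (hc : ∀ j, e j ≠ c)
    {ε : ℝ} (hε : ε ≠ 0)
    (x : ι → ℝ) (U : ι → Fin n → ℝ) :
    tupleAct (contraction hc hε x) U = setCoord c (ε • U)
      ((ε ^ n)⁻¹ • (getCoord c (ε • U) + coordMatrix e (ε • U) *ᵥ x)) := by
  funext i l
  change (contractionMatrix c e ε x *ᵥ U i) l = _
  rw [contractionMatrix, ← Matrix.mulVec_mulVec, Matrix.mulVec_diagonal, Matrix.add_mulVec,
    Matrix.one_mulVec, Matrix.vecMulVec_mulVec]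
  have h : (fun l => ∑ j, x j * (Pi.single (e j) 1 : Fin n → ℝ) l) ⬝ᵥ U i =
      ∑ j, U i (e j) * x j := by
    simp only [dotProduct, Finset.sum_mul]
    rw [Finset.sum_comm]
    refine Finset.sum_congr rfl fun j _ => ?_
    simp [Pi.single_apply, mul_comm]
  rw [h]
  by_cases hl : l = c
  · subst hl
    simp [setCoord, getCoord, coordMatrix, Matrix.mulVec, dotProduct, mul_add, Finset.mul_sum]
    congr 1
    · ring
    · exact Finset.sum_congr rfl fun j _ => by ring
  · simp [setCoord, hl]

lemma continuous_contraction [Fintype ι] {c : Fin n} {e : ι → Fin n} (hc : ∀ j, e j ≠ c) {ε : ℝ}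
    (hε : ε ≠ 0) : Continuous fun x : ι → ℝ => contraction hc hε x := by
  refine (isClosedEmbedding_coe_SLR n).isEmbedding.continuous_iff.2 ?_
  refine Continuous.matrix_mul continuous_const (continuous_const.add ?_)
  refine Continuous.matrix_vecMulVec continuous_const ?_
  fun_prop

lemma coordMatrix_setCoord {c : Fin n} {e : ι → Fin n} (hc : ∀ j, e j ≠ c)
    (U : ι → Fin n → ℝ) (y : ι → ℝ) : coordMatrix e (setCoord c U y) = coordMatrix e U := by
  ext i j
  simp [coordMatrix, setCoord, hc j]

lemma continuous_coordMatrix (e : ι → Fin n) : Continuous (coordMatrix e) := by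
  refine continuous_matrix fun i j => ?_
  exact continuous_apply_apply i (e j)

lemma continuous_setCoord (c : Fin n) :
    Continuous fun q : (ι → Fin n → ℝ) × (ι → ℝ) => setCoord c q.1 q.2 := by
  refine continuous_pi fun i => ?_
  exact Continuous.update (by fun_prop) c (by fun_prop)

lemma continuous_getCoord (c : Fin n) : Continuous (getCoord (ι := ι) c) := by
  unfold getCoord
  fun_prop

/-- Exchanging the coordinates `c` of a tuple with an independent vector. -/
def swapCoord (c : Fin n) : ((ι → Fin n → ℝ) × (ι → ℝ)) →ₗ[ℝ] ((ι → Fin n → ℝ) × (ι → ℝ)) where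
  toFun q := (setCoord c q.1 q.2, getCoord c q.1)
  map_add' p q := by
    refine Prod.ext ?_ ?_
    · funext i
      exact Function.update_add (p.1 i) (q.1 i) c (p.2 i) (q.2 i)
    · rfl
  map_smul' r p := by
    refine Prod.ext ?_ ?_
    · funext i
      exact Function.update_smul r (p.1 i) c (p.2 i)
    · rfl

instance (n : ℕ) (ι : Type*) [Fintype ι] :
    (volume : Measure (ι → Fin n → ℝ)).IsAddHaarMeasure :=
  Measure.pi.isAddHaarMeasure _

lemma measurePreserving_swapCoord [Fintype ι] (c : Fin n) :
    MeasurePreserving (swapCoord (ι := ι) c) := by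
  have hinv : swapCoord (ι := ι) c ∘ₗ swapCoord c = LinearMap.id := by
    refine LinearMap.ext fun q => ?_
    refine Prod.ext ?_ ?_
    · funext i
      simp [swapCoord, setCoord, getCoord]
    · funext i
      simp [swapCoord, setCoord, getCoord]
  have hdet : (swapCoord (ι := ι) c).det * (swapCoord (ι := ι) c).det = 1 := by
    rw [← LinearMap.det_comp, hinv, LinearMap.det_id]
  have hne : (swapCoord (ι := ι) c).det ≠ 0 := fun h => by simp [h] at hdet
  refine ⟨(LinearMap.continuous_of_finiteDimensional _).measurable, ?_⟩
  have : (volume : Measure ((ι → Fin n → ℝ) × (ι → ℝ))).IsAddHaarMeasure :=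
    Measure.prod.instIsAddHaarMeasure (volume : Measure (ι → Fin n → ℝ))
      (volume : Measure (ι → ℝ))
  rw [Measure.map_linearMap_addHaar_eq_smul_addHaar _ hne]
  have : |(swapCoord (ι := ι) c).det| = 1 := by
    rcases mul_self_eq_one_iff.1 hdet with h | h <;> simp [h]
  rw [abs_inv, this]
  simp

lemma measurePreserving_tupleAct [Fintype ι] (g : SLR n) :
    MeasurePreserving (tupleAct (ι := ι) g) := by
  refine volume_preserving_pi fun _ => ?_
  have hd : (g : Matrix (Fin n) (Fin n) ℝ).det = 1 := g.2
  have := Real.map_matrix_volume_pi_eq_smul_volume_pi (M := (g : Matrix (Fin n) (Fin n) ℝ))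
    (by rw [hd]; norm_num)
  refine ⟨?_, ?_⟩
  · exact (Continuous.matrix_mulVec continuous_const continuous_id).measurable
  · rw [hd] at this
    simp only [inv_one, abs_one, ENNReal.ofReal_one, one_smul] at this
    exact this

lemma lintegral_affine [Fintype ι] [DecidableEq ι] {M : Matrix ι ι ℝ} (hM : M.det ≠ 0) (b : ι → ℝ)
    {F : (ι → ℝ) → ℝ≥0∞}
    (hF : Measurable F) :
    ∫⁻ x, F (b + M *ᵥ x) = ENNReal.ofReal |M.det⁻¹| * ∫⁻ y, F y := by
  have h := Real.map_matrix_volume_pi_eq_smul_volume_pi hM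
  have hm : Measurable (Matrix.toLin' M) :=
    (LinearMap.continuous_of_finiteDimensional _).measurable
  calc ∫⁻ x, F (b + M *ᵥ x) = ∫⁻ y, F (b + y) ∂(Measure.map (Matrix.toLin' M) volume) := by
        rw [lintegral_map (f := fun y => F (b + y)) (hF.comp (measurable_const_add b)) hm]
        rfl
    _ = _ := by
        rw [h, lintegral_smul_measure, lintegral_add_left_eq_self, smul_eq_mul]

end Contraction

section Averaging

open scoped NNReal

variable {n : ℕ} {ι : Type*} [Fintype ι] [DecidableEq ι]

/-- The density obtained by averaging `Ψ` over a contracting family with weight `κ`. -/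
def avgDensity (c : Fin n) (e : ι → Fin n) (κ : (ι → ℝ) → ℝ≥0) (Ψ : (ι → Fin n → ℝ) → ℝ≥0)
    (q : ℝ × (ι → Fin n → ℝ) × (ι → ℝ)) : ℝ≥0 :=
  ‖(coordMatrix e q.2.1).det⁻¹‖₊ *
    (κ ((coordMatrix e q.2.1)⁻¹ *ᵥ (q.1 • q.2.2 - getCoord c q.2.1)) *
      Ψ (setCoord c q.2.1 q.2.2))

lemma lintegral_contraction {c : Fin n} {e : ι → Fin n} (hc : ∀ j, e j ≠ c)
    {κ : (ι → ℝ) → ℝ≥0} (hκ : Continuous κ) {Ψ : (ι → Fin n → ℝ) → ℝ≥0} (hΨ : Continuous Ψ)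
    (hΨ0 : ∀ U, (coordMatrix e U).det = 0 → Ψ U = 0) {ε : ℝ} (hε : 0 < ε) (U : ι → Fin n → ℝ) :
    ∫⁻ x, (κ x : ℝ≥0∞) * Ψ (tupleAct (contraction hc hε.ne' x) U) =
      ENNReal.ofReal (ε ^ n) ^ Fintype.card ι * ∫⁻ y, avgDensity c e κ Ψ (ε ^ n, ε • U, y) := by
  set W := ε • U with hW
  have hδ : 0 < ε ^ n := pow_pos hε n
  simp_rw [tupleAct_contraction]
  rw [← hW]
  by_cases hdet : (coordMatrix e W).det = 0
  · have h1 : ∀ y, Ψ (setCoord c W y) = 0 := fun y =>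
      hΨ0 _ (by rwa [coordMatrix_setCoord hc])
    simp [avgDensity, h1]
  · set M := coordMatrix e W with hM
    set F : (ι → ℝ) → ℝ≥0∞ := fun y =>
      κ (M⁻¹ *ᵥ ((ε ^ n) • y - getCoord c W)) * Ψ (setCoord c W y) with hF
    have hFm : Measurable F := by
      refine Measurable.fun_mul ?_ ?_
      · refine (hκ.comp ?_).measurable.coe_nnreal_ennreal
        exact Continuous.matrix_mulVec continuous_const (by fun_prop)
      · refine (hΨ.comp ?_).measurable.coe_nnreal_ennreal
        exact (continuous_setCoord c).comp (continuous_const.prodMk continuous_id)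
    have hMd : ((ε ^ n)⁻¹ • M).det = ((ε ^ n)⁻¹) ^ Fintype.card ι * M.det :=
      Matrix.det_smul _ _
    have hMd0 : ((ε ^ n)⁻¹ • M).det ≠ 0 := by
      rw [hMd]; exact mul_ne_zero (pow_ne_zero _ (inv_ne_zero hδ.ne')) hdet
    have key := lintegral_affine hMd0 ((ε ^ n)⁻¹ • getCoord c W) hFm
    have hL : ∀ x, F ((ε ^ n)⁻¹ • getCoord c W + ((ε ^ n)⁻¹ • M) *ᵥ x) =
        κ x * Ψ (setCoord c W ((ε ^ n)⁻¹ • (getCoord c W + M *ᵥ x))) := fun x => by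
      have h1 : (ε ^ n)⁻¹ • getCoord c W + ((ε ^ n)⁻¹ • M) *ᵥ x =
          (ε ^ n)⁻¹ • (getCoord c W + M *ᵥ x) := by
        rw [Matrix.smul_mulVec, smul_add]
      have h2 : M⁻¹ *ᵥ ((ε ^ n) • ((ε ^ n)⁻¹ • (getCoord c W + M *ᵥ x)) - getCoord c W) = x := by
        rw [smul_inv_smul₀ hδ.ne', add_sub_cancel_left, Matrix.mulVec_mulVec,
          Matrix.nonsing_inv_mul _ (Ne.isUnit hdet), Matrix.one_mulVec]
      rw [h1]
      simp only [hF]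
      rw [h2]
    simp_rw [hL] at key
    rw [key, hMd]
    have hR : ∀ y, (avgDensity c e κ Ψ (ε ^ n, W, y) : ℝ≥0∞) = ‖M.det⁻¹‖₊ * F y := fun y => by
      simp [avgDensity, hF, hM]
    simp_rw [hR]
    rw [lintegral_const_mul _ hFm, ← mul_assoc]
    congr 1
    rw [mul_inv, inv_pow, inv_inv, abs_mul, ENNReal.ofReal_mul (abs_nonneg _), abs_of_pos
      (pow_pos hδ _), ENNReal.ofReal_pow hδ.le, ← Real.norm_eq_abs, ofReal_norm]
    rfl

lemma continuous_avgDensity {c : Fin n} {e : ι → Fin n} (hc : ∀ j, e j ≠ c)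
    {κ : (ι → ℝ) → ℝ≥0} (hκ : Continuous κ) {Ψ : (ι → Fin n → ℝ) → ℝ≥0} (hΨ : Continuous Ψ)
    {η : ℝ} (hη : 0 < η) (hΨη : ∀ U, Ψ U ≠ 0 → η ≤ |(coordMatrix e U).det|) :
    Continuous (avgDensity c e κ Ψ) := by
  have hdet : Continuous fun q : ℝ × (ι → Fin n → ℝ) × (ι → ℝ) => (coordMatrix e q.2.1).det :=
    ((continuous_coordMatrix e).comp (by fun_prop)).matrix_det
  rw [continuous_iff_continuousAt]
  intro q
  by_cases h0 : (coordMatrix e q.2.1).det = 0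
  · have hU : ∀ᶠ p in 𝓝 q, |(coordMatrix e (p : ℝ × (ι → Fin n → ℝ) × (ι → ℝ)).2.1).det| < η := by
      refine (hdet.abs.tendsto q).eventually_lt_const ?_
      simpa [h0] using hη
    have : avgDensity c e κ Ψ =ᶠ[𝓝 q] fun _ => 0 := by
      filter_upwards [hU] with p hp
      have : Ψ (setCoord c p.2.1 p.2.2) = 0 := by
        by_contra hne
        have := hΨη _ hne
        rw [coordMatrix_setCoord hc] at this
        linarith
      simp [avgDensity, this]
    exact (continuousAt_const (y := (0 : ℝ≥0))).congr this.symm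
  · have hM : Continuous fun q : ℝ × (ι → Fin n → ℝ) × (ι → ℝ) => coordMatrix e q.2.1 :=
      (continuous_coordMatrix e).comp (by fun_prop)
    refine ContinuousAt.mul ?_ (ContinuousAt.mul ?_ ?_)
    · exact (hdet.continuousAt.inv₀ h0).nnnorm
    · refine hκ.continuousAt.comp ?_
      have h1 : ContinuousAt (fun q : ℝ × (ι → Fin n → ℝ) × (ι → ℝ) =>
          (coordMatrix e q.2.1)⁻¹) q := by
        simp_rw [Matrix.inv_def, Ring.inverse_eq_inv']
        exact (hdet.continuousAt.inv₀ h0).smul hM.matrix_adjugate.continuousAt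
      have h2 : Continuous (fun q : ℝ × (ι → Fin n → ℝ) × (ι → ℝ) =>
          q.1 • q.2.2 - getCoord c q.2.1) :=
        (by fun_prop : Continuous fun q : ℝ × (ι → Fin n → ℝ) × (ι → ℝ) => q.1 • q.2.2).sub
          ((continuous_getCoord c).comp (by fun_prop))
      have h3 : Continuous fun p : Matrix ι ι ℝ × (ι → ℝ) => p.1 *ᵥ p.2 := by fun_prop
      exact ContinuousAt.comp (f := fun q : ℝ × (ι → Fin n → ℝ) × (ι → ℝ) =>
        ((coordMatrix e q.2.1)⁻¹, q.1 • q.2.2 - getCoord c q.2.1)) h3.continuousAt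
        (h1.prodMk h2.continuousAt)
    · exact (hΨ.comp ((continuous_setCoord c).comp (by fun_prop))).continuousAt

lemma avgDensity_support {c : Fin n} {e : ι → Fin n}
    {κ : (ι → ℝ) → ℝ≥0} {r : ℝ} (hr : ∀ x, κ x ≠ 0 → ‖x‖ ≤ r)
    {Ψ : (ι → Fin n → ℝ) → ℝ≥0} {R : ℝ} (hR : ∀ U, Ψ U ≠ 0 → ‖U‖ ≤ R)
    (hc : ∀ j, e j ≠ c)
    (hΨ0 : ∀ U, (coordMatrix e U).det = 0 → Ψ U = 0) {δ : ℝ} (hδ : |δ| ≤ 1)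
    {W : ι → Fin n → ℝ} {y : ι → ℝ} (h : avgDensity c e κ Ψ (δ, W, y) ≠ 0) :
    ‖W‖ ≤ R + Fintype.card ι * R * r ∧ ‖y‖ ≤ R := by
  simp only [avgDensity, ne_eq, mul_eq_zero, not_or] at h
  obtain ⟨-, h1, h2⟩ := h
  have hdet : (coordMatrix e W).det ≠ 0 := fun h0 => h2 (hΨ0 _ (by rwa [coordMatrix_setCoord hc]))
  have hs := hR _ h2
  have hR0 : 0 ≤ R := (norm_nonneg _).trans hs
  set z := (coordMatrix e W)⁻¹ *ᵥ (δ • y - getCoord c W) with hz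
  have hzr := hr _ h1
  have hr0 : 0 ≤ r := (norm_nonneg _).trans hzr
  have hent : ∀ i l, ‖setCoord c W y i l‖ ≤ R := fun i l =>
    (norm_le_pi_norm _ l).trans ((norm_le_pi_norm _ i).trans hs)
  have hy : ∀ i, ‖y i‖ ≤ R := fun i => by simpa [setCoord] using hent i c
  have hWl : ∀ i l, l ≠ c → ‖W i l‖ ≤ R := fun i l hl => by simpa [setCoord, hl] using hent i l
  have hMz : coordMatrix e W *ᵥ z = δ • y - getCoord c W := by
    rw [hz, Matrix.mulVec_mulVec, Matrix.mul_nonsing_inv _ (Ne.isUnit hdet), Matrix.one_mulVec]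
  have hB : 0 ≤ Fintype.card ι * R * r := by positivity
  refine ⟨?_, (pi_norm_le_iff_of_nonneg hR0).2 hy⟩
  refine (pi_norm_le_iff_of_nonneg (by positivity)).2 fun i =>
    (pi_norm_le_iff_of_nonneg (by positivity)).2 fun l => ?_
  by_cases hl : l = c
  · subst hl
    have h3 : W i l = δ * y i - (coordMatrix e W *ᵥ z) i := by
      rw [hMz]; simp [getCoord]
    rw [h3]
    refine (norm_sub_le _ _).trans (add_le_add ?_ ?_)
    · rw [norm_mul, Real.norm_eq_abs δ]
      exact (mul_le_mul hδ (hy i) (norm_nonneg _) zero_le_one).trans (one_mul R).le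
    · refine (norm_sum_le _ _).trans ?_
      have : ∀ j ∈ Finset.univ, ‖coordMatrix e W i j * z j‖ ≤ R * r := fun j _ => by
        rw [norm_mul]
        exact mul_le_mul (hWl i _ (hc j)) ((norm_le_pi_norm z j).trans hzr) (norm_nonneg _) hR0
      refine (Finset.sum_le_card_nsmul _ _ _ this).trans ?_
      rw [nsmul_eq_mul, Finset.card_univ, mul_assoc]
  · exact (hWl i l hl).trans (by linarith)

lemma lintegral_avgDensity_zero {c : Fin n} {e : ι → Fin n} (hc : ∀ j, e j ≠ c)
    {κ : (ι → ℝ) → ℝ≥0} (hκ : Continuous κ) (hκ1 : ∫⁻ x, κ x = 1)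
    {Ψ : (ι → Fin n → ℝ) → ℝ≥0} (hΨ : Continuous Ψ)
    (hΨ0 : ∀ U, (coordMatrix e U).det = 0 → Ψ U = 0) :
    ∫⁻ q : (ι → Fin n → ℝ) × (ι → ℝ), avgDensity c e κ Ψ (0, q.1, q.2) = ∫⁻ U, Ψ U := by
  set G : (ι → Fin n → ℝ) × (ι → ℝ) → ℝ≥0∞ := fun q =>
    ‖(coordMatrix e q.1).det⁻¹‖₊ * (κ ((coordMatrix e q.1)⁻¹ *ᵥ (-q.2)) * Ψ q.1) with hG
  have hdetm : Measurable fun q : (ι → Fin n → ℝ) × (ι → ℝ) => (coordMatrix e q.1).det :=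
    (((continuous_coordMatrix e).comp continuous_fst).matrix_det).measurable
  have hGm : Measurable G := by
    refine Measurable.fun_mul (hdetm.inv.nnnorm.coe_nnreal_ennreal) (Measurable.fun_mul ?_ ?_)
    · refine (hκ.measurable.comp ?_).coe_nnreal_ennreal
      refine measurable_pi_lambda _ fun i => ?_
      simp only [Matrix.mulVec, dotProduct, Matrix.inv_def, Ring.inverse_eq_inv']
      refine Finset.measurable_sum _ fun j _ => Measurable.fun_mul ?_ (by fun_prop)
      refine hdetm.inv.mul (Continuous.measurable ?_)
      exact (((continuous_coordMatrix e).comp continuous_fst).matrix_adjugate).matrix_elem i j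
    · exact (hΨ.comp continuous_fst).measurable.coe_nnreal_ennreal
  have h1 : ∀ q : (ι → Fin n → ℝ) × (ι → ℝ),
      (avgDensity c e κ Ψ (0, q.1, q.2) : ℝ≥0∞) = G (swapCoord c q) := fun q => by
    simp [avgDensity, hG, swapCoord, coordMatrix_setCoord hc]
  simp_rw [h1]
  rw [(measurePreserving_swapCoord c).lintegral_comp hGm]
  change ∫⁻ q, G q ∂(volume.prod volume) = _
  rw [lintegral_prod _ hGm.aemeasurable]
  refine lintegral_congr fun U => ?_
  by_cases hdet : (coordMatrix e U).det = 0
  · simp [hG, hΨ0 U hdet]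
  · have hMd : (-(coordMatrix e U)⁻¹).det ≠ 0 := by
      rw [Matrix.det_neg, Matrix.det_nonsing_inv, Ring.inverse_eq_inv']
      exact mul_ne_zero (by positivity) (inv_ne_zero hdet)
    have key := lintegral_affine hMd 0 (F := fun x => (κ x : ℝ≥0∞))
      hκ.measurable.coe_nnreal_ennreal
    simp only [zero_add, hκ1, mul_one, Matrix.neg_mulVec] at key
    have hκm : Measurable fun y => (κ ((coordMatrix e U)⁻¹ *ᵥ (-y)) : ℝ≥0∞) :=
      (hκ.comp (Continuous.matrix_mulVec continuous_const
        continuous_neg)).measurable.coe_nnreal_ennreal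
    simp only [hG]
    rw [lintegral_const_mul _ (hκm.mul_const _), lintegral_mul_const _ hκm]
    simp_rw [Matrix.mulVec_neg]
    rw [key, ← mul_assoc]
    have : (‖(coordMatrix e U).det⁻¹‖₊ : ℝ≥0∞) *
        ENNReal.ofReal |(-(coordMatrix e U)⁻¹).det⁻¹| = 1 := by
      rw [Matrix.det_neg, Matrix.det_nonsing_inv, Ring.inverse_eq_inv', ← Real.norm_eq_abs,
        ofReal_norm, ← enorm_eq_nnnorm, ← enorm_mul]
      rw [← ofReal_norm, norm_mul, norm_inv, norm_inv, norm_mul, norm_pow, norm_neg, norm_one,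
        one_pow, one_mul, norm_inv, inv_inv, inv_mul_cancel₀ (norm_ne_zero_iff.2 hdet),
        ENNReal.ofReal_one]
    rw [this, one_mul]

end Averaging

section Grid

open scoped NNReal

variable {n : ℕ} {ι : Type*}

/-- The integral parts of all the entries of a tuple. -/
def floorTuple (U : ι → Fin n → ℝ) : ι → Fin n → ℤ := fun i j => ⌊U i j⌋

lemma measurable_floorTuple : Measurable (floorTuple : (ι → Fin n → ℝ) → _) := by
  unfold floorTuple
  fun_prop

variable [Fintype ι]

lemma tsum_eq_lintegral_floorTuple (F : (ι → Fin n → ℤ) → ℝ≥0∞) :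
    ∑' m, F m = ∫⁻ U, F (floorTuple U) := by
  rw [← lintegral_map (f := F) (measurable_of_countable F) measurable_floorTuple,
    lintegral_countable']
  refine tsum_congr fun m => ?_
  have : floorTuple ⁻¹' {m} =
      Set.pi Set.univ fun i => Set.pi Set.univ fun j => Set.Ico (m i j : ℝ) (m i j + 1) := by
    ext U
    simp only [Set.mem_preimage, Set.mem_singleton_iff, Set.mem_pi, Set.mem_univ, true_imp_iff,
      funext_iff, floorTuple, Int.floor_eq_iff, Set.mem_Ico]
  rw [Measure.map_apply measurable_floorTuple (measurableSet_singleton m), this, volume_pi_pi]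
  simp_rw [volume_pi_pi]
  simp

/-- The point of the grid `ε ℤ` below a given tuple. -/
def gridPoint (ε : ℝ) (U : ι → Fin n → ℝ) : ι → Fin n → ℝ := ε • intTuple (floorTuple (ε⁻¹ • U))

lemma measurable_gridPoint (ε : ℝ) : Measurable (gridPoint ε : (ι → Fin n → ℝ) → _) := by
  have h : Measurable (intTuple : (ι → Fin n → ℤ) → _) := measurable_of_countable _
  exact (h.comp (measurable_floorTuple.comp (measurable_const_smul ε⁻¹))).const_smul ε

lemma norm_gridPoint_sub_le {ε : ℝ} (hε : 0 < ε) (U : ι → Fin n → ℝ) :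
    ‖gridPoint ε U - U‖ ≤ ε := by
  refine (pi_norm_le_iff_of_nonneg hε.le).2 fun i => (pi_norm_le_iff_of_nonneg hε.le).2 fun j => ?_
  have h1 := Int.floor_le (ε⁻¹ * U i j)
  have h2 := Int.lt_floor_add_one (ε⁻¹ * U i j)
  have h3 : ε * (ε⁻¹ * U i j) = U i j := by field_simp
  have h4 := mul_le_mul_of_nonneg_left h1 hε.le
  have h5 := mul_le_mul_of_nonneg_left h2.le hε.le
  rw [h3] at h4 h5
  simp only [gridPoint, intTuple, floorTuple, Pi.sub_apply, Pi.smul_apply, smul_eq_mul,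
    Real.norm_eq_abs, abs_le]
  constructor <;> linarith

lemma tsum_smul_eq_lintegral_gridPoint {ε : ℝ} (hε : 0 < ε) {F : (ι → Fin n → ℝ) → ℝ≥0∞}
    (hF : Measurable F) :
    ENNReal.ofReal (ε ^ n) ^ Fintype.card ι * ∑' m : ι → Fin n → ℤ, F (ε • intTuple m) =
      ∫⁻ U, F (gridPoint ε U) := by
  rw [tsum_eq_lintegral_floorTuple]
  have hm : Measurable fun U : ι → Fin n → ℝ => F (ε • intTuple (floorTuple U)) := by
    have h : Measurable (intTuple : (ι → Fin n → ℤ) → _) := measurable_of_countable _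
    exact hF.comp ((h.comp measurable_floorTuple).const_smul ε)
  have hmap := Measure.map_addHaar_smul (volume : Measure (ι → Fin n → ℝ)) (inv_ne_zero hε.ne')
  have h2 := lintegral_map (μ := (volume : Measure (ι → Fin n → ℝ))) hm
    (measurable_const_smul ε⁻¹)
  have hfr : Module.finrank ℝ (ι → Fin n → ℝ) = n * Fintype.card ι := by
    simp [Module.finrank_pi_fintype, mul_comm]
  rw [hmap, lintegral_smul_measure, hfr] at h2
  rw [← ENNReal.ofReal_pow (by positivity), ← pow_mul]
  have h3 : |((ε⁻¹) ^ (n * Fintype.card ι))⁻¹| = ε ^ (n * Fintype.card ι) := by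
    rw [inv_pow, inv_inv, abs_of_pos (by positivity)]
  rw [h3] at h2
  exact h2

end Grid

section Limit

open scoped NNReal

variable {n : ℕ} {ι : Type*} [Fintype ι] [DecidableEq ι]

lemma tendsto_lintegral_contraction_tsum {c : Fin n} {e : ι → Fin n} (hc : ∀ j, e j ≠ c)
    {κ : (ι → ℝ) → ℝ≥0} (hκ : Continuous κ) (hκ1 : ∫⁻ x, κ x = 1)
    {r : ℝ} (hr : ∀ x, κ x ≠ 0 → ‖x‖ ≤ r)
    {Ψ : (ι → Fin n → ℝ) → ℝ≥0} (hΨ : Continuous Ψ) {R : ℝ} (hR : ∀ U, Ψ U ≠ 0 → ‖U‖ ≤ R)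
    {η : ℝ} (hη : 0 < η) (hΨη : ∀ U, Ψ U ≠ 0 → η ≤ |(coordMatrix e U).det|) (h : SLR n)
    {ε : ℕ → ℝ} (hε : ∀ N, 0 < ε N) (hε1 : ∀ N, ε N ≤ 1) (hε0 : Tendsto ε atTop (𝓝 0)) :
    Tendsto (fun N => ∫⁻ x, (κ x : ℝ≥0∞) * ∑' m : ι → Fin n → ℤ,
      (Ψ (tupleAct (contraction hc (hε N).ne' x) (tupleAct h (intTuple m))) : ℝ≥0∞))
      atTop (𝓝 (∫⁻ U, Ψ U)) := by
  have hn : n ≠ 0 := fun h => (h ▸ c).elim0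
  have hΨ0 : ∀ U, (coordMatrix e U).det = 0 → Ψ U = 0 := fun U hU => by
    by_contra hne
    have := hΨη U hne
    rw [hU, abs_zero] at this
    linarith
  have hG := continuous_avgDensity hc hκ hΨ hη hΨη
  set G := avgDensity c e κ Ψ with hGdef
  have hA : ∀ N, ∫⁻ x, (κ x : ℝ≥0∞) * ∑' m : ι → Fin n → ℤ,
      (Ψ (tupleAct (contraction hc (hε N).ne' x) (tupleAct h (intTuple m))) : ℝ≥0∞) =
      ∫⁻ q : (ι → Fin n → ℝ) × (ι → ℝ), G (ε N ^ n, tupleAct h (gridPoint (ε N) q.1), q.2) := by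
    intro N
    simp_rw [← ENNReal.tsum_mul_left]
    rw [lintegral_tsum]
    · simp_rw [lintegral_contraction hc hκ hΨ hΨ0 (hε N), ENNReal.tsum_mul_left, ← tupleAct_smul]
      have hm : Measurable fun q : (ι → Fin n → ℝ) × (ι → ℝ) =>
          (G (ε N ^ n, tupleAct h q.1, q.2) : ℝ≥0∞) := by
        refine (hG.comp ?_).measurable.coe_nnreal_ennreal
        exact continuous_const.prodMk ((continuous_tupleAct.comp
          (continuous_const.prodMk continuous_fst)).prodMk continuous_snd)
      rw [tsum_smul_eq_lintegral_gridPoint (hε N)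
        (F := fun W => ∫⁻ y, (G (ε N ^ n, tupleAct h W, y) : ℝ≥0∞)) hm.lintegral_prod_right']
      change _ = ∫⁻ q, _ ∂(volume.prod volume)
      rw [lintegral_prod]
      exact (hm.comp (((measurable_gridPoint (ε N)).comp measurable_fst).prodMk
        measurable_snd)).aemeasurable
    · intro m
      refine (Measurable.fun_mul hκ.measurable.coe_nnreal_ennreal ?_).aemeasurable
      refine (hΨ.comp ?_).measurable.coe_nnreal_ennreal
      exact continuous_tupleAct.comp ((continuous_contraction hc (hε N).ne').prodMk
        continuous_const)
  simp_rw [hA]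
  have hlim : ∫⁻ U, (Ψ U : ℝ≥0∞) =
      ∫⁻ q : (ι → Fin n → ℝ) × (ι → ℝ), G (0, tupleAct h q.1, q.2) := by
    rw [← lintegral_avgDensity_zero hc hκ hκ1 hΨ hΨ0]
    have hmp : MeasurePreserving (Prod.map (tupleAct (ι := ι) h) (id : (ι → ℝ) → _)) :=
      (measurePreserving_tupleAct h).prod (MeasurePreserving.id _)
    refine (hmp.lintegral_comp (f := fun q : (ι → Fin n → ℝ) × (ι → ℝ) =>
      (G (0, q.1, q.2) : ℝ≥0∞)) ?_).symm
    exact (hG.comp (by fun_prop)).measurable.coe_nnreal_ennreal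
  rw [hlim]
  -- a bounded set containing all the supports
  set R' := R + Fintype.card ι * R * r with hR'
  obtain ⟨R₂, hR₂⟩ : ∃ R₂, ∀ W : ι → Fin n → ℝ, ‖tupleAct h W‖ ≤ R' → ‖W‖ ≤ R₂ := by
    have hcomp : IsCompact (tupleAct h⁻¹ '' Metric.closedBall (0 : ι → Fin n → ℝ) R') :=
      (isCompact_closedBall _ _).image
        (continuous_tupleAct.comp (continuous_const.prodMk continuous_id))
    obtain ⟨R₂, hR₂⟩ := hcomp.isBounded.exists_norm_le
    refine ⟨R₂, fun W hW => hR₂ W ⟨tupleAct h W, by simpa using hW, ?_⟩⟩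
    rw [← tupleAct_mul, inv_mul_cancel]
    funext i
    simp [tupleAct]
  obtain ⟨C, hC⟩ : ∃ C : ℝ≥0, ∀ q : ℝ × (ι → Fin n → ℝ) × (ι → ℝ), |q.1| ≤ 1 → G q ≤ C := by
    have hcomp : IsCompact (Metric.closedBall (0 : ℝ) 1 ×ˢ
        (Metric.closedBall (0 : ι → Fin n → ℝ) R' ×ˢ Metric.closedBall (0 : ι → ℝ) R)) :=
      (isCompact_closedBall _ _).prod ((isCompact_closedBall _ _).prod (isCompact_closedBall _ _))
    obtain ⟨C, hC⟩ := (hcomp.image hG).bddAbove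
    refine ⟨C, fun q hq => ?_⟩
    by_cases h0 : G q = 0
    · rw [h0]; exact zero_le
    · have := avgDensity_support hr hR hc hΨ0 hq h0
      exact hC ⟨q, ⟨by simpa using hq, by simpa using this.1, by simpa using this.2⟩, rfl⟩
  have hε1' : ∀ N, |ε N ^ n| ≤ 1 := fun N => by
    rw [abs_of_pos (pow_pos (hε N) n)]
    exact pow_le_one₀ (hε N).le (hε1 N)
  refine tendsto_lintegral_of_dominated_convergence
    ((Metric.closedBall (0 : ι → Fin n → ℝ) (R₂ + 1) ×ˢ Metric.closedBall (0 : ι → ℝ) R).indicator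
      fun _ => (C : ℝ≥0∞)) ?_ ?_ ?_ ?_
  · intro N
    refine hG.measurable.coe_nnreal_ennreal.comp (measurable_const.prodMk (Measurable.prodMk ?_
      measurable_snd))
    exact (continuous_tupleAct.comp (continuous_const.prodMk continuous_id)).measurable.comp
      ((measurable_gridPoint (ε N)).comp measurable_fst)
  · refine fun N => Eventually.of_forall fun q => ?_
    by_cases h0 : G (ε N ^ n, tupleAct h (gridPoint (ε N) q.1), q.2) = 0
    · change ((G _ : ℝ≥0) : ℝ≥0∞) ≤ _
      rw [h0]; simp
    · have hs := avgDensity_support hr hR hc hΨ0 (hε1' N) h0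
      have h1 := hR₂ _ hs.1
      have h2 := norm_gridPoint_sub_le (hε N) q.1
      have h3 : ‖q.1‖ ≤ R₂ + 1 := by
        have := norm_sub_le (gridPoint (ε N) q.1) (gridPoint (ε N) q.1 - q.1)
        rw [_root_.sub_sub_cancel] at this
        linarith [hε1 N]
      rw [Set.indicator_of_mem]
      · exact ENNReal.coe_le_coe.2 (hC (ε N ^ n, tupleAct h (gridPoint (ε N) q.1), q.2) (hε1' N))
      · exact ⟨by simpa using h3, by simpa using hs.2⟩
  · rw [lintegral_indicator_const (measurableSet_closedBall.prod measurableSet_closedBall)]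
    exact ENNReal.mul_ne_top ENNReal.coe_ne_top (Bornology.IsBounded.measure_lt_top
      (Metric.isBounded_closedBall.prod Metric.isBounded_closedBall)).ne
  · refine Eventually.of_forall fun q => ?_
    refine (ENNReal.continuous_coe.comp hG).continuousAt.tendsto.comp ?_
    refine Tendsto.prodMk_nhds ?_ (Tendsto.prodMk_nhds ?_ tendsto_const_nhds)
    · simpa [hn] using hε0.pow n
    · refine ((continuous_tupleAct.comp
        (continuous_const (y := h) |>.prodMk continuous_id)).tendsto q.1).comp ?_
      rw [tendsto_iff_norm_sub_tendsto_zero]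
      exact squeeze_zero (fun _ => norm_nonneg _) (fun N => norm_gridPoint_sub_le (hε N) q.1) hε0

end Limit

section Siegel

open scoped NNReal

variable {n : ℕ} {ι : Type*} [Fintype ι]

lemma exists_bump (ι : Type*) [Fintype ι] : ∃ κ : (ι → ℝ) → ℝ≥0, Continuous κ ∧
    ∫⁻ x, (κ x : ℝ≥0∞) = 1 ∧ ∀ x, κ x ≠ 0 → ‖x‖ ≤ 1 := by
  set κ₀ : (ι → ℝ) → ℝ≥0 := fun x => Real.toNNReal (1 - ‖x‖) with hκ₀
  have hc : Continuous κ₀ := by fun_prop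
  have hs : ∀ x, κ₀ x ≠ 0 → ‖x‖ ≤ 1 := fun x hx => by
    have := Real.toNNReal_pos.1 (pos_iff_ne_zero.2 hx)
    linarith
  set I := ∫⁻ x, (κ₀ x : ℝ≥0∞) with hI
  have hfin : I ≠ ∞ := by
    have : I ≤ ∫⁻ x, (Metric.closedBall (0 : ι → ℝ) 1).indicator (fun _ => (1 : ℝ≥0∞)) x := by
      refine lintegral_mono fun x => ?_
      by_cases hx : κ₀ x = 0
      · simp [hx]
      · rw [Set.indicator_of_mem (by simpa using hs x hx)]
        have : κ₀ x ≤ 1 := by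
          rw [hκ₀, Real.toNNReal_le_one]
          linarith [norm_nonneg x]
        exact ENNReal.coe_le_one_iff.2 this
    refine ne_top_of_le_ne_top ?_ this
    rw [lintegral_indicator_const measurableSet_closedBall, one_mul]
    exact Metric.isBounded_closedBall.measure_lt_top.ne
  have hpos : I ≠ 0 := by
    intro h
    rw [hI, lintegral_eq_zero_iff hc.measurable.coe_nnreal_ennreal] at h
    have h2 := (Continuous.ae_eq_iff_eq volume (ENNReal.continuous_coe.comp hc)
      (continuous_const (y := (0 : ℝ≥0∞)))).1 h
    have := congrFun h2 0
    simp [hκ₀] at this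
  refine ⟨fun x => I.toNNReal⁻¹ * κ₀ x, by fun_prop, ?_, fun x hx => hs x (right_ne_zero_of_mul hx)⟩
  simp_rw [ENNReal.coe_mul]
  rw [lintegral_const_mul _ hc.measurable.coe_nnreal_ennreal, ← hI, ENNReal.coe_inv
    (ENNReal.toNNReal_ne_zero.2 ⟨hpos, hfin⟩), ENNReal.coe_toNNReal hfin,
    ENNReal.inv_mul_cancel hpos hfin]

/-- Averaging over left translates does not change the expectation. -/
lemma lintegral_average {μ : Measure (LatticeSpace n)} [SFinite μ]
    (hμ : ∀ (g : SLR n) (s : Set (LatticeSpace n)), μ ((fun x => g • x) ⁻¹' s) = μ s)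
    {κ : (ι → ℝ) → ℝ≥0} (hκ : Continuous κ) (hκ1 : ∫⁻ x, κ x = 1) {k : (ι → ℝ) → SLR n}
    (hk : Continuous k) {f : SLR n → ℝ≥0∞} (hf : Measurable f)
    (hinv : ∀ g, ∀ γ ∈ latticeGamma n, f (g * γ) = f g) :
    ∫⁻ x, f x.out ∂μ = ∫⁻ x : LatticeSpace n, (∫⁻ y, (κ y : ℝ≥0∞) * f (k y * x.out)) ∂μ := by
  have hm : Measurable fun q : (ι → ℝ) × SLR n => (κ q.1 : ℝ≥0∞) * f (k q.1 * q.2) := by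
    refine Measurable.fun_mul (hκ.comp continuous_fst).measurable.coe_nnreal_ennreal (hf.comp ?_)
    exact ((hk.comp continuous_fst).mul continuous_snd).measurable
  have hd := measurable_descend hm fun y g γ hγ => by
    simp only [← mul_assoc, hinv _ γ hγ]
  have hm2 : ∀ y, Measurable fun x : LatticeSpace n => f (k y * x.out) := fun y =>
    measurable_descend' (f := fun g => f (k y * g)) (hf.comp (measurable_const_mul _))
      fun g γ hγ => by simp only [← mul_assoc, hinv _ γ hγ]
  rw [← lintegral_lintegral_swap (f := fun y (x : LatticeSpace n) =>
    (κ y : ℝ≥0∞) * f (k y * x.out)) hd.aemeasurable]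
  simp_rw [lintegral_const_mul _ (hm2 _), lintegral_out_mul_left hμ hf hinv]
  rw [lintegral_mul_const _ hκ.measurable.coe_nnreal_ennreal, hκ1, one_mul]

variable [DecidableEq ι]

lemma lintegral_tupleIntensity_eq {μ : Measure (LatticeSpace n)} [IsProbabilityMeasure μ]
    (hμ : ∀ (g : SLR n) (s : Set (LatticeSpace n)), μ ((fun x => g • x) ⁻¹' s) = μ s)
    {c : Fin n} {e : ι → Fin n} (hc : ∀ j, e j ≠ c)
    {Ψ : (ι → Fin n → ℝ) → ℝ≥0} (hΨ : Continuous Ψ) {R : ℝ} (hR : ∀ U, Ψ U ≠ 0 → ‖U‖ ≤ R)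
    {η : ℝ} (hη : 0 < η) (hΨη : ∀ U, Ψ U ≠ 0 → η ≤ |(coordMatrix e U).det|) :
    ∫⁻ U, Ψ U ∂tupleIntensity ι μ = ∫⁻ U, (Ψ U : ℝ≥0∞) := by
  obtain ⟨κ, hκ, hκ1, hr⟩ := exists_bump ι
  have hfam := isLatticeFamily_tuple n ι
  rw [lintegral_tupleIntensity μ hΨ.measurable.coe_nnreal_ennreal]
  set S : SLR n → ℝ≥0∞ := fun g => ∑' m : ι → Fin n → ℤ, (Ψ (tupleAct g (intTuple m)) : ℝ≥0∞)
    with hS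
  have hSm : Measurable S := hfam.measurable_tsum hΨ.measurable.coe_nnreal_ennreal
  have hSinv : ∀ g, ∀ γ ∈ latticeGamma n, S (g * γ) = S g := fun g γ hγ =>
    hfam.tsum_mul_right (fun U => (Ψ U : ℝ≥0∞)) g hγ
  set ε : ℕ → ℝ := fun N => 1 / ((N : ℝ) + 1) with hε
  have hε' : ∀ N, 0 < ε N := fun N => by positivity
  have hε1 : ∀ N, ε N ≤ 1 := fun N => by
    rw [hε, div_le_one (by positivity)]; linarith [(Nat.cast_nonneg N : (0 : ℝ) ≤ N)]
  set A : ℕ → LatticeSpace n → ℝ≥0∞ := fun N x =>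
    ∫⁻ y, (κ y : ℝ≥0∞) * S (contraction hc (hε' N).ne' y * x.out) with hA
  have hAm : ∀ N, Measurable (A N) := fun N => by
    have hm : Measurable fun q : (ι → ℝ) × SLR n =>
        (κ q.1 : ℝ≥0∞) * S (contraction hc (hε' N).ne' q.1 * q.2) := by
      refine Measurable.fun_mul (hκ.comp continuous_fst).measurable.coe_nnreal_ennreal
        (hSm.comp ?_)
      exact (((continuous_contraction hc (hε' N).ne').comp continuous_fst).mul
        continuous_snd).measurable
    have hd := measurable_descend hm fun y g γ hγ => by
      simp only [← mul_assoc, hSinv _ γ hγ]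
    exact hd.lintegral_prod_left'
  have hlim : ∀ x, Tendsto (fun N => A N x) atTop (𝓝 (∫⁻ U, Ψ U)) := fun x => by
    have := tendsto_lintegral_contraction_tsum hc hκ hκ1 hr hΨ hR hη hΨη x.out hε' hε1
      tendsto_one_div_add_atTop_nhds_zero_nat
    simp only [hA, hS, tupleAct_mul]
    exact this
  refine le_antisymm ?_ ?_
  · have hC : ∀ C : ℕ, ∫⁻ x : LatticeSpace n, min (S x.out) C ∂μ ≤ min (∫⁻ U, Ψ U) C := by
      intro C
      have h1 : ∀ N, ∫⁻ x : LatticeSpace n, min (S x.out) C ∂μ ≤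
          ∫⁻ x : LatticeSpace n, min (A N x) C ∂μ := by
        intro N
        rw [lintegral_average hμ hκ hκ1 (continuous_contraction hc (hε' N).ne')
          (f := fun g => min (S g) C) (hSm.min measurable_const)
          (fun g γ hγ => by simp only [hSinv g γ hγ])]
        refine lintegral_mono fun x => le_min ?_ ?_
        · exact lintegral_mono fun y => mul_le_mul_right (min_le_left _ _) _
        · calc _ ≤ ∫⁻ y, (κ y : ℝ≥0∞) * C :=
                lintegral_mono fun y => mul_le_mul_right (min_le_right _ _) _
            _ = C := by
                rw [lintegral_mul_const _ hκ.measurable.coe_nnreal_ennreal, hκ1, one_mul]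
      have h2 : Tendsto (fun N => ∫⁻ x : LatticeSpace n, min (A N x) C ∂μ) atTop
          (𝓝 (∫⁻ _ : LatticeSpace n, min (∫⁻ U, Ψ U) C ∂μ)) := by
        refine tendsto_lintegral_of_dominated_convergence (fun _ => (C : ℝ≥0∞))
          (fun N => (hAm N).min measurable_const)
          (fun N => Eventually.of_forall fun x => min_le_right _ _) (by simp) ?_
        exact Eventually.of_forall fun x => (hlim x).min tendsto_const_nhds
      have := ge_of_tendsto' h2 h1
      simpa using this
    have h3 : Tendsto (fun C : ℕ => ∫⁻ x : LatticeSpace n, min (S x.out) C ∂μ) atTop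
        (𝓝 (∫⁻ x : LatticeSpace n, S x.out ∂μ)) := by
      refine lintegral_tendsto_of_tendsto_of_monotone
        (fun C => ((measurable_descend' hSm hSinv).min measurable_const).aemeasurable) ?_ ?_
      · exact Eventually.of_forall fun x C D hCD =>
          min_le_min_left _ (by exact_mod_cast hCD)
      · refine Eventually.of_forall fun x => ?_
        have := (tendsto_const_nhds (x := S x.out) (f := atTop)).min
          ENNReal.tendsto_nat_nhds_top
        simpa using this
    exact le_of_tendsto' h3 fun C => (hC C).trans (min_le_left _ _)
  · calc ∫⁻ U, (Ψ U : ℝ≥0∞) = ∫⁻ x, liminf (fun N => A N x) atTop ∂μ := by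
          simp_rw [(hlim _).liminf_eq]
          simp
      _ ≤ liminf (fun N => ∫⁻ x, A N x ∂μ) atTop := lintegral_liminf_le hAm
      _ = ∫⁻ x, S x.out ∂μ := by
          have : ∀ N, ∫⁻ x, A N x ∂μ = ∫⁻ x : LatticeSpace n, S x.out ∂μ := fun N =>
            (lintegral_average hμ hκ hκ1 (continuous_contraction hc (hε' N).ne') hSm hSinv).symm
          simp_rw [this]
          simp

end Siegel

lemma restrict_eq_of_withDensity_eq {α : Type*} [MeasurableSpace α] {μ ν : Measure α}
    {f : α → ℝ≥0∞} (hf : Measurable f) (htop : ∀ x, f x ≠ ∞)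
    (h : μ.withDensity f = ν.withDensity f) :
    μ.restrict {x | f x ≠ 0} = ν.restrict {x | f x ≠ 0} := by
  have hs : MeasurableSet {x | f x ≠ 0} := (measurableSet_eq_fun hf measurable_const).compl
  have key : ∀ ρ : Measure α, ρ.restrict {x | f x ≠ 0} =
      ((ρ.withDensity f).restrict {x | f x ≠ 0}).withDensity fun x => (f x)⁻¹ := fun ρ => by
    rw [restrict_withDensity hs]
    exact (withDensity_inv_same hf (ae_restrict_mem hs) (Eventually.of_forall htop)).symm
  rw [key μ, key ν, h]

section Siegel

open scoped NNReal

variable {n : ℕ} {ι : Type*} [Fintype ι] [DecidableEq ι]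

lemma restrict_tupleIntensity_coord {μ : Measure (LatticeSpace n)} [IsProbabilityMeasure μ]
    (hμ : ∀ (g : SLR n) (s : Set (LatticeSpace n)), μ ((fun x => g • x) ⁻¹' s) = μ s)
    {c : Fin n} {e : ι → Fin n} (hc : ∀ j, e j ≠ c) :
    (tupleIntensity ι μ).restrict {U | (coordMatrix e U).det ≠ 0} =
      volume.restrict {U | (coordMatrix e U).det ≠ 0} := by
  set Ψ : ℕ → (ι → Fin n → ℝ) → ℝ≥0 := fun j U =>
    Real.toNNReal (j + 1 - ‖U‖) * Real.toNNReal (|(coordMatrix e U).det| - 1 / ((j : ℝ) + 1))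
    with hΨ
  have hdet : Continuous fun U : ι → Fin n → ℝ => (coordMatrix e U).det :=
    (continuous_coordMatrix e).matrix_det
  have hc1 : ∀ j, Continuous (Ψ j) := fun j => by
    have := hdet.abs
    fun_prop
  have hne : ∀ j U, Ψ j U ≠ 0 → ‖U‖ ≤ j + 1 ∧ 1 / ((j : ℝ) + 1) ≤ |(coordMatrix e U).det| := by
    intro j U h
    have h1 := Real.toNNReal_pos.1 (pos_iff_ne_zero.2 (left_ne_zero_of_mul h))
    have h2 := Real.toNNReal_pos.1 (pos_iff_ne_zero.2 (right_ne_zero_of_mul h))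
    constructor <;> linarith
  have hun : {U : ι → Fin n → ℝ | (coordMatrix e U).det ≠ 0} =
      ⋃ j, {U | (Ψ j U : ℝ≥0∞) ≠ 0} := by
    ext U
    simp only [Set.mem_iUnion, Set.mem_ofPred_eq]
    constructor
    · intro h
      obtain ⟨a, ha⟩ := exists_nat_gt ‖U‖
      obtain ⟨b, hb⟩ := exists_nat_one_div_lt (abs_pos.2 h)
      refine ⟨max a b, ?_⟩
      rw [ENNReal.coe_ne_zero]
      refine mul_ne_zero (Real.toNNReal_pos.2 ?_).ne' (Real.toNNReal_pos.2 ?_).ne'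
      · have : (a : ℝ) ≤ (max a b : ℕ) := by exact_mod_cast le_max_left a b
        linarith
      · have h1 : (b : ℝ) ≤ (max a b : ℕ) := by exact_mod_cast le_max_right a b
        have : 1 / (((max a b : ℕ) : ℝ) + 1) ≤ 1 / ((b : ℝ) + 1) := by gcongr
        linarith
    · rintro ⟨j, hj⟩ h
      have := (hne j U (ENNReal.coe_ne_zero.1 hj)).2
      rw [h, abs_zero] at this
      exact absurd this (not_le.2 (by positivity))
  rw [hun, Measure.restrict_iUnion_congr]
  intro j
  refine restrict_eq_of_withDensity_eq (f := fun U => (Ψ j U : ℝ≥0∞))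
    (hc1 j).measurable.coe_nnreal_ennreal (fun _ => ENNReal.coe_ne_top) ?_
  have key : ∀ f : (ι → Fin n → ℝ) → ℝ≥0, Continuous f →
      ∫⁻ U, (f U : ℝ≥0∞) ∂(tupleIntensity ι μ).withDensity (fun U => (Ψ j U : ℝ≥0∞)) =
      ∫⁻ U, (f U : ℝ≥0∞) ∂volume.withDensity (fun U => (Ψ j U : ℝ≥0∞)) := by
    intro f hf
    rw [lintegral_withDensity_eq_lintegral_mul _ (hc1 j).measurable.coe_nnreal_ennreal
        hf.measurable.coe_nnreal_ennreal,
      lintegral_withDensity_eq_lintegral_mul _ (hc1 j).measurable.coe_nnreal_ennreal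
        hf.measurable.coe_nnreal_ennreal]
    have := lintegral_tupleIntensity_eq hμ hc (Ψ := fun U => Ψ j U * f U) ((hc1 j).mul hf)
      (R := j + 1) (fun U h => (hne j U (left_ne_zero_of_mul h)).1)
      (η := 1 / ((j : ℝ) + 1)) (by positivity)
      (fun U h => (hne j U (left_ne_zero_of_mul h)).2)
    simpa using this
  have hfin : IsFiniteMeasure (volume.withDensity fun U => (Ψ j U : ℝ≥0∞)) := by
    refine ⟨?_⟩
    rw [withDensity_apply _ MeasurableSet.univ, Measure.restrict_univ]
    have hcb := isCompact_closedBall (0 : ι → Fin n → ℝ) (j + 1)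
    rw [← setLIntegral_eq_of_support_subset (s := Metric.closedBall 0 (j + 1))]
    · exact setLIntegral_lt_top_of_isCompact hcb.measure_ne_top hcb (hc1 j)
    · intro U hU
      simpa using (hne j U (ENNReal.coe_ne_zero.1 hU)).1
  exact (ext_of_forall_lintegral_eq_of_IsFiniteMeasure fun f => (key f f.continuous).symm).symm

end Siegel

/-- The Siegel–Rogers mean value formula for tuples of linearly independent lattice vectors. -/
lemma lintegral_tupleIntensity_of_independent {n : ℕ} {ι : Type*} [Fintype ι] [DecidableEq ι]
    {μ : Measure (LatticeSpace n)} [IsProbabilityMeasure μ]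
    (hμ : ∀ (g : SLR n) (s : Set (LatticeSpace n)), μ ((fun x => g • x) ⁻¹' s) = μ s)
    (hn : Fintype.card ι < n) {f : (ι → Fin n → ℝ) → ℝ≥0∞}
    (hf : ∀ U, (∀ e : ι → Fin n, (coordMatrix e U).det = 0) → f U = 0) :
    ∫⁻ U, f U ∂tupleIntensity ι μ = ∫⁻ U, f U := by
  have hc : ∀ e : ι → Fin n, ∃ c, ∀ j, e j ≠ c := fun e => by
    by_contra! h
    have := Fintype.card_le_of_surjective e h
    simp only [Fintype.card_fin] at this
    omega
  have hs : f.support ⊆ ⋃ e : ι → Fin n, {U | (coordMatrix e U).det ≠ 0} := fun U hU => by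
    by_contra h
    refine hU (hf U fun e => ?_)
    by_contra h'
    exact h (Set.mem_iUnion.2 ⟨e, h'⟩)
  rw [← setLIntegral_eq_of_support_subset (μ := tupleIntensity ι μ) hs,
    ← setLIntegral_eq_of_support_subset (μ := volume) hs]
  congr 1
  rw [Measure.restrict_iUnion_congr]
  intro e
  obtain ⟨c, hc⟩ := hc e
  exact restrict_tupleIntensity_coord hμ hc

lemma tupleAct_intTuple_apply {n : ℕ} {ι : Type*} (g : SLR n) (m : ι → Fin n → ℤ) (i : ι) :
    tupleAct g (intTuple m) i = vecOf n g (m i) := rfl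

/-- Siegel's mean value formula. -/
lemma lintegral_tsum_vecOf {n : ℕ} (hn : 2 ≤ n)
    {μ : Measure (LatticeSpace n)} [IsProbabilityMeasure μ]
    (hμ : ∀ (g : SLR n) (s : Set (LatticeSpace n)), μ ((fun x => g • x) ⁻¹' s) = μ s)
    {f : (Fin n → ℝ) → ℝ≥0∞} (hf : Measurable f) (hf0 : f 0 = 0) :
    ∫⁻ x : LatticeSpace n, ∑' m : Fin n → ℤ, f (vecOf n x.out m) ∂μ = ∫⁻ v, f v := by
  have h := lintegral_tupleIntensity_of_independent (ι := Unit) hμ (by simpa using by omega)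
    (f := fun U => f (U ())) fun U hU => by
      have : U () = 0 := by
        funext k
        have := hU fun _ => k
        simpa [coordMatrix, Matrix.det_unique] using this
      simp only [this, hf0]
  rw [lintegral_tupleIntensity μ (f := fun U => f (U ())) (hf.comp (measurable_pi_apply ()))] at h
  have h2 := (volume_preserving_funUnique Unit (Fin n → ℝ)).lintegral_comp hf
  refine Eq.trans ?_ (h.trans h2)
  refine lintegral_congr fun x => ?_
  exact ((Equiv.funUnique Unit (Fin n → ℤ)).tsum_eq fun m => f (vecOf n x.out m)).symm

/-! ### The second moment method -/

lemma ENNReal.two_mul_le_add_sq' (a b : ℝ≥0∞) : 2 * a * b ≤ a ^ 2 + b ^ 2 := by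
  rcases eq_or_ne a ∞ with rfl | ha
  · simp
  rcases eq_or_ne b ∞ with rfl | hb
  · simp
  lift a to NNReal using ha
  lift b to NNReal using hb
  exact_mod_cast two_mul_le_add_sq a b

/-- Chebyshev's inequality for the event `N = 0`. -/
lemma measure_eq_zero_mul_le {Ω : Type*} [MeasurableSpace Ω] {μ : Measure Ω}
    [IsProbabilityMeasure μ] {N : Ω → ℝ≥0∞} (hN : Measurable N) {V C : ℝ≥0∞} (hV : V ≠ 0)
    (hV' : V ≠ ∞) (h1 : ∫⁻ x, N x ∂μ = V) (h2 : ∫⁻ x, N x ^ 2 ∂μ ≤ V ^ 2 + C * V) :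
    μ {x | N x = 0} * V ≤ C := by
  have hs : MeasurableSet {x | N x = 0} := measurableSet_eq_fun hN measurable_const
  have hp : ∀ x, {x | N x = 0}.indicator (fun _ => V ^ 2) x + 2 * V * N x ≤ N x ^ 2 + V ^ 2 := by
    intro x
    by_cases hx : N x = 0
    · simp [hx]
    · rw [Set.indicator_of_notMem (by exact hx), zero_add]
      calc 2 * V * N x = 2 * N x * V := by ring
        _ ≤ N x ^ 2 + V ^ 2 := ENNReal.two_mul_le_add_sq' _ _
  have h3 := lintegral_mono (μ := μ) hp
  rw [lintegral_add_left (measurable_const.indicator hs), lintegral_indicator_const hs,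
    lintegral_const_mul _ hN, h1, lintegral_add_right _ measurable_const] at h3
  simp only [lintegral_const, measure_univ, mul_one] at h3
  have h4 : 2 * V ^ 2 + V * (μ {x | N x = 0} * V) ≤ 2 * V ^ 2 + V * C := by
    calc _ = V ^ 2 * μ {x | N x = 0} + 2 * V * V := by ring
      _ ≤ _ := h3
      _ ≤ (V ^ 2 + C * V) + V ^ 2 := by gcongr
      _ = _ := by ring
  have h5 := (ENNReal.add_le_add_iff_left (ENNReal.mul_ne_top (by simp) (by simp [hV']))).1 h4
  exact (ENNReal.mul_le_mul_iff_right hV hV').1 h5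

/-- Two proportional nonzero integral vectors are multiples of the same integral vector. -/
lemma exists_common_divisor {n : ℕ} {m k : Fin n → ℤ} (hm : m ≠ 0) (hk : k ≠ 0)
    (h : ∀ i j, m i * k j = m j * k i) :
    ∃ (a b : ℤ) (p : Fin n → ℤ), a ≠ 0 ∧ b ≠ 0 ∧ m = a • p ∧ k = b • p := by
  obtain ⟨j, hj⟩ := Function.ne_iff.1 hm
  have hj : m j ≠ 0 := hj
  have hg : (Int.gcd (m j) (k j) : ℤ) ≠ 0 := by
    simp [Int.gcd_eq_zero_iff, hj]
  obtain ⟨a, ha⟩ := Int.gcd_dvd_left (m j) (k j)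
  obtain ⟨b, hb⟩ := Int.gcd_dvd_right (m j) (k j)
  have hcop : IsCoprime a b := by
    rw [Int.isCoprime_iff_gcd_eq_one]
    have := Int.gcd_div_gcd_div_gcd (i := m j) (j := k j) (by
      exact Nat.pos_of_ne_zero (by exact_mod_cast hg))
    rw [Int.ediv_eq_of_eq_mul_right hg ha, Int.ediv_eq_of_eq_mul_right hg hb] at this
    exact this
  have ha0 : a ≠ 0 := fun h0 => hj (by rw [ha, h0, mul_zero])
  have hab : ∀ i, b * m i = a * k i := fun i => by
    have := h i j
    apply mul_left_cancel₀ hg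
    linear_combination this - m i * hb + k i * ha
  have hdvd : ∀ i, a ∣ m i := fun i => hcop.dvd_of_dvd_mul_left (Dvd.intro _ (hab i).symm)
  choose p hp using hdvd
  have hkp : k = b • p := by
    funext i
    apply mul_left_cancel₀ ha0
    have := hab i
    rw [hp i] at this
    simp only [Pi.smul_apply, smul_eq_mul]
    linear_combination -this
  refine ⟨a, b, p, ha0, ?_, funext hp, hkp⟩
  rintro rfl
  exact hk (by simpa using hkp)

lemma vecOf_smul (n : ℕ) (g : SLR n) (a : ℤ) (p : Fin n → ℤ) :
    vecOf n g (a • p) = (a : ℝ) • vecOf n g p := by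
  rw [vecOf, vecOf, ← Matrix.mulVec_smul]
  congr 1
  funext i
  simp

lemma vecOf_zero (n : ℕ) (g : SLR n) : vecOf n g 0 = 0 := by
  funext i
  simp [vecOf, Matrix.mulVec, dotProduct]

lemma minor_mulVec_eq_zero {n : ℕ} (M : Matrix (Fin n) (Fin n) ℝ) {v w : Fin n → ℝ}
    (h : ∀ i j, v i * w j = v j * w i) (i j : Fin n) :
    (M *ᵥ v) i * (M *ᵥ w) j = (M *ᵥ v) j * (M *ᵥ w) i := by
  simp only [Matrix.mulVec, dotProduct, Finset.sum_mul_sum]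
  rw [Finset.sum_comm]
  refine Finset.sum_congr rfl fun a _ => Finset.sum_congr rfl fun b _ => ?_
  linear_combination (M i b * M j a) * h b a

/-- Proportional lattice vectors come from proportional integral vectors. -/
lemma minor_eq_zero_of_vecOf {n : ℕ} (g : SLR n) {m k : Fin n → ℤ}
    (h : ∀ i j, vecOf n g m i * vecOf n g k j = vecOf n g m j * vecOf n g k i) (i j : Fin n) :
    m i * k j = m j * k i := by
  have hinv : ∀ m, ((g⁻¹ : SLR n) : Matrix (Fin n) (Fin n) ℝ) *ᵥ vecOf n g m =
      fun i => (m i : ℝ) := fun m => by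
    have : (g⁻¹).1 * g.1 = 1 := congrArg Subtype.val (inv_mul_cancel g)
    rw [vecOf, Matrix.mulVec_mulVec, this, Matrix.one_mulVec]
  have := minor_mulVec_eq_zero ((g⁻¹ : SLR n) : Matrix (Fin n) (Fin n) ℝ) h i j
  simp only [hinv] at this
  exact_mod_cast this

lemma measurable_tsum_vecOf (n : ℕ) {f : (Fin n → ℝ) → ℝ≥0∞} (hf : Measurable f) :
    Measurable fun x : LatticeSpace n => ∑' m : Fin n → ℤ, f (vecOf n x.out m) := by
  have := (isLatticeFamily_tuple n Unit).measurable_tsum_out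
    (f := fun U => f (U ())) (hf.comp (measurable_pi_apply ()))
  convert this using 2 with x
  exact ((Equiv.funUnique Unit (Fin n → ℤ)).tsum_eq fun m => f (vecOf n x.out m)).symm

/-- The weights `|a| ^ (-3/2)`. -/
def tailWeight (a : ℤ) : ℝ≥0∞ := ENNReal.ofReal (|(a : ℝ)| ^ (-(3 / 2) : ℝ))

lemma tsum_tailWeight_ne_top : ∑' a, tailWeight a ≠ ∞ :=
  (Real.summable_abs_int_rpow (by norm_num : (1 : ℝ) < 3 / 2)).tsum_ofReal_ne_top

lemma inv_abs_pow_le_rpow {n : ℕ} (hn : 3 ≤ n) {a b : ℝ} (ha : 1 ≤ a) (hab : a ≤ b) :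
    (b ^ n)⁻¹ ≤ a ^ (-(3 / 2) : ℝ) * b ^ (-(3 / 2) : ℝ) := by
  have hb : 1 ≤ b := ha.trans hab
  have hb0 : 0 < b := by linarith
  calc (b ^ n)⁻¹ ≤ (b ^ 3)⁻¹ := by gcongr
    _ = b ^ (-(3 / 2) : ℝ) * b ^ (-(3 / 2) : ℝ) := by
        rw [← Real.rpow_add hb0, ← Real.rpow_natCast, ← Real.rpow_neg hb0.le]
        norm_num
    _ ≤ _ := by
        exact mul_le_mul_of_nonneg_right (Real.rpow_le_rpow_of_nonpos (by linarith) hab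
          (by norm_num)) (by positivity)

lemma volume_preimage_zsmul {n : ℕ} (K : Set (Fin n → ℝ)) {a : ℤ} (ha : a ≠ 0) :
    volume {v : Fin n → ℝ | (a : ℝ) • v ∈ K} =
      ENNReal.ofReal ((|(a : ℝ)| ^ n)⁻¹) * volume K := by
  have := Measure.addHaar_preimage_smul (volume : Measure (Fin n → ℝ))
    (r := (a : ℝ)) (by exact_mod_cast ha) K
  rw [abs_inv, abs_pow, Module.finrank_fin_fun] at this
  exact this

lemma volume_preimage_zsmul_inter_le {n : ℕ} (hn : 3 ≤ n) (K : Set (Fin n → ℝ)) {a b : ℤ}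
    (ha : a ≠ 0) (hb : b ≠ 0) :
    volume {v : Fin n → ℝ | (a : ℝ) • v ∈ K ∧ (b : ℝ) • v ∈ K} ≤
      tailWeight a * tailWeight b * volume K := by
  have h1 : ∀ {a : ℤ}, a ≠ 0 → (1 : ℝ) ≤ |(a : ℝ)| := fun h => by
    exact_mod_cast Int.one_le_abs h
  rw [tailWeight, tailWeight, ← ENNReal.ofReal_mul (by positivity)]
  rcases le_total |(a : ℝ)| |(b : ℝ)| with h | h
  · calc _ ≤ volume {v : Fin n → ℝ | (b : ℝ) • v ∈ K} := measure_mono fun v hv => hv.2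
      _ = _ := volume_preimage_zsmul K hb
      _ ≤ _ := by
        gcongr
        exact inv_abs_pow_le_rpow hn (h1 ha) h
  · calc _ ≤ volume {v : Fin n → ℝ | (a : ℝ) • v ∈ K} := measure_mono fun v hv => hv.1
      _ = _ := volume_preimage_zsmul K ha
      _ ≤ _ := by
        rw [mul_comm (|(a : ℝ)| ^ _)]
        gcongr
        exact inv_abs_pow_le_rpow hn (h1 hb) h

/-- The second moment of the number of lattice points in a set, in dimension at least three. -/
lemma lintegral_sq_tsum_vecOf_le {n : ℕ} (hn : 3 ≤ n)
    {μ : Measure (LatticeSpace n)} [IsProbabilityMeasure μ]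
    (hμ : ∀ (g : SLR n) (s : Set (LatticeSpace n)), μ ((fun x => g • x) ⁻¹' s) = μ s)
    {K : Set (Fin n → ℝ)} (hK : MeasurableSet K) (hK0 : (0 : Fin n → ℝ) ∉ K) :
    ∫⁻ x : LatticeSpace n, (∑' m : Fin n → ℤ, K.indicator 1 (vecOf n x.out m)) ^ 2 ∂μ ≤
      volume K ^ 2 + (∑' a, tailWeight a) ^ 2 * volume K := by
  classical
  set T : Set (Fin 2 → Fin n → ℝ) := {U | U 0 ∈ K ∧ U 1 ∈ K} with hT
  set D : Set (Fin 2 → Fin n → ℝ) := {U | ∀ i j, U 0 i * U 1 j = U 0 j * U 1 i} with hD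
  have hTm : MeasurableSet T := (measurable_pi_apply 0 hK).inter (measurable_pi_apply 1 hK)
  have hDm : MeasurableSet D := by
    have : D = ⋂ i, ⋂ j, {U | U 0 i * U 1 j = U 0 j * U 1 i} := by
      ext U
      simp [hD]
    rw [this]
    refine MeasurableSet.iInter fun i => MeasurableSet.iInter fun j =>
      measurableSet_eq_fun ?_ ?_ <;> fun_prop
  have hfm : Measurable ((T \ D).indicator (1 : (Fin 2 → Fin n → ℝ) → ℝ≥0∞)) :=
    measurable_one.indicator (hTm.diff hDm)
  have hvT : volume T = volume K ^ 2 := by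
    have h := (volume_preserving_finTwoArrow (Fin n → ℝ)).measure_preimage
      (hK.prod hK).nullMeasurableSet
    rw [Measure.volume_eq_prod, Measure.prod_prod] at h
    rw [sq, ← h]
    rfl
  have h1 : ∫⁻ x : LatticeSpace n, ∑' m : Fin 2 → Fin n → ℤ,
      (T \ D).indicator (1 : (Fin 2 → Fin n → ℝ) → ℝ≥0∞) (tupleAct x.out (intTuple m)) ∂μ ≤
      volume K ^ 2 := by
    rw [← lintegral_tupleIntensity μ hfm, lintegral_tupleIntensity_of_independent hμ
      (by simpa using by omega), lintegral_indicator_one (hTm.diff hDm), ← hvT]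
    · exact measure_mono Set.sdiff_subset
    · intro U hU
      refine Set.indicator_of_notMem (fun h => h.2 fun i j => ?_) _
      have := hU ![i, j]
      rw [Matrix.det_fin_two] at this
      simp only [coordMatrix, Matrix.of_apply, Matrix.cons_val_zero, Matrix.cons_val_one] at this
      linarith
  set q : ℤ → ℤ → Set (Fin n → ℝ) := fun a b =>
    {v | a ≠ 0 ∧ b ≠ 0 ∧ (a : ℝ) • v ∈ K ∧ (b : ℝ) • v ∈ K} with hq
  have hqm : ∀ a b, MeasurableSet (q a b) := fun a b => by
    refine (MeasurableSet.const _).inter ((MeasurableSet.const _).inter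
      (MeasurableSet.inter ?_ ?_))
    · exact (measurable_const_smul (a : ℝ)) hK
    · exact (measurable_const_smul (b : ℝ)) hK
  have hq0 : ∀ a b, (0 : Fin n → ℝ) ∉ q a b := fun a b h => hK0 (by simpa using h.2.2.1)
  have hpt : ∀ x : LatticeSpace n,
      (∑' m : Fin n → ℤ, K.indicator (1 : (Fin n → ℝ) → ℝ≥0∞) (vecOf n x.out m)) ^ 2 ≤
      (∑' m : Fin 2 → Fin n → ℤ,
        (T \ D).indicator (1 : (Fin 2 → Fin n → ℝ) → ℝ≥0∞) (tupleAct x.out (intTuple m))) +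
      ∑' (a : ℤ) (b : ℤ) (p : Fin n → ℤ),
        (q a b).indicator (1 : (Fin n → ℝ) → ℝ≥0∞) (vecOf n x.out p) := by
    intro x
    set g := x.out with hg
    have hsq : (∑' m : Fin n → ℤ, K.indicator (1 : (Fin n → ℝ) → ℝ≥0∞) (vecOf n g m)) ^ 2 =
        ∑' m : Fin 2 → Fin n → ℤ, T.indicator (1 : (Fin 2 → Fin n → ℝ) → ℝ≥0∞)
          (tupleAct g (intTuple m)) := by
      rw [sq, ← ENNReal.tsum_mul_right, ← (finTwoArrowEquiv (Fin n → ℤ)).symm.tsum_eq,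
        ENNReal.tsum_prod']
      refine tsum_congr fun m => ?_
      rw [← ENNReal.tsum_mul_left]
      refine tsum_congr fun k => ?_
      by_cases hm : vecOf n g m ∈ K <;> by_cases hk : vecOf n g k ∈ K <;>
        simp [hT, tupleAct_intTuple_apply, hm, hk]
    rw [hsq]
    set F : ℤ × ℤ × (Fin n → ℤ) → (Fin 2 → Fin n → ℤ) := fun t => ![t.1 • t.2.2, t.2.1 • t.2.2]
    have hle : ∀ m : Fin 2 → Fin n → ℤ, T.indicator (1 : (Fin 2 → Fin n → ℝ) → ℝ≥0∞)
        (tupleAct g (intTuple m)) ≤ (T \ D).indicator (1 : (Fin 2 → Fin n → ℝ) → ℝ≥0∞)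
          (tupleAct g (intTuple m)) + ∑' t : ℤ × ℤ × (Fin n → ℤ), if m = F t then
            (q t.1 t.2.1).indicator (1 : (Fin n → ℝ) → ℝ≥0∞) (vecOf n g t.2.2) else 0 := by
      intro m
      by_cases hmT : tupleAct g (intTuple m) ∈ T
      swap
      · simp [hmT]
      by_cases hmD : tupleAct g (intTuple m) ∈ D
      swap
      · rw [Set.indicator_of_mem hmT, Set.indicator_of_mem (show _ ∈ T \ D from ⟨hmT, hmD⟩)]
        exact le_self_add
      have hne : ∀ k : Fin n → ℤ, vecOf n g k ∈ K → k ≠ 0 := by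
        rintro k hk rfl
        exact hK0 (by simpa [vecOf_zero] using hk)
      obtain ⟨a, b, p, ha, hb, hm0, hm1⟩ := exists_common_divisor (hne _ hmT.1) (hne _ hmT.2)
        (minor_eq_zero_of_vecOf g hmD)
      have hmF : m = F (a, b, p) := by
        funext i
        fin_cases i
        · exact hm0
        · exact hm1
      refine le_trans ?_ le_add_self
      refine le_trans ?_ (ENNReal.le_tsum (a, b, p))
      have hmq : vecOf n g p ∈ q a b := by
        refine ⟨ha, hb, ?_, ?_⟩
        · rw [← vecOf_smul, ← hm0]
          exact hmT.1
        · rw [← vecOf_smul, ← hm1]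
          exact hmT.2
      rw [if_pos hmF, Set.indicator_of_mem hmT, Set.indicator_of_mem hmq]
      rfl
    refine (ENNReal.tsum_le_tsum hle).trans ?_
    rw [ENNReal.tsum_add, ENNReal.tsum_comm]
    simp_rw [tsum_ite_eq]
    rw [ENNReal.tsum_prod']
    simp_rw [ENNReal.tsum_prod' (α := ℤ)]
    exact le_rfl
  calc _ ≤ _ := lintegral_mono hpt
    _ ≤ volume K ^ 2 + ∫⁻ x : LatticeSpace n, ∑' (a : ℤ) (b : ℤ) (p : Fin n → ℤ),
        (q a b).indicator (1 : (Fin n → ℝ) → ℝ≥0∞) (vecOf n x.out p) ∂μ := by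
      rw [lintegral_add_left ((isLatticeFamily_tuple n (Fin 2)).measurable_tsum_out hfm)]
      gcongr
    _ ≤ _ := by
      have hm : ∀ a b, Measurable fun x : LatticeSpace n => ∑' p : Fin n → ℤ,
          (q a b).indicator (1 : (Fin n → ℝ) → ℝ≥0∞) (vecOf n x.out p) := fun a b =>
        measurable_tsum_vecOf n (measurable_one.indicator (hqm a b))
      rw [lintegral_tsum fun a => (Measurable.tsum (hm a)).aemeasurable]
      simp_rw [lintegral_tsum fun b => (hm _ b).aemeasurable]
      gcongr
      rw [sq, ← ENNReal.tsum_mul_right, ← ENNReal.tsum_mul_right]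
      refine ENNReal.tsum_le_tsum fun a => ?_
      rw [← ENNReal.tsum_mul_left, ← ENNReal.tsum_mul_right]
      refine ENNReal.tsum_le_tsum fun b => ?_
      rw [lintegral_tsum_vecOf (by omega) hμ (measurable_one.indicator (hqm a b))
        (Set.indicator_of_notMem (hq0 a b) _), lintegral_indicator_one (hqm a b)]
      by_cases ha : a = 0
      · simp [hq, ha]
      by_cases hb : b = 0
      · simp [hq, hb]
      refine le_trans (measure_mono ?_) (volume_preimage_zsmul_inter_le hn K ha hb)
      exact fun v hv => hv.2.2

lemma tsum_indicator_vecOf_eq_zero_iff {n : ℕ} (g : SLR n) (K : Set (Fin n → ℝ)) :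
    ∑' m : Fin n → ℤ, K.indicator (1 : (Fin n → ℝ) → ℝ≥0∞) (vecOf n g m) = 0 ↔
      ∀ m, vecOf n g m ∉ K := by
  simp [ENNReal.tsum_eq_zero]

/-- In dimension at least three, a set of large volume meets most lattices. -/
lemma measure_miss_mul_le {n : ℕ} (hn : 3 ≤ n)
    {μ : Measure (LatticeSpace n)} [IsProbabilityMeasure μ]
    (hμ : ∀ (g : SLR n) (s : Set (LatticeSpace n)), μ ((fun x => g • x) ⁻¹' s) = μ s)
    {K : Set (Fin n → ℝ)} (hK : MeasurableSet K) (hK0 : (0 : Fin n → ℝ) ∉ K)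
    (hvol : volume K ≠ 0) (hvol' : volume K ≠ ∞) :
    μ {x | ∀ m, vecOf n x.out m ∉ K} * volume K ≤ (∑' a, tailWeight a) ^ 2 := by
  have h := measure_eq_zero_mul_le (μ := μ)
    (measurable_tsum_vecOf n (measurable_one.indicator hK)) hvol hvol'
    (by rw [lintegral_tsum_vecOf (by omega) hμ (measurable_one.indicator hK)
          (Set.indicator_of_notMem hK0 _), lintegral_indicator_one hK])
    (lintegral_sq_tsum_vecOf_le hn hμ hK hK0)
  simpa only [tsum_indicator_vecOf_eq_zero_iff] using h

/-! ### Haar measure on `SL(2, ℝ)` -/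

/-- The first column of a matrix in `SL(2, ℝ)`. -/
def firstCol (g : SLR 2) : Fin 2 → ℝ := fun i => g i 0

/-- The shear parameter of a matrix in `SL(2, ℝ)` relative to its first column. -/
def shear (g : SLR 2) : ℝ := g 0 1 / g 0 0

/-- The vector of area one with `v` on the second axis, plus `s • v`, scaled by `t`:
`t v^⊥ + s v`. -/
def sheared (v : Fin 2 → ℝ) (t s : ℝ) : Fin 2 → ℝ := ![s * v 0, t * (v 0)⁻¹ + s * v 1]

/-- The matrix with first column `v` and shear `s`. -/
def frame (v : Fin 2 → ℝ) (s : ℝ) : SLR 2 :=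
  if h : v 0 ≠ 0 then (⟨!![v 0, s * v 0; v 1, (v 0)⁻¹ + s * v 1], by
    rw [Matrix.det_fin_two_of]
    field_simp
    ring⟩ : SLR 2) else 1

lemma coe_frame {v : Fin 2 → ℝ} (h : v 0 ≠ 0) (s : ℝ) : (frame v s : Matrix (Fin 2) (Fin 2) ℝ) =
    !![v 0, s * v 0; v 1, (v 0)⁻¹ + s * v 1] := by
  exact congrArg Subtype.val (dif_pos h)

lemma measurable_frame : Measurable fun q : (Fin 2 → ℝ) × ℝ => frame q.1 q.2 := by
  classical
  have hs : IsOpen {q : (Fin 2 → ℝ) × ℝ | q.1 0 ≠ 0} :=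
    isOpen_ne_fun (by fun_prop) continuous_const
  have h : (fun q : (Fin 2 → ℝ) × ℝ => frame q.1 q.2) = {q : (Fin 2 → ℝ) × ℝ | q.1 0 ≠ 0}.piecewise
      (fun q => frame q.1 q.2) (fun _ => 1) := by
    funext q
    by_cases hq : q.1 0 ≠ 0
    · rw [Set.piecewise_eq_of_mem _ _ _ (by exact hq)]
    · rw [Set.piecewise_eq_of_notMem _ _ _ (by exact hq)]
      exact dif_neg hq
  rw [h]
  refine ContinuousOn.measurable_piecewise ?_ continuousOn_const hs.measurableSet
  rw [(isClosedEmbedding_coe_SLR 2).isEmbedding.continuousOn_iff]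
  have h2 : ContinuousOn (fun q : (Fin 2 → ℝ) × ℝ =>
      !![q.1 0, q.2 * q.1 0; q.1 1, (q.1 0)⁻¹ + q.2 * q.1 1])
      {q : (Fin 2 → ℝ) × ℝ | q.1 0 ≠ 0} := by
    have hinv : ContinuousOn (fun q : (Fin 2 → ℝ) × ℝ => (q.1 0)⁻¹)
        {q : (Fin 2 → ℝ) × ℝ | q.1 0 ≠ 0} :=
      ContinuousOn.inv₀ (Continuous.continuousOn (by fun_prop)) fun q hq => hq
    refine continuousOn_pi.2 fun i => continuousOn_pi.2 fun j => ?_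
    fin_cases i <;> fin_cases j
    · exact Continuous.continuousOn (by fun_prop : Continuous fun q : (Fin 2 → ℝ) × ℝ => q.1 0)
    · exact Continuous.continuousOn
        (by fun_prop : Continuous fun q : (Fin 2 → ℝ) × ℝ => q.2 * q.1 0)
    · exact Continuous.continuousOn (by fun_prop : Continuous fun q : (Fin 2 → ℝ) × ℝ => q.1 1)
    · exact hinv.add (Continuous.continuousOn
        (by fun_prop : Continuous fun q : (Fin 2 → ℝ) × ℝ => q.2 * q.1 1))
  exact h2.congr fun q hq => coe_frame hq q.2

lemma firstCol_frame {v : Fin 2 → ℝ} (h : v 0 ≠ 0) (s : ℝ) : firstCol (frame v s) = v := by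
  funext i
  rw [firstCol, coe_frame h]
  fin_cases i <;> rfl

lemma shear_frame {v : Fin 2 → ℝ} (h : v 0 ≠ 0) (s : ℝ) : shear (frame v s) = s := by
  rw [shear, coe_frame h]
  simp [h]

lemma frame_eq (g : SLR 2) (h : g 0 0 ≠ 0) : frame (firstCol g) (shear g) = g := by
  have hdet : g 0 0 * g 1 1 - g 0 1 * g 1 0 = 1 := by
    rw [← Matrix.det_fin_two]; exact g.2
  refine Subtype.ext ?_
  rw [coe_frame (by exact h)]
  ext i j
  fin_cases i <;> fin_cases j
  · rfl
  · simp [firstCol, shear, h]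
  · rfl
  · simp only [firstCol, shear]
    change (g 0 0)⁻¹ + g 0 1 / g 0 0 * g 1 0 = g 1 1
    field_simp
    linear_combination -hdet

lemma firstCol_mul (g h : SLR 2) : firstCol (g * h) = g.1 *ᵥ firstCol h := by
  funext i
  simp [firstCol, Matrix.mul_apply, Matrix.mulVec, dotProduct]

lemma measurable_entry (i j : Fin 2) : Measurable fun g : SLR 2 => g i j :=
  ((continuous_apply_apply i j).comp (isClosedEmbedding_coe_SLR 2).continuous).measurable

lemma measurable_firstCol : Measurable firstCol :=
  measurable_pi_lambda _ fun i => measurable_entry i 0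

lemma measurable_shear : Measurable shear := (measurable_entry 0 1).div (measurable_entry 0 0)

/-- Left translation acts on the shear parameter by a cocycle. -/
lemma mul_frame (g : SLR 2) {v : Fin 2 → ℝ} (h : v 0 ≠ 0) (hg : (g.1 *ᵥ v) 0 ≠ 0) (s : ℝ) :
    g * frame v s = frame (g.1 *ᵥ v) (shear (g * frame v 0) + s) := by
  have h0 : ∀ s, (g * frame v s) 0 0 = (g.1 *ᵥ v) 0 := fun s => by
    change firstCol (g * frame v s) 0 = _
    rw [firstCol_mul, firstCol_frame h]
  have hfc : firstCol (g * frame v s) = g.1 *ᵥ v := by rw [firstCol_mul, firstCol_frame h]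
  conv_lhs => rw [← frame_eq (g * frame v s) (by rw [h0]; exact hg), hfc]
  congr 1
  rw [shear, shear, h0, h0, div_add' _ _ _ hg]
  congr 1
  simp only [Matrix.SpecialLinearGroup.coe_mul, Matrix.mul_apply, Fin.sum_univ_two, coe_frame h,
    Matrix.mulVec, dotProduct]
  simp
  ring

/-- Haar measure on `SL(2, ℝ)`. -/
def haarSL2 : Measure (SLR 2) :=
  Measure.map (fun q : (Fin 2 → ℝ) × ℝ => frame q.1 q.2) (volume.prod volume)

lemma lintegral_haarSL2 {F : SLR 2 → ℝ≥0∞} (hF : Measurable F) :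
    ∫⁻ g, F g ∂haarSL2 = ∫⁻ v : Fin 2 → ℝ, ∫⁻ s, F (frame v s) := by
  rw [haarSL2, lintegral_map hF measurable_frame]
  exact lintegral_prod _ (hF.comp measurable_frame).aemeasurable

lemma ae_apply_zero_ne_zero : ∀ᵐ v : Fin 2 → ℝ, v 0 ≠ 0 := by
  have := Measure.addHaar_affineSubspace (volume : Measure (Fin 2 → ℝ))
    (LinearMap.ker (LinearMap.proj (R := ℝ) (φ := fun _ : Fin 2 => ℝ) 0)).toAffineSubspace
    (fun h => by
      have h1 : (fun _ => 1 : Fin 2 → ℝ) ∈ (⊤ : AffineSubspace ℝ (Fin 2 → ℝ)) :=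
        AffineSubspace.mem_top _ _ _
      rw [← h] at h1
      have : (1 : ℝ) = 0 := h1
      norm_num at this)
  rw [ae_iff]
  convert this using 2
  ext v
  simp

lemma measurePreserving_mulVec (g : SLR 2) :
    MeasurePreserving (fun v : Fin 2 → ℝ => g.1 *ᵥ v) :=
  have h2 := (volume_preserving_funUnique Unit (Fin 2 → ℝ))
  (h2.comp (measurePreserving_tupleAct (ι := Unit) g)).comp (h2.symm _)

lemma ae_mulVec_apply_zero_ne_zero (g : SLR 2) : ∀ᵐ v : Fin 2 → ℝ, (g.1 *ᵥ v) 0 ≠ 0 :=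
  (measurePreserving_mulVec g).quasiMeasurePreserving.ae ae_apply_zero_ne_zero

instance : haarSL2.IsMulLeftInvariant := by
  refine ⟨fun g => ?_⟩
  refine Measure.ext_of_lintegral _ fun F hF => ?_
  have hgm : Measurable fun h : SLR 2 => g * h := (continuous_const_mul g).measurable
  rw [lintegral_map hF hgm, lintegral_haarSL2 (F := fun h => F (g * h)) (hF.comp hgm),
    lintegral_haarSL2 hF]
  have hG : Measurable fun v : Fin 2 → ℝ => ∫⁻ s, F (frame v s) :=
    (hF.comp measurable_frame).lintegral_prod_right'
  rw [← (measurePreserving_mulVec g).lintegral_comp hG]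
  refine lintegral_congr_ae ?_
  filter_upwards [ae_apply_zero_ne_zero, ae_mulVec_apply_zero_ne_zero g] with v hv hgv
  refine (lintegral_congr fun s => by rw [mul_frame g hv hgv]).trans ?_
  exact lintegral_add_left_eq_self (μ := volume) (fun s => F (frame (g.1 *ᵥ v) s)) _

/-! ### Orbits of `SL(2, ℤ)` -/

/-- The inclusion of `SL(2, ℤ)` in `SL(2, ℝ)`. -/
def toSLR : Matrix.SpecialLinearGroup (Fin 2) ℤ →* SLR 2 :=
  Matrix.SpecialLinearGroup.map (n := Fin 2) (Int.castRingHom ℝ)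

lemma toSLR_apply (γ : Matrix.SpecialLinearGroup (Fin 2) ℤ) (i j : Fin 2) :
    toSLR γ i j = (γ i j : ℝ) := rfl

instance : Countable (Matrix.SpecialLinearGroup (Fin 2) ℤ) :=
  have : Countable (Matrix (Fin 2) (Fin 2) ℤ) :=
    inferInstanceAs (Countable (Fin 2 → Fin 2 → ℤ))
  Subtype.countable

lemma isLatticeFamily_matrix : IsLatticeFamily
    fun (γ : Matrix.SpecialLinearGroup (Fin 2) ℤ) (g : SLR 2) => g * toSLR γ where
  measurable γ := (continuous_mul_const (toSLR γ)).measurable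
  perm := by
    rintro _ ⟨γ, rfl⟩
    exact ⟨Equiv.mulLeft γ, fun δ g => by
      rw [Equiv.coe_mulLeft, map_mul, ← mul_assoc]; rfl⟩

/-- Primitive integral vectors in the plane. -/
abbrev PrimVec := {p : Fin 2 → ℤ // IsCoprime (p 0) (p 1)}

/-- Upper unipotent integral matrices. -/
def unip (t : ℤ) : Matrix.SpecialLinearGroup (Fin 2) ℤ :=
  ⟨!![1, t; 0, 1], by simp [Matrix.det_fin_two_of]⟩

lemma specialLinearGroup_two_mul_apply {R : Type*} [CommRing R]
    (A B : Matrix.SpecialLinearGroup (Fin 2) R) (i j : Fin 2) :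
    (A * B) i j = A i 0 * B 0 j + A i 1 * B 1 j := by
  rw [Matrix.SpecialLinearGroup.coe_mul, Matrix.mul_apply, Fin.sum_univ_two]

lemma unip_apply (t : ℤ) (i j : Fin 2) :
    unip t i j = (!![1, t; 0, 1] : Matrix (Fin 2) (Fin 2) ℤ) i j := rfl

/-- A unimodular integral matrix with a given primitive first column. -/
def completion (p : PrimVec) : Matrix.SpecialLinearGroup (Fin 2) ℤ :=
  (p.2.exists_SL2_col 0).choose

lemma completion_apply_zero (p : PrimVec) (i : Fin 2) : completion p i 0 = p.1 i := by
  fin_cases i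
  · exact (p.2.exists_SL2_col 0).choose_spec.1
  · exact (p.2.exists_SL2_col 0).choose_spec.2

lemma mul_unip_apply_zero (γ : Matrix.SpecialLinearGroup (Fin 2) ℤ) (t : ℤ) (i : Fin 2) :
    (γ * unip t) i 0 = γ i 0 := by
  simp [specialLinearGroup_two_mul_apply, unip_apply]

lemma bijective_completion_mul_unip :
    Function.Bijective fun q : PrimVec × ℤ => completion q.1 * unip q.2 := by
  constructor
  · rintro ⟨p, t⟩ ⟨p', t'⟩ h
    have hp : p = p' := Subtype.ext <| funext fun i => by
      rw [← completion_apply_zero, ← completion_apply_zero, ← mul_unip_apply_zero _ t,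
        ← mul_unip_apply_zero (completion p') t']
      exact congrArg (fun γ : Matrix.SpecialLinearGroup (Fin 2) ℤ => γ i 0) h
    subst hp
    have ht := congrArg (fun γ : Matrix.SpecialLinearGroup (Fin 2) ℤ => γ 0 1)
      (mul_left_cancel h)
    exact Prod.ext rfl ht
  · intro γ
    have hdet : γ 0 0 * γ 1 1 - γ 0 1 * γ 1 0 = 1 := by
      rw [← Matrix.det_fin_two]; exact γ.2
    let p : PrimVec := ⟨fun i => γ i 0, ⟨γ 1 1, -γ 0 1, by linear_combination hdet⟩⟩
    have hdet' : completion p 0 0 * completion p 1 1 - completion p 0 1 * completion p 1 0 = 1 := by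
      rw [← Matrix.det_fin_two]; exact (completion p).2
    rw [completion_apply_zero, completion_apply_zero] at hdet'
    change γ 0 0 * _ - _ * γ 1 0 = 1 at hdet'
    refine ⟨(p, completion p 1 1 * γ 0 1 - completion p 0 1 * γ 1 1), Subtype.ext ?_⟩
    ext i j
    have h0 : completion p 0 0 = γ 0 0 := completion_apply_zero p 0
    have h1 : completion p 1 0 = γ 1 0 := completion_apply_zero p 1
    fin_cases j
    · exact (mul_unip_apply_zero _ _ i).trans (completion_apply_zero p i)
    · fin_cases i
      · simp only [specialLinearGroup_two_mul_apply, unip_apply]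
        simp
        rw [h0]
        linear_combination γ 0 1 * hdet' - completion p 0 1 * hdet
      · simp only [specialLinearGroup_two_mul_apply, unip_apply]
        simp
        rw [h1]
        linear_combination γ 1 1 * hdet' - completion p 1 1 * hdet

lemma tsum_toSLR (F : SLR 2 → ℝ≥0∞) (g : SLR 2) :
    ∑' γ, F (g * toSLR γ) =
      ∑' p : PrimVec, ∑' t : ℤ, F (g * toSLR (completion p) * toSLR (unip t)) := by
  rw [← ENNReal.tsum_prod, ← (Equiv.ofBijective _ bijective_completion_mul_unip).tsum_eq]
  refine tsum_congr fun q => ?_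
  rw [mul_assoc, ← map_mul]
  rfl

lemma firstCol_mul_completion (g : SLR 2) (p : PrimVec) :
    firstCol (g * toSLR (completion p)) = vecOf 2 g p := by
  rw [firstCol_mul, vecOf]
  congr 1
  funext i
  rw [firstCol, toSLR_apply, completion_apply_zero]

lemma firstCol_mul_unip (g : SLR 2) (t : ℤ) : firstCol (g * toSLR (unip t)) = firstCol g := by
  funext i
  simp [firstCol, specialLinearGroup_two_mul_apply, toSLR_apply, unip_apply]

lemma shear_mul_unip {g : SLR 2} (h : g 0 0 ≠ 0) (t : ℤ) :
    shear (g * toSLR (unip t)) = shear g + t := by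
  simp only [shear, specialLinearGroup_two_mul_apply, toSLR_apply, unip_apply]
  simp
  field_simp
  ring

lemma tsum_floor_shear (f : (Fin 2 → ℝ) → ℝ≥0∞) (hf : ∀ v, v 0 = 0 → f v = 0) (j : ℤ)
    (g : SLR 2) :
    ∑' γ, f (firstCol (g * toSLR γ)) * ({j} : Set ℤ).indicator 1 ⌊shear (g * toSLR γ)⌋ =
      ∑' p : PrimVec, f (vecOf 2 g p) := by
  rw [tsum_toSLR fun h => f (firstCol h) * ({j} : Set ℤ).indicator 1 ⌊shear h⌋]
  refine tsum_congr fun p => ?_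
  simp_rw [firstCol_mul_unip, firstCol_mul_completion]
  rw [ENNReal.tsum_mul_left]
  by_cases hv : vecOf 2 g p 0 = 0
  · rw [hf _ hv, zero_mul]
  have h0 : (g * toSLR (completion p)) 0 0 ≠ 0 := by
    rw [← firstCol_mul_completion] at hv
    exact hv
  simp_rw [shear_mul_unip h0, Int.floor_add_intCast]
  rw [tsum_eq_single (j - ⌊shear (g * toSLR (completion p))⌋), Set.indicator_of_mem, Pi.one_apply,
    mul_one]
  · rw [Set.mem_singleton_iff]; ring
  · intro t ht
    refine Set.indicator_of_notMem (fun h => ht ?_) _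
    rw [Set.mem_singleton_iff] at h
    omega

lemma measurable_mul_indicator_floor {f : (Fin 2 → ℝ) → ℝ≥0∞} (hf : Measurable f) (j : ℤ) :
    Measurable fun g : SLR 2 =>
      f (firstCol g) * ({j} : Set ℤ).indicator (1 : ℤ → ℝ≥0∞) ⌊shear g⌋ :=
  (hf.comp measurable_firstCol).fun_mul
    ((measurable_of_countable (({j} : Set ℤ).indicator (1 : ℤ → ℝ≥0∞))).comp
      measurable_shear.floor)

lemma lintegral_floor_shear {f : (Fin 2 → ℝ) → ℝ≥0∞} (hf : Measurable f) (j : ℤ) :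
    ∫⁻ g, f (firstCol g) * ({j} : Set ℤ).indicator 1 ⌊shear g⌋ ∂haarSL2 = ∫⁻ v, f v := by
  have hm : Measurable fun g : SLR 2 =>
      f (firstCol g) * ({j} : Set ℤ).indicator (1 : ℤ → ℝ≥0∞) ⌊shear g⌋ :=
    measurable_mul_indicator_floor hf j
  rw [lintegral_haarSL2 hm]
  refine lintegral_congr_ae ?_
  filter_upwards [ae_apply_zero_ne_zero] with v hv
  simp_rw [firstCol_frame hv, shear_frame hv]
  rw [lintegral_const_mul _ (f := fun s : ℝ => ({j} : Set ℤ).indicator (1 : ℤ → ℝ≥0∞) ⌊s⌋)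
    ((measurable_of_countable (({j} : Set ℤ).indicator (1 : ℤ → ℝ≥0∞))).comp
      Int.measurable_floor)]
  have : (fun s : ℝ => ({j} : Set ℤ).indicator (1 : ℤ → ℝ≥0∞) ⌊s⌋) =
      (Set.Ico (j : ℝ) (j + 1)).indicator 1 := by
    rw [← Int.preimage_floor_singleton]
    rfl
  rw [this, lintegral_indicator_one measurableSet_Ico]
  simp

/-- A criterion for σ-finiteness on `SL(2, ℝ)`. -/
lemma sigmaFinite_of_lintegral_floor {ν : Measure (SLR 2)} (h0 : ν {g | g 0 0 = 0} = 0)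
    (h : ∀ (R : ℕ) (j : ℤ), ∫⁻ g, ({v : Fin 2 → ℝ | v 0 ≠ 0 ∧ ‖v‖ ≤ R}).indicator 1 (firstCol g) *
      ({j} : Set ℤ).indicator 1 ⌊shear g⌋ ∂ν < ∞) : SigmaFinite ν := by
  let S : ℕ × ℤ → Set (SLR 2) := fun q =>
    {g | (g 0 0 ≠ 0 ∧ ‖firstCol g‖ ≤ q.1) ∧ ⌊shear g⌋ = q.2}
  refine Measure.sigmaFinite_of_countable (S := insert {g | g 0 0 = 0} (Set.range S))
    ((Set.countable_range S).insert _) ?_ ?_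
  · rintro s (rfl | ⟨q, rfl⟩)
    · rw [h0]; exact zero_lt_top
    · have hS : MeasurableSet (S q) :=
        (((measurable_entry 0 0) (measurableSet_singleton 0).compl).inter
          (measurableSet_le measurable_firstCol.norm measurable_const)).inter
          (measurable_shear.floor (measurableSet_singleton q.2))
      rw [← lintegral_indicator_one hS]
      refine lt_of_le_of_lt (lintegral_mono fun g => ?_) (h q.1 q.2)
      by_cases hg : g ∈ S q
      swap
      · rw [Set.indicator_of_notMem hg]
        exact zero_le
      rw [Set.indicator_of_mem hg,
        Set.indicator_of_mem (show firstCol g ∈ {v : Fin 2 → ℝ | v 0 ≠ 0 ∧ ‖v‖ ≤ q.1} from hg.1),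
        Set.indicator_of_mem (show ⌊shear g⌋ ∈ ({q.2} : Set ℤ) from hg.2)]
      simp
  · refine Set.eq_univ_of_forall fun g => ?_
    by_cases hg : g 0 0 = 0
    · exact ⟨_, Set.mem_insert _ _, hg⟩
    · obtain ⟨R, hR⟩ := exists_nat_ge ‖firstCol g‖
      exact ⟨S (R, ⌊shear g⌋), Set.mem_insert_of_mem _ ⟨_, rfl⟩, ⟨hg, hR⟩, rfl⟩

lemma volume_norm_le_lt_top (R : ℕ) :
    volume {v : Fin 2 → ℝ | v 0 ≠ 0 ∧ ‖v‖ ≤ R} < ∞ := by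
  refine lt_of_le_of_lt (measure_mono fun v hv => ?_)
    (measure_closedBall_lt_top (x := (0 : Fin 2 → ℝ)) (r := R))
  rw [mem_closedBall_zero_iff]
  exact hv.2

lemma measurableSet_norm_le (R : ℕ) : MeasurableSet {v : Fin 2 → ℝ | v 0 ≠ 0 ∧ ‖v‖ ≤ R} :=
  MeasurableSet.inter (s₁ := {v : Fin 2 → ℝ | v 0 ≠ 0}) (s₂ := {v | ‖v‖ ≤ R})
    (measurable_pi_apply (X := fun _ : Fin 2 => ℝ) 0 (measurableSet_singleton (0 : ℝ)).compl)
    (measurableSet_le measurable_norm measurable_const)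

instance : SigmaFinite haarSL2 := by
  refine sigmaFinite_of_lintegral_floor ?_ fun R j => ?_
  · have hs : MeasurableSet {g : SLR 2 | g 0 0 = 0} :=
      measurable_entry 0 0 (measurableSet_singleton 0)
    rw [haarSL2, Measure.map_apply measurable_frame hs, ← Measure.volume_eq_prod]
    have h1 : ∀ᵐ q : (Fin 2 → ℝ) × ℝ, q.1 0 ≠ 0 :=
      Measure.quasiMeasurePreserving_fst.ae ae_apply_zero_ne_zero
    refine measure_mono_null (fun q hq => ?_) (ae_iff.1 h1)
    intro hq'
    have : firstCol (frame q.1 q.2) 0 = 0 := hq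
    rw [firstCol_frame hq'] at this
    exact hq' this
  · rw [lintegral_floor_shear (measurable_one.indicator (measurableSet_norm_le R)),
      lintegral_indicator_one (measurableSet_norm_le R)]
    exact volume_norm_le_lt_top R

section Orbit

variable {μ : Measure (LatticeSpace 2)} [IsProbabilityMeasure μ]

lemma tsum_prim_le (f : (Fin 2 → ℝ) → ℝ≥0∞) (g : SLR 2) :
    ∑' p : PrimVec, f (vecOf 2 g p) ≤ ∑' m : Fin 2 → ℤ, f (vecOf 2 g m) :=
  ENNReal.tsum_comp_le_tsum_of_injective Subtype.val_injective fun m => f (vecOf 2 g m)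

/-- Uniqueness of Haar measure computes the expected number of matrices in a random coset of
`SL(2, ℤ)` that lie in a given set, up to a constant. -/
lemma exists_lintegral_tsum_toSLR
    (hμ : ∀ (g : SLR 2) (s : Set (LatticeSpace 2)), μ ((fun x => g • x) ⁻¹' s) = μ s) :
    ∃ κ : ℝ≥0∞, κ ≠ ∞ ∧ ∀ F : SLR 2 → ℝ≥0∞, Measurable F →
      ∫⁻ x : LatticeSpace 2, ∑' γ, F (x.out * toSLR γ) ∂μ =
        κ * ∫⁻ v : Fin 2 → ℝ, ∫⁻ s, F (frame v s) := by
  set ν := isLatticeFamily_matrix.intensity μ with hν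
  have hfin : ∀ {f : (Fin 2 → ℝ) → ℝ≥0∞}, Measurable f → (∀ v, v 0 = 0 → f v = 0) → ∀ j : ℤ,
      ∫⁻ g, f (firstCol g) * ({j} : Set ℤ).indicator 1 ⌊shear g⌋ ∂ν ≤ ∫⁻ v, f v := by
    intro f hf hf0 j
    have hm : Measurable fun g : SLR 2 =>
        f (firstCol g) * ({j} : Set ℤ).indicator (1 : ℤ → ℝ≥0∞) ⌊shear g⌋ :=
      measurable_mul_indicator_floor hf j
    rw [hν, isLatticeFamily_matrix.lintegral_intensity μ hm,
      ← lintegral_tsum_vecOf le_rfl hμ hf (hf0 0 rfl)]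
    refine lintegral_mono fun x => ?_
    rw [tsum_floor_shear f hf0]
    exact tsum_prim_le f x.out
  have hinv : ν.IsMulLeftInvariant := ⟨fun g =>
    (isLatticeFamily_matrix.measurePreserving_intensity hμ g
      (continuous_const_mul g).measurable fun γ h => mul_assoc g h (toSLR γ)).map_eq⟩
  have hσ : SigmaFinite ν := by
    refine sigmaFinite_of_lintegral_floor ?_ fun R j => ?_
    · have hs : MeasurableSet {v : Fin 2 → ℝ | v 0 = 0 ∧ v ≠ 0} :=
        MeasurableSet.inter (s₁ := {v : Fin 2 → ℝ | v 0 = 0}) (s₂ := {v | v ≠ 0})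
          (measurable_pi_apply (X := fun _ : Fin 2 => ℝ) 0 (measurableSet_singleton (0 : ℝ)))
          (measurableSet_singleton 0).compl
      have hs' : MeasurableSet {g : SLR 2 | g 0 0 = 0} :=
        measurable_entry 0 0 (measurableSet_singleton 0)
      have h1 := lintegral_tsum_vecOf le_rfl hμ (measurable_one.indicator hs)
        (Set.indicator_of_notMem (fun h => h.2 rfl) _)
      rw [lintegral_indicator_one hs, measure_mono_null (fun v hv => not_not.2 hv.1)
        (ae_iff.1 ae_apply_zero_ne_zero), lintegral_eq_zero_iff
        (measurable_tsum_vecOf 2 (measurable_one.indicator hs))] at h1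
      rw [hν, isLatticeFamily_matrix.intensity_apply μ hs', lintegral_eq_zero_iff
        (isLatticeFamily_matrix.measurable_tsum_out (measurable_one.indicator hs'))]
      filter_upwards [h1] with x hx
      rw [Pi.zero_apply, ENNReal.tsum_eq_zero] at hx ⊢
      intro γ
      refine Set.indicator_of_notMem (fun hγ => ?_) _
      have hcol : vecOf 2 x.out (fun i => γ i 0) = firstCol (x.out * toSLR γ) := by
        rw [firstCol_mul]; rfl
      have := hx fun i => γ i 0
      rw [hcol, Set.indicator_of_mem] at this
      · exact one_ne_zero this
      · refine ⟨hγ, fun h0 => ?_⟩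
        have hdet := (x.out * toSLR γ).2
        rw [Matrix.det_fin_two] at hdet
        have e0 : (x.out * toSLR γ).1 0 0 = 0 := congrFun h0 0
        have e1 : (x.out * toSLR γ).1 1 0 = 0 := congrFun h0 1
        rw [e0, e1] at hdet
        norm_num at hdet
    · refine lt_of_le_of_lt (hfin (measurable_one.indicator (measurableSet_norm_le R))
        (fun v hv => Set.indicator_of_notMem (fun h => h.1 hv) _) j) ?_
      rw [lintegral_indicator_one (measurableSet_norm_le R)]
      exact volume_norm_le_lt_top R
  let B : Set (Fin 2 → ℝ) := Set.pi Set.univ fun i : Fin 2 => Set.Icc (1 : ℝ) 2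
  have hB : MeasurableSet B := MeasurableSet.univ_pi fun i => measurableSet_Icc
  have hBv : volume B = 1 := by
    rw [volume_pi_pi]
    norm_num
  have hB0 : ∀ v : Fin 2 → ℝ, v 0 = 0 → B.indicator (1 : (Fin 2 → ℝ) → ℝ≥0∞) v = 0 :=
    fun v hv => Set.indicator_of_notMem (fun h => by
      have := (h 0 trivial).1
      rw [hv] at this
      norm_num at this) _
  let S : Set (SLR 2) := firstCol ⁻¹' B ∩ (fun g => ⌊shear g⌋) ⁻¹' {0}
  have hS : MeasurableSet S := (measurable_firstCol hB).inter
    (measurable_shear.floor (measurableSet_singleton 0))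
  have hSi : ∀ ν' : Measure (SLR 2), ν' S =
      ∫⁻ g, B.indicator 1 (firstCol g) * ({0} : Set ℤ).indicator 1 ⌊shear g⌋ ∂ν' := by
    intro ν'
    rw [← lintegral_indicator_one hS]
    refine lintegral_congr fun g => ?_
    change (firstCol ⁻¹' B ∩ (fun g => ⌊shear g⌋) ⁻¹' {0}).indicator 1 g = _
    rw [Set.inter_indicator_one]
    rfl
  have hH : haarSL2 S = 1 := by
    rw [hSi, lintegral_floor_shear (measurable_one.indicator hB), lintegral_indicator_one hB, hBv]
  have heq := measure_eq_div_smul ν haarSL2 (s := S) (by rw [hH]; exact one_ne_zero)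
    (by rw [hH]; exact one_ne_top)
  refine ⟨ν S / haarSL2 S, ?_, fun F hF => ?_⟩
  · rw [hH, div_one, hSi]
    refine ((hfin (measurable_one.indicator hB) hB0 0).trans_lt ?_).ne
    rw [lintegral_indicator_one hB, hBv]
    exact one_lt_top
  · rw [← isLatticeFamily_matrix.lintegral_intensity μ hF, ← lintegral_haarSL2 hF, ← hν,
      ← smul_eq_mul, ← lintegral_smul_measure, ← heq]

end Orbit

/-! ### Expectations of sums over primitive vectors and pairs of primitive vectors -/

lemma lintegral_comp_smul_plane {f : (Fin 2 → ℝ) → ℝ≥0∞} (hf : Measurable f) {r : ℝ}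
    (hr : 0 < r) : ∫⁻ v, f (r • v) = (ENNReal.ofReal (r ^ 2))⁻¹ * ∫⁻ v, f v := by
  rw [← lintegral_map (g := fun v : Fin 2 → ℝ => r • v) hf (measurable_const_smul r),
    Measure.map_addHaar_smul _ hr.ne', lintegral_smul_measure, Module.finrank_fin_fun,
    abs_of_pos (by positivity), ENNReal.ofReal_inv_of_pos (by positivity), smul_eq_mul]

lemma lintegral_comp_mul_real {f : ℝ → ℝ≥0∞} (hf : Measurable f) {r : ℝ} (hr : r ≠ 0) :
    ∫⁻ s, f (r * s) = (ENNReal.ofReal |r|)⁻¹ * ∫⁻ s, f s := by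
  rw [← lintegral_map (g := fun s : ℝ => r * s) hf (measurable_const_mul r),
    Real.map_volume_mul_left hr, lintegral_smul_measure, abs_inv,
    ENNReal.ofReal_inv_of_pos (by positivity), smul_eq_mul]

lemma tsum_vecOf_eq_tsum_prim {f : (Fin 2 → ℝ) → ℝ≥0∞} (hf0 : f 0 = 0) (g : SLR 2) :
    ∑' m : Fin 2 → ℤ, f (vecOf 2 g m) =
      ∑' d : ℕ, ∑' p : PrimVec, f (((d : ℝ) + 1) • vecOf 2 g p) := by
  let φ : ℕ × PrimVec → Fin 2 → ℤ := fun q => ((q.1 : ℤ) + 1) • q.2.1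
  have hgcd : ∀ q, Int.gcd (φ q 0) (φ q 1) = q.1 + 1 := by
    rintro ⟨d, p⟩
    change Int.gcd (((d : ℤ) + 1) * p.1 0) (((d : ℤ) + 1) * p.1 1) = d + 1
    rw [Int.gcd_mul_left, Int.isCoprime_iff_gcd_eq_one.1 p.2, mul_one]
    rfl
  have hφ : Function.Injective φ := by
    rintro ⟨d, p⟩ ⟨e, q⟩ h
    have h1 := hgcd (d, p)
    rw [h, hgcd] at h1
    obtain rfl : e = d := by simpa using h1
    refine Prod.ext rfl (Subtype.ext ?_)
    exact smul_right_injective _ (by positivity : ((e : ℤ) + 1) ≠ 0) h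
  have hsupp : Function.support (fun m : Fin 2 → ℤ => f (vecOf 2 g m)) ⊆ Set.range φ := by
    intro m hm
    have hm0 : m ≠ 0 := by
      rintro rfl
      exact hm (by simp only [vecOf_zero, hf0])
    have hpos : 0 < Int.gcd (m 0) (m 1) := by
      refine Nat.pos_of_ne_zero fun h => hm0 ?_
      rw [Int.gcd_eq_zero_iff] at h
      funext i
      fin_cases i
      exacts [h.1, h.2]
    obtain ⟨a, ha⟩ := Int.gcd_dvd_left (m 0) (m 1)
    obtain ⟨b, hb⟩ := Int.gcd_dvd_right (m 0) (m 1)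
    have hg : (Int.gcd (m 0) (m 1) : ℤ) ≠ 0 := by exact_mod_cast hpos.ne'
    have hcop : IsCoprime a b := by
      rw [Int.isCoprime_iff_gcd_eq_one]
      have := Int.gcd_div_gcd_div_gcd hpos
      rwa [Int.ediv_eq_of_eq_mul_right hg ha, Int.ediv_eq_of_eq_mul_right hg hb] at this
    refine ⟨(Int.gcd (m 0) (m 1) - 1, ⟨![a, b], hcop⟩), ?_⟩
    have hc : (((Int.gcd (m 0) (m 1) - 1 : ℕ) : ℤ) + 1) = Int.gcd (m 0) (m 1) := by omega
    funext i
    change (((Int.gcd (m 0) (m 1) - 1 : ℕ) : ℤ) + 1) * (![a, b] : Fin 2 → ℤ) i = m i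
    rw [hc]
    fin_cases i
    exacts [ha.symm, hb.symm]
  rw [← hφ.tsum_eq hsupp, ← ENNReal.tsum_prod]
  refine tsum_congr fun q => ?_
  rw [vecOf_smul]
  push_cast
  rfl

/-- The proportionality constant between the expected number of orbit points of `SL(2, ℤ)` and
Haar measure. -/
def IsOrbitConstant (μ : Measure (LatticeSpace 2)) (κ : ℝ≥0∞) : Prop :=
  ∀ F : SLR 2 → ℝ≥0∞, Measurable F → ∫⁻ x : LatticeSpace 2, ∑' γ, F (x.out * toSLR γ) ∂μ =
    κ * ∫⁻ v : Fin 2 → ℝ, ∫⁻ s, F (frame v s)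

section OrbitConstant

variable {μ : Measure (LatticeSpace 2)} {κ : ℝ≥0∞}

lemma measurable_tsum_prim {f : (Fin 2 → ℝ) → ℝ≥0∞} (hf : Measurable f)
    (hf0 : ∀ v, v 0 = 0 → f v = 0) :
    Measurable fun x : LatticeSpace 2 => ∑' p : PrimVec, f (vecOf 2 x.out p) := by
  simp_rw [← tsum_floor_shear f hf0 0]
  exact isLatticeFamily_matrix.measurable_tsum_out (measurable_mul_indicator_floor hf 0)

lemma lintegral_tsum_prim (hκ : IsOrbitConstant μ κ) {f : (Fin 2 → ℝ) → ℝ≥0∞}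
    (hf : Measurable f) (hf0 : ∀ v, v 0 = 0 → f v = 0) :
    ∫⁻ x : LatticeSpace 2, ∑' p : PrimVec, f (vecOf 2 x.out p) ∂μ = κ * ∫⁻ v, f v := by
  have hm := measurable_mul_indicator_floor hf 0
  simp_rw [← tsum_floor_shear f hf0 0]
  rw [hκ _ hm, ← lintegral_haarSL2 hm, lintegral_floor_shear hf]

lemma orbitConstant_mul_tsum (hκ : IsOrbitConstant μ κ) [IsProbabilityMeasure μ]
    (hμ : ∀ (g : SLR 2) (s : Set (LatticeSpace 2)), μ ((fun x => g • x) ⁻¹' s) = μ s) :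
    κ * ∑' d : ℕ, (ENNReal.ofReal (((d : ℝ) + 1) ^ 2))⁻¹ = 1 := by
  let B : Set (Fin 2 → ℝ) := Set.pi Set.univ fun i : Fin 2 => Set.Icc (1 : ℝ) 2
  have hB : MeasurableSet B := MeasurableSet.univ_pi fun i => measurableSet_Icc
  have hBv : volume B = 1 := by
    rw [volume_pi_pi]
    norm_num
  have hB0 : ∀ v : Fin 2 → ℝ, v 0 = 0 → B.indicator (1 : (Fin 2 → ℝ) → ℝ≥0∞) v = 0 :=
    fun v hv => Set.indicator_of_notMem (fun h => by
      have := (h 0 trivial).1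
      rw [hv] at this
      norm_num at this) _
  have hBm : Measurable (B.indicator (1 : (Fin 2 → ℝ) → ℝ≥0∞)) := measurable_one.indicator hB
  have hs0 : ∀ d : ℕ, ∀ v : Fin 2 → ℝ, v 0 = 0 →
      B.indicator (1 : (Fin 2 → ℝ) → ℝ≥0∞) (((d : ℝ) + 1) • v) = 0 := fun d v hv =>
    hB0 _ (by simp [hv])
  have h := lintegral_tsum_vecOf le_rfl hμ hBm (hB0 0 rfl)
  rw [lintegral_indicator_one hB, hBv] at h
  simp_rw [tsum_vecOf_eq_tsum_prim (hB0 0 rfl)] at h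
  rw [lintegral_tsum fun d : ℕ => (measurable_tsum_prim
    (f := fun v => B.indicator (1 : (Fin 2 → ℝ) → ℝ≥0∞) (((d : ℝ) + 1) • v))
    (hBm.comp (measurable_const_smul _)) (hs0 d)).aemeasurable] at h
  rw [← h, ← ENNReal.tsum_mul_left]
  refine tsum_congr fun d => ?_
  rw [lintegral_tsum_prim (f := fun v => B.indicator (1 : (Fin 2 → ℝ) → ℝ≥0∞) (((d : ℝ) + 1) • v))
    hκ (hBm.comp (measurable_const_smul _)) (hs0 d),
    lintegral_comp_smul_plane hBm (by positivity), lintegral_indicator_one hB, hBv, mul_one]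

/-- The determinant of two integral vectors. -/
def planeDet (p q : Fin 2 → ℤ) : ℤ := p 0 * q 1 - p 1 * q 0

lemma completion_det (p : PrimVec) :
    p.1 0 * completion p 1 1 - completion p 0 1 * p.1 1 = 1 := by
  rw [← completion_apply_zero, ← completion_apply_zero, ← Matrix.det_fin_two]
  exact (completion p).2

/-- Parametrization of the primitive vectors of given determinant with a fixed one. -/
lemma tsum_prim_planeDet (p : PrimVec) {k : ℤ} (hk : k ≠ 0) (G : (Fin 2 → ℤ) → ℝ≥0∞) :
    ∑' q : PrimVec, (if planeDet p q = k then G q else 0) =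
      ∑' t : ℤ, ∑ a ∈ Finset.range k.natAbs with k.natAbs.Coprime a,
        G fun i => (a + k * t) * p.1 i + k * completion p i 1 := by
  have hdet := completion_det p
  set c0 := completion p 0 1 with hc0
  set c1 := completion p 1 1 with hc1
  let T := ℤ × {a // a ∈ (Finset.range k.natAbs).filter fun a => k.natAbs.Coprime a}
  have hcop : ∀ x : T, IsCoprime (((x.2 : ℕ) : ℤ) + k * x.1) k := fun x => by
    have h1 := (Finset.mem_filter.1 x.2.2).2
    have h2 : IsCoprime ((x.2 : ℕ) : ℤ) k := by
      rw [Int.isCoprime_iff_gcd_eq_one, Int.gcd_comm]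
      exact h1
    exact h2.add_mul_left_left _
  let e : T → PrimVec := fun x =>
    ⟨fun i => ((x.2 : ℕ) + k * x.1) * p.1 i + k * completion p i 1, by
      obtain ⟨u, v, huv⟩ := hcop x
      refine ⟨u * c1 - v * p.1 1, v * p.1 0 - u * c0, ?_⟩
      change (u * c1 - v * p.1 1) * (((x.2 : ℕ) + k * x.1) * p.1 0 + k * c0) +
        (v * p.1 0 - u * c0) * (((x.2 : ℕ) + k * x.1) * p.1 1 + k * c1) = 1
      linear_combination huv + (u * ((x.2 : ℕ) + k * x.1) + v * k) * hdet⟩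
  have he : ∀ x : T, ∀ i, (e x).1 i = ((x.2 : ℕ) + k * x.1) * p.1 i + k * completion p i 1 :=
    fun x i => rfl
  have hed : ∀ x : T, planeDet p (e x) = k := fun x => by
    rw [planeDet, he, he, ← hc0, ← hc1]
    linear_combination k * hdet
  have hinj : Function.Injective e := by
    intro x y hxy
    have h0 : (e x).1 0 = (e y).1 0 := by rw [hxy]
    have h1 : (e x).1 1 = (e y).1 1 := by rw [hxy]
    rw [he, he, ← hc0] at h0
    rw [he, he, ← hc1] at h1
    have hb : ((x.2 : ℕ) : ℤ) + k * x.1 = (y.2 : ℕ) + k * y.1 := by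
      linear_combination c1 * h0 - c0 * h1 -
        ((x.2 : ℕ) + k * x.1 - ((y.2 : ℕ) + k * y.1)) * hdet
    have hx := Finset.mem_range.1 (Finset.mem_filter.1 x.2.2).1
    have hy := Finset.mem_range.1 (Finset.mem_filter.1 y.2.2).1
    have ha : ((x.2 : ℕ) : ℤ) - (y.2 : ℕ) = 0 :=
      Int.eq_zero_of_abs_lt_dvd (m := k.natAbs)
        (Int.natAbs_dvd.2 ⟨y.1 - x.1, by linear_combination hb⟩) (by
          rw [abs_lt]
          constructor <;> omega)
    refine Prod.ext ?_ (Subtype.ext ?_)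
    · apply mul_left_cancel₀ hk
      linear_combination hb - ha
    · omega
  have hsupp : Function.support (fun q : PrimVec => if planeDet p q = k then G q else 0) ⊆
      Set.range e := by
    intro q hq
    have hqk : planeDet p q = k := by
      by_contra h
      exact hq (if_neg h)
    rw [planeDet] at hqk
    set b := q.1 0 * c1 - q.1 1 * c0 with hb
    have hbk : IsCoprime b k := by
      obtain ⟨u, v, huv⟩ := q.2
      refine ⟨u * p.1 0 + v * p.1 1, u * c0 + v * c1, ?_⟩
      rw [hb, ← hqk]
      linear_combination huv + (u * q.1 0 + v * q.1 1) * hdet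
    have hem : b % k + k * (b / k) = b := Int.emod_add_mul_ediv b k
    have hnn : 0 ≤ b % k := Int.emod_nonneg b hk
    have hlt : b % k < k.natAbs := by
      rw [Int.natCast_natAbs]
      exact Int.emod_lt_abs b hk
    have hcast : (((b % k).toNat : ℕ) : ℤ) = b % k := Int.toNat_of_nonneg hnn
    have hmem : (b % k).toNat ∈ (Finset.range k.natAbs).filter fun a => k.natAbs.Coprime a := by
      rw [Finset.mem_filter, Finset.mem_range]
      refine ⟨by omega, ?_⟩
      have h1 : IsCoprime (b % k) k := by
        rw [← hem] at hbk
        exact hbk.of_add_mul_left_left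
      rw [← hcast, Int.isCoprime_iff_gcd_eq_one, Int.gcd_comm] at h1
      exact h1
    refine ⟨(b / k, ⟨_, hmem⟩), Subtype.ext (funext fun i => ?_)⟩
    rw [he]
    dsimp only
    rw [hcast, hem]
    fin_cases i
    · change b * p.1 0 + k * c0 = q.1 0
      rw [← hqk]
      linear_combination q.1 0 * hdet + p.1 0 * hb
    · change b * p.1 1 + k * c1 = q.1 1
      rw [← hqk]
      linear_combination q.1 1 * hdet + p.1 1 * hb
  rw [← hinj.tsum_eq hsupp, ENNReal.tsum_prod']
  refine tsum_congr fun t => ?_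
  rw [tsum_fintype]
  refine (Finset.sum_congr rfl fun a _ => ?_).trans (Finset.sum_coe_sort _ fun a : ℕ =>
    G fun i => ((a : ℤ) + k * t) * p.1 i + k * completion p i 1)
  rw [if_pos (hed _)]

/-- The second column of a matrix. -/
def secondCol (g : SLR 2) : Fin 2 → ℝ := fun i => g i 1

lemma measurable_secondCol : Measurable secondCol :=
  measurable_pi_lambda _ fun i => measurable_entry i 1

lemma tsum_toSLR_pairs (f : (Fin 2 → ℝ) × (Fin 2 → ℝ) → ℝ≥0∞) {k : ℤ} (hk : k ≠ 0) (g : SLR 2) :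
    ∑' γ, ∑ a ∈ Finset.range k.natAbs with k.natAbs.Coprime a,
      f (firstCol (g * toSLR γ), (a : ℝ) • firstCol (g * toSLR γ) +
        (k : ℝ) • secondCol (g * toSLR γ)) =
    ∑' p : PrimVec, ∑' q : PrimVec,
      if planeDet p q = k then f (vecOf 2 g p, vecOf 2 g q) else 0 := by
  rw [tsum_toSLR fun h => ∑ a ∈ Finset.range k.natAbs with k.natAbs.Coprime a,
      f (firstCol h, (a : ℝ) • firstCol h + (k : ℝ) • secondCol h)]
  refine tsum_congr fun p => ?_
  rw [tsum_prim_planeDet p hk fun q => f (vecOf 2 g p, vecOf 2 g q)]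
  refine tsum_congr fun t => Finset.sum_congr rfl fun a _ => ?_
  rw [firstCol_mul_unip, firstCol_mul_completion]
  congr 2
  have h1 : secondCol (g * toSLR (completion p) * toSLR (unip t)) =
      (t : ℝ) • vecOf 2 g p + secondCol (g * toSLR (completion p)) := by
    rw [← firstCol_mul_completion]
    funext i
    simp only [secondCol, firstCol, specialLinearGroup_two_mul_apply _ (toSLR (unip t)),
      toSLR_apply, unip_apply, Pi.add_apply, Pi.smul_apply, smul_eq_mul]
    simp
    ring
  rw [h1]
  funext i
  simp only [secondCol, vecOf, Matrix.mulVec, dotProduct, Fin.sum_univ_two, Pi.add_apply,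
    Pi.smul_apply, smul_eq_mul, specialLinearGroup_two_mul_apply, toSLR_apply]
  push_cast
  ring

lemma secondCol_frame {v : Fin 2 → ℝ} (h : v 0 ≠ 0) (s : ℝ) (a k : ℝ) :
    a • v + k • secondCol (frame v s) = sheared v k (a + k * s) := by
  funext i
  rw [Pi.add_apply, Pi.smul_apply, Pi.smul_apply, secondCol, coe_frame h]
  fin_cases i
  · simp [sheared]
    ring
  · simp [sheared]
    ring

lemma measurable_sheared : Measurable fun q : (Fin 2 → ℝ) × ℝ × ℝ => sheared q.1 q.2.1 q.2.2 := by
  refine measurable_pi_lambda _ fun i => ?_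
  fin_cases i
  · exact (by fun_prop : Measurable fun q : (Fin 2 → ℝ) × ℝ × ℝ => q.2.2 * q.1 0)
  · exact (by fun_prop : Measurable fun q : (Fin 2 → ℝ) × ℝ × ℝ =>
      q.2.1 * (q.1 0)⁻¹ + q.2.2 * q.1 1)

lemma measurable_pairSum {f : (Fin 2 → ℝ) × (Fin 2 → ℝ) → ℝ≥0∞} (hf : Measurable f) (k : ℤ) :
    Measurable fun h : SLR 2 => ∑ a ∈ Finset.range k.natAbs with k.natAbs.Coprime a,
      f (firstCol h, (a : ℝ) • firstCol h + (k : ℝ) • secondCol h) :=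
  Finset.measurable_fun_sum _ fun a _ => hf.comp (measurable_firstCol.prodMk
    ((measurable_firstCol.const_smul (a : ℝ)).fun_add (measurable_secondCol.const_smul (k : ℝ))))

lemma measurable_tsum_prim_pairs {f : (Fin 2 → ℝ) × (Fin 2 → ℝ) → ℝ≥0∞} (hf : Measurable f)
    {k : ℤ} (hk : k ≠ 0) : Measurable fun x : LatticeSpace 2 => ∑' p : PrimVec, ∑' q : PrimVec,
      if planeDet p q = k then f (vecOf 2 x.out p, vecOf 2 x.out q) else 0 := by
  simp_rw [← tsum_toSLR_pairs f hk]
  exact isLatticeFamily_matrix.measurable_tsum_out (measurable_pairSum hf k)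

/-- The expected number of pairs of primitive vectors with given nonzero determinant. -/
lemma lintegral_tsum_prim_pairs (hκ : IsOrbitConstant μ κ)
    {f : (Fin 2 → ℝ) × (Fin 2 → ℝ) → ℝ≥0∞} (hf : Measurable f) {k : ℤ} (hk : k ≠ 0) :
    ∫⁻ x : LatticeSpace 2, ∑' p : PrimVec, ∑' q : PrimVec,
      (if planeDet p q = k then f (vecOf 2 x.out p, vecOf 2 x.out q) else 0) ∂μ =
    κ * ((k.natAbs.totient : ℝ≥0∞) / k.natAbs * ∫⁻ v, ∫⁻ s, f (v, sheared v k s)) := by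
  simp_rw [← tsum_toSLR_pairs f hk]
  rw [hκ _ (measurable_pairSum hf k)]
  congr 1
  have hG : Measurable fun v : Fin 2 → ℝ => ∫⁻ s, f (v, sheared v k s) := by
    refine Measurable.lintegral_prod_right' (f := fun q : (Fin 2 → ℝ) × ℝ =>
      f (q.1, sheared q.1 k q.2)) ?_
    exact hf.comp (measurable_fst.prodMk (measurable_sheared.comp
      (measurable_fst.prodMk (measurable_const.prodMk measurable_snd))))
  rw [← lintegral_const_mul _ hG]
  refine lintegral_congr_ae ?_
  filter_upwards [ae_apply_zero_ne_zero] with v hv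
  simp_rw [firstCol_frame hv, secondCol_frame hv]
  have hv' : Measurable fun s : ℝ => f (v, sheared v k s) :=
    hf.comp (measurable_const.prodMk (measurable_sheared.comp
      (measurable_const.prodMk (measurable_const.prodMk measurable_id))))
  have hk' : (k : ℝ) ≠ 0 := by exact_mod_cast hk
  rw [lintegral_finsetSum (f := fun (a : ℕ) (s : ℝ) => f (v, sheared v k (a + k * s))) _
    fun a _ => hv'.comp (by fun_prop : Measurable fun s : ℝ => (a : ℝ) + k * s)]
  have : ∀ a : ℕ, ∫⁻ s : ℝ, f (v, sheared v k (a + k * s)) =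
      (k.natAbs : ℝ≥0∞)⁻¹ * ∫⁻ s, f (v, sheared v k s) := fun a => by
    rw [lintegral_comp_mul_real (f := fun s => f (v, sheared v k (a + s)))
      (hv'.comp (measurable_const_add (a : ℝ))) hk',
      lintegral_add_left_eq_self (fun s => f (v, sheared v k s)) (a : ℝ)]
    congr 2
    rw [← Int.cast_abs, ← Int.natCast_natAbs, Int.cast_natCast, ENNReal.ofReal_natCast]
  simp_rw [this]
  rw [Finset.sum_const, ← Nat.totient_eq_card_coprime, nsmul_eq_mul, div_eq_mul_inv, mul_assoc]

end OrbitConstant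

/-! ### Weights and their correlation functions -/

/-- A Lipschitz weight function supported in a compact subset of a half plane. -/
structure IsWeight (h : (Fin 2 → ℝ) → ℝ≥0∞) (a B L : ℝ) : Prop where
  pos_a : 0 < a
  pos_B : 0 < B
  nonneg_L : 0 ≤ L
  measurable : Measurable h
  le_one : ∀ v, h v ≤ 1
  le_apply_zero : ∀ v, h v ≠ 0 → a ≤ v 0
  norm_le : ∀ v, h v ≠ 0 → ‖v‖ ≤ B
  le_add : ∀ v w, h v ≤ h w + ENNReal.ofReal (L * dist v w)

/-- The integral of `h v * h w` over the pairs `(v, w)` of determinant `t`. -/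
def corr (h : (Fin 2 → ℝ) → ℝ≥0∞) (t : ℝ) : ℝ≥0∞ := ∫⁻ v, ∫⁻ s, h v * h (sheared v t s)

lemma measurable_corr {h : (Fin 2 → ℝ) → ℝ≥0∞} (hh : Measurable h) : Measurable (corr h) := by
  refine Measurable.lintegral_prod_right' (f := fun q : ℝ × (Fin 2 → ℝ) =>
    ∫⁻ s, h q.2 * h (sheared q.2 q.1 s)) ?_
  refine Measurable.lintegral_prod_right' (f := fun q : (ℝ × (Fin 2 → ℝ)) × ℝ =>
    h q.1.2 * h (sheared q.1.2 q.1.1 q.2)) ?_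
  exact (hh.comp (measurable_snd.comp measurable_fst)).fun_mul (hh.comp
    (measurable_sheared.comp ((measurable_snd.comp measurable_fst).prodMk
      ((measurable_fst.comp measurable_fst).prodMk measurable_snd))))

lemma sheared_smul {R R' : ℝ} (hR : R ≠ 0) (hR' : R' ≠ 0) (v : Fin 2 → ℝ) (t s : ℝ) :
    R'⁻¹ • sheared (R • v) t s = sheared v (t / (R * R')) (R * R'⁻¹ * s) := by
  funext i
  fin_cases i
  · simp [sheared]
    ring
  · simp [sheared]
    by_cases hv : v 0 = 0
    · simp [hv]
      ring
    · field_simp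

lemma sheared_eq_mulVec {v : Fin 2 → ℝ} (hv : v 0 ≠ 0) (t s : ℝ) :
    sheared v t s = (frame v 0).1 *ᵥ ![s, t] := by
  rw [coe_frame hv]
  funext i
  fin_cases i
  · simp [sheared]
  · simp [sheared]
    ring

namespace IsWeight

variable {h : (Fin 2 → ℝ) → ℝ≥0∞} {a B L : ℝ}

lemma eq_zero (hh : IsWeight h a B L) {v : Fin 2 → ℝ} (hv : v 0 ≤ 0) : h v = 0 := by
  by_contra h0
  exact absurd (hh.le_apply_zero v h0) (by linarith [hh.pos_a])

lemma measurable_mul_sheared (hh : IsWeight h a B L) (t : ℝ) :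
    Measurable fun q : (Fin 2 → ℝ) × ℝ => h q.1 * h (sheared q.1 t q.2) :=
  (hh.measurable.comp measurable_fst).fun_mul (hh.measurable.comp
    (measurable_sheared.comp (measurable_fst.prodMk
      (measurable_const.prodMk measurable_snd))))

lemma lintegral_corr (hh : IsWeight h a B L) : ∫⁻ t, corr h t = (∫⁻ v, h v) ^ 2 := by
  have hm := hh.measurable
  have hm3 : Measurable fun q : ℝ × (Fin 2 → ℝ) × ℝ => h q.2.1 * h (sheared q.2.1 q.1 q.2.2) :=
    (hm.comp (measurable_fst.comp measurable_snd)).fun_mul (hm.comp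
      (measurable_sheared.comp ((measurable_fst.comp measurable_snd).prodMk
        (measurable_fst.prodMk (measurable_snd.comp measurable_snd)))))
  have hm2 : Measurable fun q : ℝ × (Fin 2 → ℝ) => ∫⁻ s, h q.2 * h (sheared q.2 q.1 s) :=
    Measurable.lintegral_prod_right' (f := fun q : (ℝ × (Fin 2 → ℝ)) × ℝ =>
      h q.1.2 * h (sheared q.1.2 q.1.1 q.2)) (hm3.comp
        ((measurable_fst.comp measurable_fst).prodMk
          ((measurable_snd.comp measurable_fst).prodMk measurable_snd)))
  simp_rw [corr]
  rw [lintegral_lintegral_swap hm2.aemeasurable, sq, ← lintegral_mul_const _ hm]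
  refine lintegral_congr_ae ?_
  filter_upwards [ae_apply_zero_ne_zero] with v hv
  have hmv : Measurable fun q : ℝ × ℝ => h (sheared v q.1 q.2) :=
    hm.comp (measurable_sheared.comp (measurable_const.prodMk measurable_id))
  have hmv' : Measurable fun q : ℝ × ℝ => h (sheared v q.2 q.1) :=
    hmv.comp measurable_swap
  have h1 : ∀ t, ∫⁻ s, h v * h (sheared v t s) = h v * ∫⁻ s, h (sheared v t s) := fun t =>
    lintegral_const_mul _ (hmv.comp (measurable_const.prodMk measurable_id))
  simp_rw [h1]
  rw [lintegral_const_mul _ hmv.lintegral_prod_right']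
  congr 1
  rw [lintegral_lintegral_swap hmv.aemeasurable,
    ← lintegral_prod (fun q : ℝ × ℝ => h (sheared v q.2 q.1)) hmv'.aemeasurable,
    ← Measure.volume_eq_prod,
    ← (volume_preserving_finTwoArrow ℝ).lintegral_comp hmv',
    ← (measurePreserving_mulVec (frame v 0)).lintegral_comp hm]
  refine lintegral_congr fun w => ?_
  rw [sheared_eq_mulVec hv]
  congr 2
  funext i
  fin_cases i <;> rfl

lemma corr_eq_zero (hh : IsWeight h a B L) {t : ℝ} (ht : 2 * B ^ 2 < |t|) : corr h t = 0 := by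
  rw [corr]
  refine (lintegral_congr fun v => ?_).trans lintegral_zero
  refine (lintegral_congr fun s => ?_).trans lintegral_zero
  by_contra h0
  obtain ⟨h1, h2⟩ := mul_ne_zero_iff.1 h0
  have hv := hh.norm_le _ h1
  have hw := hh.norm_le _ h2
  have hv0 : 0 < v 0 := hh.pos_a.trans_le (hh.le_apply_zero v h1)
  have hdet : t = v 0 * sheared v t s 1 - v 1 * sheared v t s 0 := by
    simp only [sheared]
    simp
    field_simp
    ring
  have e : ∀ (u : Fin 2 → ℝ), ‖u‖ ≤ B → ∀ i, |u i| ≤ B := fun u hu i =>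
    (norm_le_pi_norm u i).trans hu
  have hB := hh.pos_B.le
  have h3 : |v 0 * sheared v t s 1| ≤ B * B := by
    rw [abs_mul]
    exact mul_le_mul (e v hv 0) (e _ hw 1) (abs_nonneg _) hB
  have h4 : |v 1 * sheared v t s 0| ≤ B * B := by
    rw [abs_mul]
    exact mul_le_mul (e v hv 1) (e _ hw 0) (abs_nonneg _) hB
  have h5 : |t| ≤ B * B + B * B := by
    conv_lhs => rw [hdet]
    exact (abs_sub _ _).trans (add_le_add h3 h4)
  nlinarith

lemma lintegral_pair (hh : IsWeight h a B L) {R R' : ℝ} (hR : 0 < R) (hR' : 0 < R') (t : ℝ) :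
    ∫⁻ v, ∫⁻ s, h (R⁻¹ • v) * h (R'⁻¹ • sheared v t s) =
      ENNReal.ofReal (R * R') * corr h (t / (R * R')) := by
  have hm2 : Measurable fun q : (Fin 2 → ℝ) × ℝ =>
      h (R⁻¹ • q.1) * h (R'⁻¹ • sheared q.1 t q.2) :=
    (hh.measurable.comp (measurable_fst.const_smul R⁻¹)).fun_mul (hh.measurable.comp
      ((measurable_sheared.comp (measurable_fst.prodMk
        (measurable_const.prodMk measurable_snd))).const_smul R'⁻¹))
  have h1 := lintegral_comp_smul_plane (f := fun v => ∫⁻ s, h (R⁻¹ • v) *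
    h (R'⁻¹ • sheared v t s)) hm2.lintegral_prod_right' hR
  have hR2 : ENNReal.ofReal (R ^ 2) ≠ 0 := by simpa using by positivity
  have hc : 0 < R * R'⁻¹ := by positivity
  have h2 : ∀ v : Fin 2 → ℝ, ∫⁻ s, h (R⁻¹ • R • v) * h (R'⁻¹ • sheared (R • v) t s) =
      (ENNReal.ofReal (R * R'⁻¹))⁻¹ * ∫⁻ s, h v * h (sheared v (t / (R * R')) s) := fun v => by
    simp_rw [sheared_smul hR.ne' hR'.ne', inv_smul_smul₀ hR.ne']
    rw [lintegral_comp_mul_real (f := fun s => h v * h (sheared v (t / (R * R')) s))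
      ((hh.measurable_mul_sheared _).comp (measurable_const.prodMk measurable_id)) hc.ne',
      abs_of_pos hc]
  simp_rw [h2] at h1
  rw [lintegral_const_mul _ (hh.measurable_mul_sheared _).lintegral_prod_right'] at h1
  change _ * corr h (t / (R * R')) = _ at h1
  calc _ = ENNReal.ofReal (R ^ 2) * ((ENNReal.ofReal (R ^ 2))⁻¹ *
        ∫⁻ v, ∫⁻ s, h (R⁻¹ • v) * h (R'⁻¹ • sheared v t s)) := by
        rw [← mul_assoc, ENNReal.mul_inv_cancel hR2 ofReal_ne_top, one_mul]
    _ = _ := by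
        rw [← h1, ← mul_assoc, ← ENNReal.ofReal_inv_of_pos hc,
          ← ENNReal.ofReal_mul (by positivity)]
        congr 2
        field_simp

lemma exists_corr_le_add (hh : IsWeight h a B L) : ∃ C : ℝ, 0 ≤ C ∧ ∀ t t',
    corr h t ≤ corr h t' + ENNReal.ofReal (C * |t - t'|) := by
  have ha := hh.pos_a
  have hB := hh.pos_B
  have hL := hh.nonneg_L
  let E : Set ((Fin 2 → ℝ) × ℝ) := Metric.closedBall 0 B ×ˢ Set.Icc (-(B / a)) (B / a)
  have hE : MeasurableSet E := Metric.isClosed_closedBall.measurableSet.prod measurableSet_Icc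
  have hEfin : volume E ≠ ∞ :=
    ((isCompact_closedBall _ _).prod isCompact_Icc).measure_lt_top.ne
  refine ⟨L * a⁻¹ * (volume E).toReal, by positivity, fun t t' => ?_⟩
  have hpt : ∀ q : (Fin 2 → ℝ) × ℝ, h q.1 * h (sheared q.1 t q.2) ≤
      h q.1 * h (sheared q.1 t' q.2) +
        E.indicator (fun _ => ENNReal.ofReal (L * a⁻¹ * |t - t'|)) q := by
    rintro ⟨v, s⟩
    dsimp only
    by_cases h0 : h v * h (sheared v t s) = 0
    · rw [h0]; exact zero_le
    obtain ⟨h1, h2⟩ := mul_ne_zero_iff.1 h0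
    have hv := hh.norm_le _ h1
    have hw := hh.norm_le _ h2
    have hva := hh.le_apply_zero v h1
    have hv0 : 0 < v 0 := ha.trans_le hva
    have hs : |s| ≤ B / a := by
      rw [le_div_iff₀ ha]
      have h3 : |s * v 0| ≤ B := (norm_le_pi_norm (sheared v t s) 0).trans hw
      rw [abs_mul, abs_of_pos hv0] at h3
      exact (mul_le_mul_of_nonneg_left hva (abs_nonneg s)).trans h3
    rw [Set.indicator_of_mem (show (v, s) ∈ E from
      ⟨mem_closedBall_zero_iff.2 hv, abs_le.1 hs⟩)]
    have hd : dist (sheared v t s) (sheared v t' s) ≤ a⁻¹ * |t - t'| := by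
      rw [dist_pi_le_iff (by positivity)]
      intro i
      fin_cases i
      · simp [sheared]
        positivity
      · simp only [sheared, Real.dist_eq]
        simp
        rw [← sub_mul, abs_mul, abs_inv, abs_of_pos hv0, mul_comm]
        gcongr
    calc h v * h (sheared v t s)
        ≤ h v * (h (sheared v t' s) +
          ENNReal.ofReal (L * dist (sheared v t s) (sheared v t' s))) := by
          gcongr; exact hh.le_add _ _
      _ ≤ h v * h (sheared v t' s) +
          1 * ENNReal.ofReal (L * dist (sheared v t s) (sheared v t' s)) := by
          rw [mul_add]; gcongr; exact hh.le_one v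
      _ ≤ _ := by
          rw [one_mul, mul_assoc]; gcongr
  have hc : ∀ t, corr h t = ∫⁻ q : (Fin 2 → ℝ) × ℝ, h q.1 * h (sheared q.1 t q.2) := fun t => by
    rw [Measure.volume_eq_prod, lintegral_prod _ (hh.measurable_mul_sheared t).aemeasurable]
    rfl
  rw [hc, hc]
  refine (lintegral_mono hpt).trans ?_
  rw [lintegral_add_left (hh.measurable_mul_sheared t'), lintegral_indicator_const hE]
  gcongr
  rw [← ENNReal.ofReal_toReal hEfin, ← ENNReal.ofReal_mul (by positivity),
    ENNReal.ofReal_toReal hEfin]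
  exact ENNReal.ofReal_le_ofReal (le_of_eq (by ring))

/-- Comparison of a Riemann sum with the integral of the correlation function. -/
lemma exists_tsum_corr_le (hh : IsWeight h a B L) : ∃ C : ℝ, 0 ≤ C ∧ ∀ ρ : ℝ, 0 < ρ →
    ENNReal.ofReal ρ * ∑' k : ℤ, corr h (k / ρ) ≤
      ENNReal.ofReal (ρ ^ 2) * (∫⁻ v, h v) ^ 2 + ENNReal.ofReal (C * (ρ + 1)) := by
  obtain ⟨C, hC, hlip⟩ := hh.exists_corr_le_add
  have hB := hh.pos_B
  refine ⟨C * (4 * B ^ 2 + 1), by positivity, fun ρ hρ => ?_⟩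
  have hm := measurable_corr hh.measurable
  let N : ℤ := ⌊2 * B ^ 2 * ρ⌋
  have hN0 : 0 ≤ N := Int.floor_nonneg.2 (by positivity)
  let S : Finset ℤ := Finset.Icc (-N) N
  have hS : (S.card : ℝ) * C ≤ C * (4 * B ^ 2 + 1) * (ρ + 1) := by
    have h1 : (S.card : ℤ) = 2 * N + 1 := by
      rw [Int.card_Icc]; omega
    have h2 : (S.card : ℝ) = 2 * N + 1 := by exact_mod_cast h1
    have h3 : (N : ℝ) ≤ 2 * B ^ 2 * ρ := Int.floor_le _
    rw [h2, mul_comm, mul_assoc]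
    refine mul_le_mul_of_nonneg_left ?_ hC
    nlinarith [sq_nonneg B]
  have hterm : ∀ k : ℤ, corr h (k / ρ) ≤ (∫⁻ u in Set.Ico (k : ℝ) (k + 1), corr h (ρ⁻¹ * u)) +
      if k ∈ S then ENNReal.ofReal (C / ρ) else 0 := by
    intro k
    by_cases hk : k ∈ S
    · rw [if_pos hk]
      calc corr h (k / ρ) = ∫⁻ u in Set.Ico (k : ℝ) (k + 1), corr h (k / ρ) := by simp
        _ ≤ ∫⁻ u in Set.Ico (k : ℝ) (k + 1), (corr h (ρ⁻¹ * u) + ENNReal.ofReal (C / ρ)) := by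
          refine setLIntegral_mono' measurableSet_Ico fun u hu => (hlip _ (ρ⁻¹ * u)).trans ?_
          gcongr
          rw [div_eq_mul_inv C]
          gcongr
          have : (k : ℝ) / ρ - ρ⁻¹ * u = ρ⁻¹ * (k - u) := by ring
          rw [this, abs_mul, abs_of_pos (inv_pos.2 hρ)]
          refine mul_le_of_le_one_right (inv_pos.2 hρ).le ?_
          rw [abs_le]
          constructor <;> linarith [hu.1, hu.2]
        _ = _ := by
          rw [lintegral_add_right _ measurable_const]
          simp
    · rw [if_neg hk, hh.corr_eq_zero]
      · exact zero_le
      · have h1 : N < |k| := by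
          by_contra h2
          exact hk (Finset.mem_Icc.2 (abs_le.1 (not_lt.1 h2)))
        have h2 : 2 * B ^ 2 * ρ < |(k : ℝ)| := by
          rw [← Int.cast_abs]
          exact Int.floor_lt.1 h1
        rw [abs_div, abs_of_pos hρ, lt_div_iff₀ hρ]
        exact h2
  have hsum : ∑' k : ℤ, corr h (k / ρ) ≤
      ENNReal.ofReal ρ * (∫⁻ v, h v) ^ 2 + S.card * ENNReal.ofReal (C / ρ) := by
    refine (ENNReal.tsum_le_tsum hterm).trans (le_of_eq ?_)
    rw [ENNReal.tsum_add, ← lintegral_iUnion (fun k : ℤ => measurableSet_Ico)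
      (Set.pairwise_disjoint_Ico_intCast ℝ), iUnion_Ico_intCast, setLIntegral_univ,
      lintegral_comp_mul_real hm (inv_ne_zero hρ.ne'), hh.lintegral_corr]
    congr 1
    · rw [abs_of_pos (inv_pos.2 hρ), ENNReal.ofReal_inv_of_pos hρ, inv_inv]
    · rw [tsum_eq_sum (s := S) fun k hk => if_neg hk, Finset.sum_congr rfl fun k hk => if_pos hk,
        Finset.sum_const, nsmul_eq_mul]
  refine (mul_le_mul_right hsum _).trans ?_
  rw [mul_add, ← mul_assoc, ← ENNReal.ofReal_mul hρ.le, ← sq]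
  gcongr
  rw [← ENNReal.ofReal_natCast, ← ENNReal.ofReal_mul (Nat.cast_nonneg _),
    ← ENNReal.ofReal_mul hρ.le]
  refine ENNReal.ofReal_le_ofReal (le_trans (le_of_eq ?_) hS)
  field_simp

end IsWeight

/-! ### Second moments of sums over primitive vectors -/

/-- The sum of the rescaled weight `h (R⁻¹ • v)` over the primitive vectors of a lattice. -/
def primSum (h : (Fin 2 → ℝ) → ℝ≥0∞) (R : ℝ) (x : LatticeSpace 2) : ℝ≥0∞ :=
  ∑' p : PrimVec, h (R⁻¹ • vecOf 2 x.out p)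

/-- The off-diagonal part of the second moment of `primSum`. -/
def pairMoment (κ : ℝ≥0∞) (h : (Fin 2 → ℝ) → ℝ≥0∞) (ρ : ℝ) : ℝ≥0∞ :=
  ENNReal.ofReal ρ * κ * ∑' j : ℕ, (((j + 1).totient : ℝ≥0∞) / ((j + 1 : ℕ) : ℝ≥0∞)) *
    (corr h (((j : ℝ) + 1) / ρ) + corr h (-((j : ℝ) + 1) / ρ))

lemma eq_or_eq_neg_of_planeDet {p q : PrimVec} (h : planeDet p q = 0) :
    p = q ∨ (p : Fin 2 → ℤ) = -(q : Fin 2 → ℤ) := by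
  have h' : p.1 0 * q.1 1 = p.1 1 * q.1 0 := sub_eq_zero.1 h
  obtain ⟨u, v, huv⟩ := p.2
  obtain ⟨a, b, hab⟩ := q.2
  have e0 : q.1 0 = (u * q.1 0 + v * q.1 1) * p.1 0 := by
    linear_combination (-q.1 0) * huv - v * h'
  have e1 : q.1 1 = (u * q.1 0 + v * q.1 1) * p.1 1 := by
    linear_combination (-q.1 1) * huv + u * h'
  have hu : IsUnit (u * q.1 0 + v * q.1 1) := by
    refine IsUnit.of_mul_eq_one (a * p.1 0 + b * p.1 1) ?_
    linear_combination hab - a * e0 - b * e1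
  rcases Int.isUnit_iff.1 hu with h1 | h1
  · left
    rw [h1, one_mul] at e0 e1
    refine Subtype.ext (funext fun i => ?_)
    fin_cases i
    · exact e0.symm
    · exact e1.symm
  · right
    rw [h1] at e0 e1
    refine funext fun i => ?_
    fin_cases i
    · show p.1 0 = - q.1 0
      rw [e0]; ring
    · show p.1 1 = - q.1 1
      rw [e1]; ring

lemma vecOf_neg (n : ℕ) (g : SLR n) (m : Fin n → ℤ) : vecOf n g (-m) = -vecOf n g m := by
  rw [vecOf, vecOf, ← Matrix.mulVec_neg]
  congr 1
  funext i
  simp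

namespace IsWeight

variable {h : (Fin 2 → ℝ) → ℝ≥0∞} {a B L : ℝ}

lemma smul_eq_zero (hh : IsWeight h a B L) {R : ℝ} (hR : 0 < R) {v : Fin 2 → ℝ} (hv : v 0 ≤ 0) :
    h (R⁻¹ • v) = 0 :=
  hh.eq_zero (mul_nonpos_of_nonneg_of_nonpos (inv_pos.2 hR).le hv)

lemma mul_eq_sum (hh : IsWeight h a B L) {R R' : ℝ} (hR : 0 < R) (hR' : 0 < R') (g : SLR 2)
    (p q : PrimVec) :
    h (R⁻¹ • vecOf 2 g p) * h (R'⁻¹ • vecOf 2 g q) =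
      (if q = p then h (R⁻¹ • vecOf 2 g p) * h (R'⁻¹ • vecOf 2 g p) else 0) +
      ∑' j : ℕ, ((if planeDet p q = ((j : ℤ) + 1) then
          h (R⁻¹ • vecOf 2 g p) * h (R'⁻¹ • vecOf 2 g q) else 0) +
        (if planeDet p q = -((j : ℤ) + 1) then
          h (R⁻¹ • vecOf 2 g p) * h (R'⁻¹ • vecOf 2 g q) else 0)) := by
  rcases lt_trichotomy (planeDet p q) 0 with hd | hd | hd
  · have hpq : q ≠ p := by
      rintro rfl
      simp [planeDet, mul_comm] at hd
    rw [if_neg hpq, zero_add, tsum_eq_single (planeDet p q).natAbs.pred]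
    · rw [if_neg (by omega), if_pos, zero_add]
      rw [Nat.pred_eq_sub_one]
      omega
    · intro j hj
      rw [if_neg (by omega), if_neg, add_zero]
      rw [Nat.pred_eq_sub_one] at hj
      omega
  · have h0 : ∀ j : ℕ, (if planeDet p q = ((j : ℤ) + 1) then
          h (R⁻¹ • vecOf 2 g p) * h (R'⁻¹ • vecOf 2 g q) else 0) +
        (if planeDet p q = -((j : ℤ) + 1) then
          h (R⁻¹ • vecOf 2 g p) * h (R'⁻¹ • vecOf 2 g q) else 0) = 0 := fun j => by
      rw [if_neg (by omega), if_neg (by omega), add_zero]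
    simp_rw [h0, tsum_zero, add_zero]
    by_cases hpq : q = p
    · rw [if_pos hpq, hpq]
    · rw [if_neg hpq]
      have hneg : vecOf 2 g p = -vecOf 2 g q := by
        rw [← vecOf_neg, (eq_or_eq_neg_of_planeDet hd).resolve_left (Ne.symm hpq)]
      rw [hneg]
      rcases le_total (vecOf 2 g q 0) 0 with h1 | h1
      · rw [hh.smul_eq_zero hR' h1, mul_zero]
      · rw [hh.smul_eq_zero hR (neg_nonpos.2 h1), zero_mul]
  · have hpq : q ≠ p := by
      rintro rfl
      simp [planeDet, mul_comm] at hd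
    rw [if_neg hpq, zero_add, tsum_eq_single (planeDet p q).natAbs.pred]
    · rw [if_neg (c := planeDet p q = -_) (by omega), if_pos, add_zero]
      rw [Nat.pred_eq_sub_one]
      omega
    · intro j hj
      rw [if_neg (c := planeDet p q = -_) (by omega), if_neg, add_zero]
      rw [Nat.pred_eq_sub_one] at hj
      omega

variable {μ : Measure (LatticeSpace 2)} {κ : ℝ≥0∞}

lemma measurable_smul (hh : IsWeight h a B L) (R : ℝ) : Measurable fun v => h (R⁻¹ • v) :=
  hh.measurable.comp (measurable_id.const_smul R⁻¹)

lemma measurable_primSum (hh : IsWeight h a B L) {R : ℝ} (hR : 0 < R) :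
    Measurable (primSum h R) :=
  measurable_tsum_prim (hh.measurable_smul R) fun _ hv => hh.smul_eq_zero hR hv.le

lemma lintegral_primSum (hh : IsWeight h a B L) (hκ : IsOrbitConstant μ κ) {R : ℝ} (hR : 0 < R) :
    ∫⁻ x, primSum h R x ∂μ = ENNReal.ofReal (R ^ 2) * (κ * ∫⁻ v, h v) := by
  simp_rw [primSum]
  rw [lintegral_tsum_prim hκ (hh.measurable_smul R) fun _ hv => hh.smul_eq_zero hR hv.le,
    lintegral_comp_smul_plane hh.measurable (inv_pos.2 hR), inv_pow,
    ENNReal.ofReal_inv_of_pos (by positivity), inv_inv]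
  ring

lemma lintegral_primSum_mul (hh : IsWeight h a B L) (hκ : IsOrbitConstant μ κ) {R R' : ℝ}
    (hR : 0 < R) (hR' : 0 < R') :
    ∫⁻ x, primSum h R x * primSum h R' x ∂μ =
      κ * (∫⁻ v, h (R⁻¹ • v) * h (R'⁻¹ • v)) + pairMoment κ h (R * R') := by
  have hm := hh.measurable_smul R
  have hm' := hh.measurable_smul R'
  let f : (Fin 2 → ℝ) × (Fin 2 → ℝ) → ℝ≥0∞ := fun w => h (R⁻¹ • w.1) * h (R'⁻¹ • w.2)
  have hf : Measurable f := (hm.comp measurable_fst).fun_mul (hm'.comp measurable_snd)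
  let G (k : ℤ) (x : LatticeSpace 2) : ℝ≥0∞ := ∑' p : PrimVec, ∑' q : PrimVec,
    if planeDet p q = k then f (vecOf 2 x.out p, vecOf 2 x.out q) else 0
  have hG : ∀ k : ℤ, k ≠ 0 → ∫⁻ x, G k x ∂μ = κ * ((k.natAbs.totient : ℝ≥0∞) / k.natAbs *
      (ENNReal.ofReal (R * R') * corr h (k / (R * R')))) := fun k hk => by
    rw [← hh.lintegral_pair hR hR']
    exact lintegral_tsum_prim_pairs hκ hf hk
  have hGm : ∀ k : ℤ, k ≠ 0 → Measurable (G k) := fun k hk => measurable_tsum_prim_pairs hf hk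
  have hpt : ∀ x, primSum h R x * primSum h R' x =
      (∑' p : PrimVec, h (R⁻¹ • vecOf 2 x.out p) * h (R'⁻¹ • vecOf 2 x.out p)) +
      ∑' j : ℕ, (G ((j : ℤ) + 1) x + G (-((j : ℤ) + 1)) x) := fun x => by
    rw [primSum, primSum, ← ENNReal.tsum_mul_right]
    simp_rw [← ENNReal.tsum_mul_left]
    rw [tsum_congr fun p => tsum_congr fun q => hh.mul_eq_sum hR hR' x.out p q]
    simp_rw [ENNReal.tsum_add, tsum_ite_eq]
    congr 1
    congr 1
    · conv_lhs =>
        enter [1, p]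
        rw [ENNReal.tsum_comm]
      rw [ENNReal.tsum_comm]
    · conv_lhs =>
        enter [1, p]
        rw [ENNReal.tsum_comm]
      rw [ENNReal.tsum_comm]
  have hj : ∀ j : ℕ, (j : ℤ) + 1 ≠ 0 := fun j => by omega
  have hj' : ∀ j : ℕ, -((j : ℤ) + 1) ≠ 0 := fun j => by omega
  have hd0 : ∀ v : Fin 2 → ℝ, v 0 = 0 → h (R⁻¹ • v) * h (R'⁻¹ • v) = 0 := fun v hv => by
    rw [hh.smul_eq_zero hR hv.le, zero_mul]
  simp_rw [hpt]
  rw [lintegral_add_left (measurable_tsum_prim (hm.fun_mul hm') hd0),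
    lintegral_tsum_prim hκ (hm.fun_mul hm') hd0, lintegral_tsum fun j =>
      ((hGm _ (hj j)).fun_add (hGm _ (hj' j))).aemeasurable, pairMoment, ← ENNReal.tsum_mul_left]
  congr 2
  funext j
  rw [lintegral_add_left (hGm _ (hj j)), hG _ (hj j), hG _ (hj' j)]
  have e1 : ((j : ℤ) + 1).natAbs = j + 1 := by omega
  have e2 : (-((j : ℤ) + 1)).natAbs = j + 1 := by omega
  rw [e1, e2]
  push_cast
  ring

end IsWeight

/-! ### A real-variable bootstrapping argument -/

section Bootstrap

lemma summable_inv_succ_sq : Summable fun d : ℕ => (((d : ℝ) + 1) ^ 2)⁻¹ := by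
  have := (summable_nat_add_iff 1).2 (Real.summable_nat_pow_inv.2 (one_lt_two : 1 < 2))
  simpa using this

lemma tsum_inv_succ_sq_le {D : ℕ} (hD : 0 < D) :
    ∑' d : ℕ, (((d : ℝ) + 1) ^ 2)⁻¹ ≤
      ∑ d ∈ Finset.range D, (((d : ℝ) + 1) ^ 2)⁻¹ + (D : ℝ)⁻¹ := by
  have hD' : (0 : ℝ) < D := by exact_mod_cast hD
  have key : ∀ k : ℕ, ∑ d ∈ Finset.range (k + D), (((d : ℝ) + 1) ^ 2)⁻¹ ≤
      ∑ d ∈ Finset.range D, (((d : ℝ) + 1) ^ 2)⁻¹ + (D : ℝ)⁻¹ - ((k : ℝ) + D)⁻¹ := by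
    intro k
    induction k with
    | zero => simp
    | succ k ih =>
      rw [Nat.succ_add, Finset.sum_range_succ]
      have h0 : (0 : ℝ) < k + D := by positivity
      have h1 : (((k : ℝ) + D + 1) ^ 2)⁻¹ ≤ ((k : ℝ) + D)⁻¹ - ((k : ℝ) + D + 1)⁻¹ := by
        rw [inv_sub_inv h0.ne' (by positivity), inv_eq_one_div,
          div_le_div_iff₀ (by positivity) (by positivity)]
        nlinarith
      push_cast
      rw [add_right_comm (k : ℝ) 1]
      linarith
  refine le_of_tendsto ((tendsto_add_atTop_iff_nat D).2
    summable_inv_succ_sq.hasSum.tendsto_sum_nat) (Eventually.of_forall fun k => ?_)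
  refine (key k).trans ?_
  have : (0 : ℝ) ≤ ((k : ℝ) + D)⁻¹ := by positivity
  linarith

lemma sum_inv_add_two_le_log (k : ℕ) :
    ∑ d ∈ Finset.range k, ((d : ℝ) + 2)⁻¹ ≤ Real.log (k + 1) := by
  have h := harmonic_le_one_add_log (k + 1)
  rw [harmonic, Finset.sum_range_succ'] at h
  push_cast at h
  have e : ∀ d : ℕ, (d : ℝ) + 1 + 1 = d + 2 := fun d => by ring
  simp_rw [e] at h
  norm_num at h
  linarith

variable {J : ℝ → ℝ} {m C : ℝ}

/-- Möbius-type inversion: an upper bound for `J` from a bound on its sums over dilates. -/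
lemma exists_le_add_log (hm : 0 ≤ m) (hC : 0 ≤ C)
    (hlow : ∀ ρ, 0 < ρ → m ^ 2 * ρ ^ 2 - m * ρ ≤ J ρ)
    (hsum : ∀ ρ, 0 < ρ → ∀ D : ℕ, ∑ d ∈ Finset.range D, J (ρ / (d + 1)) ≤
      m ^ 2 * (∑' d : ℕ, (((d : ℝ) + 1) ^ 2)⁻¹) * ρ ^ 2 + C * (ρ + 1)) :
    ∃ A, 0 ≤ A ∧ ∀ ρ, 1 ≤ ρ → J ρ ≤ m ^ 2 * ρ ^ 2 + A * ρ * (1 + Real.log ρ) := by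
  refine ⟨m ^ 2 + 2 * C + m, by positivity, fun ρ hρ => ?_⟩
  have hρ0 : 0 < ρ := by linarith
  have hlog : 0 ≤ Real.log ρ := Real.log_nonneg hρ
  obtain ⟨k, hk⟩ : ∃ k, ⌈ρ⌉₊ = k + 1 :=
    Nat.exists_eq_succ_of_ne_zero (Nat.ceil_pos.2 hρ0).ne'
  have hk1 : ρ ≤ (k : ℝ) + 1 := by
    have := Nat.le_ceil ρ
    rw [hk] at this
    exact_mod_cast this
  have hk2 : (k : ℝ) + 1 < ρ + 1 := by
    have := Nat.ceil_lt_add_one hρ0.le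
    rw [hk] at this
    exact_mod_cast this
  have h1 := hsum ρ hρ0 (k + 1)
  rw [Finset.sum_range_succ'] at h1
  have h2 : ∑ d ∈ Finset.range k, (m ^ 2 * ρ ^ 2 * (((d : ℝ) + 2) ^ 2)⁻¹ -
      m * ρ * ((d : ℝ) + 2)⁻¹) ≤ ∑ d ∈ Finset.range k, J (ρ / ((d + 1 : ℕ) + 1)) := by
    refine Finset.sum_le_sum fun d _ => ?_
    have e : ((d + 1 : ℕ) : ℝ) + 1 = d + 2 := by push_cast; ring
    rw [e]
    refine le_trans (le_of_eq ?_) (hlow (ρ / (d + 2)) (by positivity))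
    field_simp
  rw [Finset.sum_sub_distrib, ← Finset.mul_sum, ← Finset.mul_sum] at h2
  have h3 := tsum_inv_succ_sq_le (Nat.succ_pos k)
  rw [Finset.sum_range_succ'] at h3
  have e : ∀ d : ℕ, ((d + 1 : ℕ) : ℝ) + 1 = d + 2 := fun d => by push_cast; ring
  simp_rw [e] at h3
  have h4 : (((k + 1 : ℕ) : ℝ))⁻¹ ≤ ρ⁻¹ := by
    push_cast
    exact inv_anti₀ hρ0 hk1
  have h5 : Real.log (k + 1) ≤ 1 + Real.log ρ := by
    calc Real.log (k + 1) ≤ Real.log (2 * ρ) := Real.log_le_log (by positivity) (by linarith)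
      _ = Real.log 2 + Real.log ρ := Real.log_mul two_ne_zero hρ0.ne'
      _ ≤ _ := by
        have := Real.log_two_lt_d9
        linarith
  have h6 := (sum_inv_add_two_le_log k).trans h5
  simp only [Nat.cast_zero, zero_add, div_one, one_pow, inv_one] at h1 h3
  set S := ∑ d ∈ Finset.range k, (((d : ℝ) + 2) ^ 2)⁻¹
  set T := ∑ d ∈ Finset.range k, ((d : ℝ) + 2)⁻¹
  set Z := ∑' d : ℕ, (((d : ℝ) + 1) ^ 2)⁻¹
  have h7 : m ^ 2 * ρ ^ 2 * (Z - S) ≤ m ^ 2 * ρ ^ 2 * (1 + ρ⁻¹) :=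
    mul_le_mul_of_nonneg_left (by linarith) (by positivity)
  have h8 : m ^ 2 * ρ ^ 2 * (1 + ρ⁻¹) = m ^ 2 * ρ ^ 2 + m ^ 2 * ρ := by
    field_simp
  have h9 : m * ρ * T ≤ m * ρ * (1 + Real.log ρ) :=
    mul_le_mul_of_nonneg_left h6 (by positivity)
  have h10 : C * (ρ + 1) ≤ 2 * C * ρ * (1 + Real.log ρ) := by
    have : C * (ρ + 1) ≤ 2 * C * ρ := by nlinarith
    exact this.trans (le_mul_of_one_le_right (by positivity) (by linarith))
  have h11 : m ^ 2 * ρ ≤ m ^ 2 * ρ * (1 + Real.log ρ) :=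
    le_mul_of_one_le_right (by positivity) (by linarith)
  nlinarith

/-- If the deviation of `J` grows at most logarithmically and is controlled by its own square root
at a larger scale, then it is bounded by a multiple of `m`. -/
lemma le_of_sq_le (hm : 0 < m) {A δ : ℝ} (hA : 0 ≤ A) (hδ : 0 < δ) (hδ1 : δ < 1)
    (hup : ∀ ρ, 1 ≤ ρ → J ρ ≤ m ^ 2 * ρ ^ 2 + A * ρ * (1 + Real.log ρ))
    (hsq : ∀ ρ, 1 ≤ ρ → (J ρ - m ^ 2 * ρ ^ 2) ^ 2 ≤ m * δ ^ 2 *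
      (m * (ρ ^ 2 / δ ^ 2) + J (ρ ^ 2 / δ ^ 2) - m ^ 2 * (ρ ^ 2 / δ ^ 2) ^ 2)) :
    J 1 ≤ m ^ 2 + 3 * m := by
  by_contra! hJ
  have hδ2 : 0 < δ ^ 2 := by positivity
  have hb : 1 < 1 / δ ^ 2 := by
    rw [lt_div_iff₀ hδ2]
    nlinarith
  set b := 1 / δ ^ 2 with hbdef
  have hb0 : 0 < b := by positivity
  have hlb : 0 ≤ Real.log b := Real.log_nonneg hb.le
  have key : ∀ j : ℕ, ∃ ρ, 1 ≤ ρ ∧ Real.log ρ + Real.log b ≤ 2 ^ j * Real.log b ∧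
      3 * (8 / 3) ^ j * m * ρ ≤ J ρ - m ^ 2 * ρ ^ 2 := by
    intro j
    induction j with
    | zero => exact ⟨1, le_rfl, by simp, by norm_num; linarith⟩
    | succ j ih =>
      obtain ⟨ρ, hρ, hl, hV⟩ := ih
      have hρ0 : 0 < ρ := by linarith
      have hσ : ρ ^ 2 / δ ^ 2 = ρ ^ 2 * b := by rw [hbdef]; ring
      refine ⟨ρ ^ 2 * b, ?_, ?_, ?_⟩
      · nlinarith
      · rw [Real.log_mul (by positivity) hb0.ne', Real.log_pow, pow_succ]
        push_cast
        linarith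
      · have h := hsq ρ hρ
        rw [hσ] at h
        set W := J (ρ ^ 2 * b) - m ^ 2 * (ρ ^ 2 * b) ^ 2
        have hx : (1 : ℝ) ≤ (8 / 3) ^ j := one_le_pow₀ (by norm_num)
        set x : ℝ := (8 / 3) ^ j
        have h1 : (3 * x * m * ρ) ^ 2 ≤ m * δ ^ 2 * (m * (ρ ^ 2 * b) + W) := by
          refine (pow_le_pow_left₀ (by positivity) hV 2).trans (h.trans (le_of_eq ?_))
          ring
        have hδb : δ ^ 2 = b⁻¹ := by rw [hbdef]; simp
        rw [hδb] at h1
        have h2 : b * (3 * x * m * ρ) ^ 2 ≤ m * (m * (ρ ^ 2 * b) + W) := by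
          calc b * (3 * x * m * ρ) ^ 2 ≤ b * (m * b⁻¹ * (m * (ρ ^ 2 * b) + W)) :=
                mul_le_mul_of_nonneg_left h1 hb0.le
            _ = _ := by field_simp
        have h3 : m * (b * m * ρ ^ 2 * (9 * x ^ 2 - 1)) ≤ m * W := by nlinarith
        have h4 := le_of_mul_le_mul_left h3 hm
        refine le_trans ?_ h4
        rw [pow_succ]
        have h5 : 8 * x ≤ 9 * x ^ 2 - 1 := by nlinarith
        calc 3 * (x * (8 / 3)) * m * (ρ ^ 2 * b) = b * m * ρ ^ 2 * (8 * x) := by ring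
          _ ≤ _ := mul_le_mul_of_nonneg_left h5 (by positivity)
  obtain ⟨j, hj⟩ := pow_unbounded_of_one_lt (A * (1 + Real.log b) / (3 * m))
    (by norm_num : (1 : ℝ) < 4 / 3)
  obtain ⟨ρ, hρ, hl, hV⟩ := key j
  have hρ0 : 0 < ρ := by linarith
  have h1 := hup ρ hρ
  have h2 : 3 * (8 / 3) ^ j * m * ρ ≤ A * (1 + Real.log ρ) * ρ := by linarith
  have h3 := le_of_mul_le_mul_right h2 hρ0
  have h2j : (1 : ℝ) ≤ 2 ^ j := one_le_pow₀ (by norm_num)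
  have h4 : A * (1 + Real.log ρ) ≤ A * ((1 + Real.log b) * 2 ^ j) :=
    mul_le_mul_of_nonneg_left (by nlinarith) hA
  have e : (8 / 3 : ℝ) ^ j = (4 / 3) ^ j * 2 ^ j := by
    rw [← mul_pow]; norm_num
  rw [e] at h3
  rw [div_lt_iff₀ (by positivity)] at hj
  have h5 : A * (1 + Real.log b) * 2 ^ j < (4 / 3) ^ j * (3 * m) * 2 ^ j :=
    mul_lt_mul_of_pos_right hj (by positivity)
  linarith

end Bootstrap

/-! ### Cauchy–Schwarz for covariances -/

section Covariance

variable {Ω : Type*} [MeasurableSpace Ω] {μ : Measure Ω}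

lemma sq_integral_mul_sub_le [IsProbabilityMeasure μ] {X Y : Ω → ℝ} (hX : MemLp X 2 μ)
    (hY : MemLp Y 2 μ) :
    (∫ ω, X ω * Y ω ∂μ - (∫ ω, X ω ∂μ) * ∫ ω, Y ω ∂μ) ^ 2 ≤
      (∫ ω, X ω * X ω ∂μ - (∫ ω, X ω ∂μ) ^ 2) * (∫ ω, Y ω * Y ω ∂μ - (∫ ω, Y ω ∂μ) ^ 2) := by
  have hXX : Integrable (fun ω => X ω * X ω) μ := hX.integrable_mul hX
  have hXY : Integrable (fun ω => X ω * Y ω) μ := hX.integrable_mul hY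
  have hYY : Integrable (fun ω => Y ω * Y ω) μ := hY.integrable_mul hY
  have hX1 : Integrable X μ := hX.integrable one_le_two
  have hY1 : Integrable Y μ := hY.integrable one_le_two
  have key : ∀ t : ℝ, 0 ≤ (∫ ω, Y ω * Y ω ∂μ - (∫ ω, Y ω ∂μ) ^ 2) * (t * t) +
      (2 * (∫ ω, X ω * Y ω ∂μ - (∫ ω, X ω ∂μ) * ∫ ω, Y ω ∂μ)) * t +
      (∫ ω, X ω * X ω ∂μ - (∫ ω, X ω ∂μ) ^ 2) := by
    intro t
    have h := ProbabilityTheory.variance_nonneg (X + t • Y) μ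
    rw [ProbabilityTheory.variance_eq_sub (hX.add (hY.const_smul t))] at h
    have e1 : ∫ ω, (X + t • Y) ω ∂μ = ∫ ω, X ω ∂μ + t * ∫ ω, Y ω ∂μ := by
      simp only [Pi.add_apply, Pi.smul_apply, smul_eq_mul]
      rw [integral_add hX1 (hY1.const_mul t), integral_const_mul]
    have e2 : ∫ ω, ((X + t • Y) ^ 2) ω ∂μ = ∫ ω, X ω * X ω ∂μ + (2 * t) * ∫ ω, X ω * Y ω ∂μ +
        t ^ 2 * ∫ ω, Y ω * Y ω ∂μ := by
      have e3 : ∀ ω, ((X + t • Y) ^ 2) ω =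
          X ω * X ω + (2 * t) * (X ω * Y ω) + t ^ 2 * (Y ω * Y ω) := fun ω => by
        simp only [Pi.pow_apply, Pi.add_apply, Pi.smul_apply, smul_eq_mul]
        ring
      simp_rw [e3]
      rw [integral_add (hXX.fun_add (hXY.const_mul _)) (hYY.const_mul _),
        integral_add hXX (hXY.const_mul _), integral_const_mul, integral_const_mul]
    rw [e1, e2] at h
    linarith
  have h := discrim_le_zero key
  rw [discrim] at h
  linarith

variable {f g : Ω → ℝ≥0∞}

lemma memLp_toReal (hf : Measurable f) (hf2 : ∫⁻ ω, f ω * f ω ∂μ ≠ ∞) :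
    MemLp (fun ω => (f ω).toReal) 2 μ := by
  rw [memLp_two_iff_integrable_sq hf.ennreal_toReal.aestronglyMeasurable]
  have h := integrable_toReal_of_lintegral_ne_top (hf.fun_mul hf).aemeasurable hf2
  refine h.congr (Eventually.of_forall fun ω => ?_)
  simp only [toReal_mul, sq]

lemma ae_lt_top_of_sq (hf : Measurable f) (hf2 : ∫⁻ ω, f ω * f ω ∂μ ≠ ∞) : ∀ᵐ ω ∂μ, f ω < ∞ := by
  filter_upwards [ae_lt_top (hf.fun_mul hf) hf2] with ω hω
  by_contra h
  rw [not_lt, top_le_iff] at h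
  simp [h] at hω

lemma integral_toReal_mul (hf : Measurable f) (hg : Measurable g)
    (hf2 : ∫⁻ ω, f ω * f ω ∂μ ≠ ∞) (hg2 : ∫⁻ ω, g ω * g ω ∂μ ≠ ∞) :
    ∫ ω, (f ω).toReal * (g ω).toReal ∂μ = (∫⁻ ω, f ω * g ω ∂μ).toReal := by
  rw [← integral_toReal (hf.fun_mul hg).aemeasurable]
  · simp_rw [toReal_mul]
  · filter_upwards [ae_lt_top_of_sq hf hf2, ae_lt_top_of_sq hg hg2] with ω h1 h2
    exact ENNReal.mul_lt_top h1 h2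

lemma sq_toReal_lintegral_mul_sub_le [IsProbabilityMeasure μ] (hf : Measurable f)
    (hg : Measurable g) (hf2 : ∫⁻ ω, f ω * f ω ∂μ ≠ ∞) (hg2 : ∫⁻ ω, g ω * g ω ∂μ ≠ ∞) :
    ((∫⁻ ω, f ω * g ω ∂μ).toReal - (∫⁻ ω, f ω ∂μ).toReal * (∫⁻ ω, g ω ∂μ).toReal) ^ 2 ≤
      ((∫⁻ ω, f ω * f ω ∂μ).toReal - (∫⁻ ω, f ω ∂μ).toReal ^ 2) *
      ((∫⁻ ω, g ω * g ω ∂μ).toReal - (∫⁻ ω, g ω ∂μ).toReal ^ 2) := by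
  rw [← integral_toReal_mul hf hg hf2 hg2, ← integral_toReal_mul hf hf hf2 hf2,
    ← integral_toReal_mul hg hg hg2 hg2, ← integral_toReal hf.aemeasurable (ae_lt_top_of_sq hf hf2),
    ← integral_toReal hg.aemeasurable (ae_lt_top_of_sq hg hg2)]
  exact sq_integral_mul_sub_le (memLp_toReal hf hf2) (memLp_toReal hg hg2)

lemma sq_toReal_lintegral_le [IsProbabilityMeasure μ] (hf : Measurable f)
    (hf2 : ∫⁻ ω, f ω * f ω ∂μ ≠ ∞) :
    (∫⁻ ω, f ω ∂μ).toReal ^ 2 ≤ (∫⁻ ω, f ω * f ω ∂μ).toReal := by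
  have h := ProbabilityTheory.variance_nonneg (fun ω => (f ω).toReal) μ
  rw [ProbabilityTheory.variance_eq_sub (memLp_toReal hf hf2),
    integral_toReal hf.aemeasurable (ae_lt_top_of_sq hf hf2)] at h
  have e : ∫ ω, ((fun ω => (f ω).toReal) ^ 2) ω ∂μ = ∫ ω, (f ω).toReal * (f ω).toReal ∂μ := by
    simp [sq]
  rw [e, integral_toReal_mul hf hf hf2 hf2] at h
  linarith

end Covariance

/-! ### Summation of the off-diagonal moments over dilates -/

lemma tsum_totient_mul (W : ℕ → ℝ≥0∞) :
    ∑' d : ℕ, ∑' j : ℕ, ((j + 1).totient : ℝ≥0∞) * W ((j + 1) * (d + 1)) =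
      ∑' k : ℕ, ((k + 1 : ℕ) : ℝ≥0∞) * W (k + 1) := by
  have h1 : ∀ d j : ℕ, ((j + 1).totient : ℝ≥0∞) * W ((j + 1) * (d + 1)) =
      ∑' k : ℕ, if k + 1 = (j + 1) * (d + 1) then ((j + 1).totient : ℝ≥0∞) * W (k + 1) else 0 := by
    intro d j
    rw [tsum_eq_single ((j + 1) * (d + 1) - 1)]
    · have : (j + 1) * (d + 1) - 1 + 1 = (j + 1) * (d + 1) :=
        Nat.sub_add_cancel (Nat.mul_pos (Nat.succ_pos _) (Nat.succ_pos _))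
      rw [this, if_pos rfl]
    · intro k hk
      refine if_neg fun h => hk ?_
      rw [← h, Nat.add_sub_cancel]
  simp_rw [h1]
  rw [ENNReal.tsum_comm]
  simp_rw [ENNReal.tsum_comm (α := ℕ) (β := ℕ)
    (f := fun d k => if k + 1 = _ * (d + 1) then _ else _)]
  rw [ENNReal.tsum_comm]
  refine tsum_congr fun k => ?_
  have h2 : ∀ j : ℕ, (∑' d : ℕ, if k + 1 = (j + 1) * (d + 1) then
      ((j + 1).totient : ℝ≥0∞) * W (k + 1) else 0) =
      (if (j + 1) ∣ (k + 1) then ((j + 1).totient : ℝ≥0∞) else 0) * W (k + 1) := by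
    intro j
    by_cases hj : (j + 1) ∣ (k + 1)
    · obtain ⟨e, he⟩ := hj
      obtain ⟨d, rfl⟩ : ∃ d, e = d + 1 := Nat.exists_eq_succ_of_ne_zero (by
        rintro rfl
        simp at he)
      rw [tsum_eq_single d, if_pos he, if_pos ⟨_, he⟩]
      intro d' hd'
      refine if_neg fun h => hd' ?_
      rw [he] at h
      have := Nat.eq_of_mul_eq_mul_left (Nat.succ_pos j) h
      omega
    · rw [if_neg hj, zero_mul]
      refine ENNReal.tsum_eq_zero.2 fun d => if_neg fun h => hj ⟨_, h⟩
  simp_rw [h2]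
  rw [ENNReal.tsum_mul_right]
  congr 1
  rw [tsum_eq_sum (s := Finset.range (k + 1))]
  · have h := Nat.sum_totient' (k + 1)
    rw [Finset.sum_filter, Finset.sum_range_succ'] at h
    conv_rhs => rw [← h]
    push_cast
    simp
  · intro j hj
    refine if_neg fun h => hj (Finset.mem_range.2 ?_)
    have := Nat.le_of_dvd (Nat.succ_pos k) h
    omega

lemma tsum_nat_add_neg_le (F : ℤ → ℝ≥0∞) :
    ∑' k : ℕ, (F ((k : ℤ) + 1) + F (-((k : ℤ) + 1))) ≤ ∑' k : ℤ, F k := by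
  let e : ℕ ⊕ ℕ → ℤ := Sum.elim (fun k => (k : ℤ) + 1) fun k => -((k : ℤ) + 1)
  have he : Function.Injective e := by
    rintro (a | a) (b | b) h <;> simp only [e, Sum.elim_inl, Sum.elim_inr] at h
    · congr 1; omega
    · omega
    · omega
    · congr 1; omega
  refine le_trans (le_of_eq ?_) (ENNReal.tsum_comp_le_tsum_of_injective he F)
  rw [ENNReal.tsum_add, ENNReal.summable.tsum_sum ENNReal.summable]
  rfl

namespace IsWeight

variable {h : (Fin 2 → ℝ) → ℝ≥0∞} {a B L : ℝ} {μ : Measure (LatticeSpace 2)} {κ : ℝ≥0∞}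

lemma exists_tsum_pairMoment_le (hh : IsWeight h a B L) (κ : ℝ≥0∞) :
    ∃ C : ℝ, 0 ≤ C ∧ ∀ ρ : ℝ, 0 < ρ → ∑' d : ℕ, pairMoment κ h (ρ / ((d : ℝ) + 1)) ≤
      κ * (ENNReal.ofReal (ρ ^ 2) * (∫⁻ v, h v) ^ 2 + ENNReal.ofReal (C * (ρ + 1))) := by
  obtain ⟨C, hC, hle⟩ := hh.exists_tsum_corr_le
  refine ⟨C, hC, fun ρ hρ => ?_⟩
  let W : ℕ → ℝ≥0∞ := fun k => (k : ℝ≥0∞)⁻¹ * (corr h ((k : ℝ) / ρ) + corr h (-(k : ℝ) / ρ))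
  have h1 : ∀ d : ℕ, pairMoment κ h (ρ / ((d : ℝ) + 1)) = ENNReal.ofReal ρ * κ *
      ∑' j : ℕ, ((j + 1).totient : ℝ≥0∞) * W ((j + 1) * (d + 1)) := by
    intro d
    have e : ENNReal.ofReal (ρ / ((d : ℝ) + 1)) =
        ENNReal.ofReal ρ * ((d + 1 : ℕ) : ℝ≥0∞)⁻¹ := by
      rw [div_eq_mul_inv, ENNReal.ofReal_mul hρ.le, ENNReal.ofReal_inv_of_pos (by positivity)]
      congr 2
      rw [← Nat.cast_succ, ENNReal.ofReal_natCast]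
    rw [pairMoment, e, mul_right_comm _ _ κ, mul_assoc, ← ENNReal.tsum_mul_left]
    congr 1
    refine tsum_congr fun j => ?_
    simp only [W]
    rw [Nat.cast_mul, ENNReal.mul_inv (Or.inr (ENNReal.natCast_ne_top _))
      (Or.inl (ENNReal.natCast_ne_top _)), div_eq_mul_inv]
    have e1 : ((j : ℝ) + 1) / (ρ / ((d : ℝ) + 1)) =
        (((j + 1) * (d + 1) : ℕ) : ℝ) / ρ := by
      push_cast; field_simp
    have e2 : -((j : ℝ) + 1) / (ρ / ((d : ℝ) + 1)) =
        -(((j + 1) * (d + 1) : ℕ) : ℝ) / ρ := by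
      push_cast; field_simp
    rw [e1, e2]
    ring
  have h2 : ∀ k : ℕ, ((k + 1 : ℕ) : ℝ≥0∞) * W (k + 1) =
      corr h ((((k : ℤ) + 1 : ℤ) : ℝ) / ρ) + corr h (((-((k : ℤ) + 1) : ℤ) : ℝ) / ρ) := by
    intro k
    simp only [W]
    rw [← mul_assoc, ENNReal.mul_inv_cancel (by simp) (ENNReal.natCast_ne_top _), one_mul]
    push_cast
    rfl
  simp_rw [h1]
  rw [ENNReal.tsum_mul_left, tsum_totient_mul]
  simp_rw [h2]
  calc _ ≤ ENNReal.ofReal ρ * κ * ∑' k : ℤ, corr h (k / ρ) := by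
        gcongr
        exact tsum_nat_add_neg_le fun k : ℤ => corr h (k / ρ)
    _ = κ * (ENNReal.ofReal ρ * ∑' k : ℤ, corr h (k / ρ)) := by ring
    _ ≤ _ := by
        gcongr
        exact hle ρ hρ

lemma lintegral_ne_top (hh : IsWeight h a B L) : ∫⁻ v, h v ≠ ∞ := by
  have h1 : ∀ v, h v ≤ (Metric.closedBall (0 : Fin 2 → ℝ) B).indicator 1 v := fun v => by
    by_cases hv : h v = 0
    · rw [hv]; exact zero_le
    · rw [Set.indicator_of_mem (mem_closedBall_zero_iff.2 (hh.norm_le v hv))]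
      exact hh.le_one v
  refine ne_top_of_le_ne_top ?_ (lintegral_mono h1)
  rw [lintegral_indicator_one Metric.isClosed_closedBall.measurableSet]
  exact (isCompact_closedBall _ _).measure_lt_top.ne

lemma pairMoment_ne_top (hh : IsWeight h a B L) (hκ : κ ≠ ∞) {ρ : ℝ} (hρ : 0 < ρ) :
    pairMoment κ h ρ ≠ ∞ := by
  obtain ⟨C, hC, hle⟩ := hh.exists_tsum_pairMoment_le κ
  have h1 := (ENNReal.le_tsum 0).trans (hle ρ hρ)
  simp only [Nat.cast_zero, zero_add, div_one] at h1
  refine ne_top_of_le_ne_top ?_ h1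
  exact ENNReal.mul_ne_top hκ (ENNReal.add_ne_top.2
    ⟨ENNReal.mul_ne_top ofReal_ne_top (ENNReal.pow_ne_top hh.lintegral_ne_top), ofReal_ne_top⟩)

lemma lintegral_primSum_sq_le (hh : IsWeight h a B L) (hκ : IsOrbitConstant μ κ) {R : ℝ}
    (hR : 0 < R) : ∫⁻ x, primSum h R x * primSum h R x ∂μ ≤
      ENNReal.ofReal (R ^ 2) * (κ * ∫⁻ v, h v) + pairMoment κ h (R ^ 2) := by
  rw [hh.lintegral_primSum_mul hκ hR hR, ← sq]
  refine add_le_add (le_trans (mul_le_mul_right (lintegral_mono fun v =>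
    mul_le_of_le_one_right' (hh.le_one _)) κ) (le_of_eq ?_)) le_rfl
  rw [lintegral_comp_smul_plane hh.measurable (inv_pos.2 hR), inv_pow,
    ENNReal.ofReal_inv_of_pos (by positivity), inv_inv]
  ring

lemma lintegral_primSum_sq_ne_top (hh : IsWeight h a B L) (hκ : IsOrbitConstant μ κ) (hκt : κ ≠ ∞)
    {R : ℝ} (hR : 0 < R) : ∫⁻ x, primSum h R x * primSum h R x ∂μ ≠ ∞ :=
  ne_top_of_le_ne_top (ENNReal.add_ne_top.2 ⟨ENNReal.mul_ne_top ofReal_ne_top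
    (ENNReal.mul_ne_top hκt hh.lintegral_ne_top), hh.pairMoment_ne_top hκt (by positivity)⟩)
    (hh.lintegral_primSum_sq_le hκ hR)

lemma toReal_lintegral_primSum (hh : IsWeight h a B L) (hκ : IsOrbitConstant μ κ) {R : ℝ}
    (hR : 0 < R) : (∫⁻ x, primSum h R x ∂μ).toReal = R ^ 2 * (κ * ∫⁻ v, h v).toReal := by
  rw [hh.lintegral_primSum hκ hR, toReal_mul, toReal_ofReal (by positivity)]

lemma toReal_lintegral_primSum_sq_le (hh : IsWeight h a B L) (hκ : IsOrbitConstant μ κ)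
    (hκt : κ ≠ ∞) {R : ℝ} (hR : 0 < R) :
    (∫⁻ x, primSum h R x * primSum h R x ∂μ).toReal ≤
      (κ * ∫⁻ v, h v).toReal * R ^ 2 + (pairMoment κ h (R ^ 2)).toReal := by
  have h1 : ENNReal.ofReal (R ^ 2) * (κ * ∫⁻ v, h v) ≠ ∞ :=
    ENNReal.mul_ne_top ofReal_ne_top (ENNReal.mul_ne_top hκt hh.lintegral_ne_top)
  have h2 : pairMoment κ h (R ^ 2) ≠ ∞ := hh.pairMoment_ne_top hκt (by positivity)
  refine (ENNReal.toReal_mono (ENNReal.add_ne_top.2 ⟨h1, h2⟩)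
    (hh.lintegral_primSum_sq_le hκ hR)).trans (le_of_eq ?_)
  rw [toReal_add h1 h2, toReal_mul, toReal_ofReal (by positivity), mul_comm]

lemma pairMoment_eq_zero (hh : IsWeight h a B L) {ρ : ℝ} (hρ : 0 < ρ) (h1 : 2 * B ^ 2 * ρ < 1) :
    pairMoment κ h ρ = 0 := by
  rw [pairMoment]
  refine mul_eq_zero_of_right _ (ENNReal.tsum_eq_zero.2 fun j => ?_)
  have h2 : 2 * B ^ 2 < ((j : ℝ) + 1) / ρ := by
    rw [lt_div_iff₀ hρ]
    have : (0 : ℝ) ≤ j := Nat.cast_nonneg j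
    linarith
  have h3 : |((j : ℝ) + 1) / ρ| = ((j : ℝ) + 1) / ρ := abs_of_pos (by positivity)
  rw [hh.corr_eq_zero (t := ((j : ℝ) + 1) / ρ) (by rwa [h3]), neg_div,
    hh.corr_eq_zero (by rwa [abs_neg, h3]), add_zero, mul_zero]

variable [IsProbabilityMeasure μ]

lemma le_toReal_pairMoment (hh : IsWeight h a B L) (hκ : IsOrbitConstant μ κ) (hκt : κ ≠ ∞)
    {ρ : ℝ} (hρ : 0 < ρ) :
    (κ * ∫⁻ v, h v).toReal ^ 2 * ρ ^ 2 - (κ * ∫⁻ v, h v).toReal * ρ ≤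
      (pairMoment κ h ρ).toReal := by
  have hR : 0 < √ρ := Real.sqrt_pos.2 hρ
  have h1 := sq_toReal_lintegral_le (hh.measurable_primSum hR)
    (hh.lintegral_primSum_sq_ne_top hκ hκt hR)
  have h2 := hh.toReal_lintegral_primSum_sq_le hκ hκt hR
  rw [hh.toReal_lintegral_primSum hκ hR] at h1
  rw [Real.sq_sqrt hρ.le] at h1 h2
  linarith [mul_pow ρ (κ * ∫⁻ v, h v).toReal 2]

lemma sum_toReal_pairMoment_le (hh : IsWeight h a B L) (hκ : IsOrbitConstant μ κ) (hκt : κ ≠ ∞)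
    (hμ : ∀ (g : SLR 2) (s : Set (LatticeSpace 2)), μ ((fun x => g • x) ⁻¹' s) = μ s) :
    ∃ C : ℝ, 0 ≤ C ∧ ∀ ρ : ℝ, 0 < ρ → ∀ D : ℕ,
      ∑ d ∈ Finset.range D, (pairMoment κ h (ρ / ((d : ℝ) + 1))).toReal ≤
      (κ * ∫⁻ v, h v).toReal ^ 2 * (∑' d : ℕ, (((d : ℝ) + 1) ^ 2)⁻¹) * ρ ^ 2 + C * (ρ + 1) := by
  obtain ⟨C, hC, hle⟩ := hh.exists_tsum_pairMoment_le κ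
  have hI := hh.lintegral_ne_top
  have hZ : κ.toReal * ∑' d : ℕ, (((d : ℝ) + 1) ^ 2)⁻¹ = 1 := by
    have h1 := congrArg ENNReal.toReal (orbitConstant_mul_tsum hκ hμ)
    rw [toReal_mul, toReal_one, ENNReal.tsum_toReal_eq] at h1
    · refine Eq.trans ?_ h1
      congr 2
      funext d
      rw [toReal_inv, toReal_ofReal (by positivity)]
    · intro d
      rw [ENNReal.inv_ne_top]
      simpa using by positivity
  refine ⟨κ.toReal * C, by positivity, fun ρ hρ D => ?_⟩
  have hfin : ENNReal.ofReal (ρ ^ 2) * (∫⁻ v, h v) ^ 2 ≠ ∞ :=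
    ENNReal.mul_ne_top ofReal_ne_top (ENNReal.pow_ne_top hI)
  rw [← toReal_sum fun d _ => hh.pairMoment_ne_top hκt (by positivity)]
  refine (ENNReal.toReal_mono (ENNReal.mul_ne_top hκt (ENNReal.add_ne_top.2
    ⟨hfin, ofReal_ne_top⟩)) ((ENNReal.sum_le_tsum _).trans (hle ρ hρ))).trans (le_of_eq ?_)
  rw [toReal_mul, toReal_add hfin ofReal_ne_top, toReal_mul, toReal_mul, toReal_pow,
    toReal_ofReal (by positivity), toReal_ofReal (by positivity)]
  linear_combination (-κ.toReal * (∫⁻ v, h v).toReal ^ 2 * ρ ^ 2) * hZ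

lemma sq_toReal_pairMoment_sub_le (hh : IsWeight h a B L) (hκ : IsOrbitConstant μ κ) (hκt : κ ≠ ∞)
    {δ : ℝ} (hδ : 0 < δ) (h1 : B * δ ^ 2 < a) (h2 : 2 * B ^ 2 * δ ^ 2 < 1) {ρ : ℝ} (hρ : 1 ≤ ρ) :
    ((pairMoment κ h ρ).toReal - (κ * ∫⁻ v, h v).toReal ^ 2 * ρ ^ 2) ^ 2 ≤
      (κ * ∫⁻ v, h v).toReal * δ ^ 2 * ((κ * ∫⁻ v, h v).toReal * (ρ ^ 2 / δ ^ 2) +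
        (pairMoment κ h (ρ ^ 2 / δ ^ 2)).toReal -
        (κ * ∫⁻ v, h v).toReal ^ 2 * (ρ ^ 2 / δ ^ 2) ^ 2) := by
  have hρ0 : 0 < ρ := by linarith
  have hR : 0 < ρ / δ := by positivity
  have hdisj : ∫⁻ v, h (δ⁻¹ • v) * h ((ρ / δ)⁻¹ • v) = 0 := by
    refine (lintegral_congr fun v => ?_).trans lintegral_zero
    by_contra h0
    obtain ⟨h3, h4⟩ := mul_ne_zero_iff.1 h0
    have h5 : δ⁻¹ * v 0 ≤ B :=
      (le_abs_self _).trans ((norm_le_pi_norm (δ⁻¹ • v) 0).trans (hh.norm_le _ h3))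
    have h6 : a ≤ (ρ / δ)⁻¹ * v 0 := hh.le_apply_zero _ h4
    rw [inv_mul_le_iff₀ hδ] at h5
    rw [inv_div, div_mul_eq_mul_div, le_div_iff₀ hρ0] at h6
    nlinarith [hh.pos_a]
  have hδρ : δ * (ρ / δ) = ρ := by field_simp
  have hf2 := hh.lintegral_primSum_sq_ne_top hκ hκt hδ
  have hg2 := hh.lintegral_primSum_sq_ne_top hκ hκt hR
  have hcs := sq_toReal_lintegral_mul_sub_le (hh.measurable_primSum hδ)
    (hh.measurable_primSum hR) hf2 hg2
  have hg0 := sq_toReal_lintegral_le (hh.measurable_primSum hR) hg2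
  have hf1 := hh.toReal_lintegral_primSum_sq_le hκ hκt hδ
  have hg1 := hh.toReal_lintegral_primSum_sq_le hκ hκt hR
  rw [hh.lintegral_primSum_mul hκ hδ hR, hdisj, mul_zero, zero_add, hδρ,
    hh.toReal_lintegral_primSum hκ hδ, hh.toReal_lintegral_primSum hκ hR] at hcs
  rw [hh.toReal_lintegral_primSum hκ hR] at hg0
  rw [hh.pairMoment_eq_zero (by positivity) h2, toReal_zero, add_zero] at hf1
  rw [← div_pow]
  set m := (κ * ∫⁻ v, h v).toReal
  have e1 : δ ^ 2 * m * ((ρ / δ) ^ 2 * m) = m ^ 2 * ρ ^ 2 := by field_simp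
  rw [e1] at hcs
  refine hcs.trans (mul_le_mul ?_ ?_ (sub_nonneg.2 hg0) (by positivity))
  · linarith [sq_nonneg (δ ^ 2 * m)]
  · linarith [mul_pow ((ρ / δ) ^ 2) m 2]

/-- Bound for the probability that a random lattice has no primitive vector in the support of a
weight. -/
lemma measure_primSum_eq_zero_mul_le (hh : IsWeight h a B L) (hκ : IsOrbitConstant μ κ)
    (hκt : κ ≠ ∞)
    (hμ : ∀ (g : SLR 2) (s : Set (LatticeSpace 2)), μ ((fun x => g • x) ⁻¹' s) = μ s) :
    μ {x | primSum h 1 x = 0} * (κ * ∫⁻ v, h v) ≤ 4 := by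
  have hIt : κ * ∫⁻ v, h v ≠ ∞ := ENNReal.mul_ne_top hκt hh.lintegral_ne_top
  by_cases h0 : κ * ∫⁻ v, h v = 0
  · rw [h0, mul_zero]; exact zero_le
  have hm : 0 < (κ * ∫⁻ v, h v).toReal := ENNReal.toReal_pos h0 hIt
  have ha := hh.pos_a
  have hB := hh.pos_B
  obtain ⟨δ, hδ0, hδ⟩ : ∃ δ, 0 < δ ∧ δ < min 1 (min (a / B) (1 / (2 * B ^ 2))) :=
    exists_between (by positivity)
  have hδ1 : δ < 1 := hδ.trans_le (min_le_left _ _)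
  have hδ2 : δ ^ 2 ≤ δ := by nlinarith
  have hδa : B * δ ^ 2 < a := by
    have := (lt_div_iff₀ hB).1 (hδ.trans_le ((min_le_right _ _).trans (min_le_left _ _)))
    nlinarith
  have hδB : 2 * B ^ 2 * δ ^ 2 < 1 := by
    have := (lt_div_iff₀ (by positivity)).1
      (hδ.trans_le ((min_le_right _ _).trans (min_le_right _ _)))
    nlinarith [sq_nonneg B]
  obtain ⟨C, hC, hsum⟩ := hh.sum_toReal_pairMoment_le hκ hκt hμ
  obtain ⟨A, hA, hup⟩ := exists_le_add_log hm.le hC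
    (fun ρ hρ => hh.le_toReal_pairMoment hκ hκt hρ) hsum
  have hfin := le_of_sq_le hm hA hδ0 hδ1 hup
    fun ρ hρ => hh.sq_toReal_pairMoment_sub_le hκ hκt hδ0 hδa hδB hρ
  have h1 := hh.lintegral_primSum_sq_le hκ one_pos
  have h2 := hh.lintegral_primSum hκ one_pos
  rw [one_pow, ENNReal.ofReal_one, one_mul] at h1 h2
  refine measure_eq_zero_mul_le (hh.measurable_primSum one_pos) h0 hIt h2 ?_
  simp_rw [sq (primSum h 1 _)]
  have h3 : pairMoment κ h 1 ≤ (κ * ∫⁻ v, h v) ^ 2 + 3 * (κ * ∫⁻ v, h v) := by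
    rw [← ENNReal.ofReal_toReal hIt, ← ENNReal.ofReal_toReal
      (hh.pairMoment_ne_top hκt one_pos), ← ENNReal.ofReal_pow hm.le,
      ← ENNReal.ofReal_ofNat, ← ENNReal.ofReal_mul (by norm_num),
      ← ENNReal.ofReal_add (by positivity) (by positivity)]
    exact ENNReal.ofReal_le_ofReal hfin
  refine h1.trans ((add_le_add le_rfl h3).trans (le_of_eq ?_))
  ring

end IsWeight

/-! ### Conclusion -/

/-- A compact subset of the right half plane is nearly the support of a weight. -/
lemma exists_isWeight {K : Set (Fin 2 → ℝ)} (hK : IsCompact K) (hne : K.Nonempty)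
    (hpos : ∀ v ∈ K, 0 < v 0) {ε : ℝ≥0∞} (hε : ε ≠ 0) :
    ∃ h a B L, IsWeight h a B L ∧ (∀ v ∈ K, h v = 1) ∧ volume ({v | h v ≠ 0} \ K) ≤ ε := by
  obtain ⟨w, hwK, hw⟩ := hK.exists_isMinOn hne (continuous_apply (0 : Fin 2)).continuousOn
  have ha := hpos w hwK
  obtain ⟨B, hB⟩ := hK.isBounded.exists_norm_le
  have hB0 : 0 ≤ B := (norm_nonneg w).trans (hB w hwK)
  have hlim : ∀ᶠ r in 𝓝 (0 : ℝ), volume (Metric.cthickening r K) ≤ volume K + ε :=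
    (tendsto_measure_cthickening_of_isCompact hK).eventually_le_const
      (ENNReal.lt_add_right hK.measure_lt_top.ne hε)
  obtain ⟨η, hη0, hη⟩ := Metric.eventually_nhds_iff.1 hlim
  obtain ⟨δ, hδ0, hδ⟩ : ∃ δ, 0 < δ ∧ δ < min η (w 0 / 2) := exists_between (by positivity)
  have hδ' : ENNReal.ofReal δ ≠ 0 := by simpa using hδ0
  have hsub : ∀ v, thickenedIndicatorAux δ K v ≠ 0 → v ∈ Metric.thickening δ K := fun v hv => by
    by_contra h0
    exact hv (thickenedIndicatorAux_zero hδ0 K h0)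
  refine ⟨thickenedIndicatorAux δ K, w 0 / 2, B + δ, δ⁻¹, ⟨by positivity, by positivity,
    by positivity, (continuous_thickenedIndicatorAux hδ0 K).measurable,
    thickenedIndicatorAux_le_one δ K, fun v hv => ?_, fun v hv => ?_, fun v u => ?_⟩,
    fun v hv => thickenedIndicatorAux_one δ K hv, ?_⟩
  · obtain ⟨u, huK, hu⟩ := Metric.mem_thickening_iff.1 (hsub v hv)
    have h1 : w 0 ≤ u 0 := hw huK
    have h2 := (dist_le_pi_dist v u 0).trans_lt hu
    rw [Real.dist_eq] at h2
    have h3 := hδ.trans_le (min_le_right _ _)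
    linarith [(abs_lt.1 h2).1]
  · obtain ⟨u, huK, hu⟩ := Metric.mem_thickening_iff.1 (hsub v hv)
    have h1 := norm_le_norm_add_norm_sub' v u
    rw [← dist_eq_norm] at h1
    linarith [hB u huK]
  · have h1 : Metric.infEDist u K ≤ Metric.infEDist v K + edist v u := by
      rw [edist_comm]
      exact Metric.infEDist_le_infEDist_add_edist
    have h2 : ENNReal.ofReal (δ⁻¹ * dist v u) = edist v u / ENNReal.ofReal δ := by
      rw [edist_dist, ← ENNReal.ofReal_div_of_pos hδ0, div_eq_inv_mul]
    rw [h2, thickenedIndicatorAux, tsub_le_iff_right]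
    calc (1 : ℝ≥0∞) ≤ thickenedIndicatorAux δ K u + Metric.infEDist u K / ENNReal.ofReal δ :=
          le_tsub_add
      _ ≤ thickenedIndicatorAux δ K u +
          (Metric.infEDist v K + edist v u) / ENNReal.ofReal δ := by gcongr
      _ = _ := by rw [ENNReal.add_div]; ring
  · refine (measure_mono (Set.sdiff_subset_sdiff_left fun v hv =>
      Metric.thickening_subset_cthickening δ K (hsub v hv))).trans ?_
    rw [measure_sdiff_le_iff_le_add hK.measurableSet.nullMeasurableSet
      (Metric.self_subset_cthickening K) hK.measure_lt_top.ne]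
    refine hη ?_
    rw [dist_zero_right, Real.norm_of_nonneg hδ0.le]
    exact hδ.trans_le (min_le_left _ _)

lemma measure_hit_le {n : ℕ} (hn : 2 ≤ n) {μ : Measure (LatticeSpace n)} [IsProbabilityMeasure μ]
    (hμ : ∀ (g : SLR n) (s : Set (LatticeSpace n)), μ ((fun x => g • x) ⁻¹' s) = μ s)
    {U : Set (Fin n → ℝ)} (hU : MeasurableSet U) (hU0 : (0 : Fin n → ℝ) ∉ U) :
    μ {x | ∃ m, vecOf n x.out m ∈ U} ≤ volume U := by
  rw [← lintegral_indicator_one hU, ← lintegral_tsum_vecOf hn hμ (measurable_one.indicator hU)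
    (Set.indicator_of_notMem hU0 _)]
  refine le_trans (measure_mono ?_) ((one_mul _).symm.le.trans (mul_meas_ge_le_lintegral
    (measurable_tsum_vecOf n (measurable_one.indicator hU)) 1))
  rintro x ⟨m, hm⟩
  refine le_trans ?_ (ENNReal.le_tsum m)
  rw [Set.indicator_of_mem hm, Pi.one_apply]

/-- A planar compact set of large area meets most lattices. -/
lemma measure_miss_plane_mul_le {μ : Measure (LatticeSpace 2)} [IsProbabilityMeasure μ]
    {κ : ℝ≥0∞} (hκ : IsOrbitConstant μ κ) (hκt : κ ≠ ∞)
    (hμ : ∀ (g : SLR 2) (s : Set (LatticeSpace 2)), μ ((fun x => g • x) ⁻¹' s) = μ s)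
    {K : Set (Fin 2 → ℝ)} (hK : IsCompact K) (hpos : ∀ v ∈ K, 0 < v 0) :
    μ {x | ∀ m, vecOf 2 x.out m ∉ K} * (κ * volume K) ≤ 5 := by
  rcases K.eq_empty_or_nonempty with rfl | hne
  · simp
  have hfin : κ * volume K ≠ ∞ := ENNReal.mul_ne_top hκt hK.measure_lt_top.ne
  obtain ⟨h, a, B, L, hh, h1, hvol⟩ := exists_isWeight hK hne hpos (ENNReal.inv_ne_zero.2 hfin)
  have hIK : volume K ≤ ∫⁻ v, h v := by
    rw [← lintegral_indicator_one hK.measurableSet]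
    refine lintegral_mono fun v => ?_
    by_cases hv : v ∈ K
    · rw [Set.indicator_of_mem hv, h1 v hv, Pi.one_apply]
    · rw [Set.indicator_of_notMem hv]; exact zero_le
  have hU : MeasurableSet ({v | h v ≠ 0} \ K) :=
    (hh.measurable (measurableSet_singleton 0).compl).diff hK.measurableSet
  have hU0 : (0 : Fin 2 → ℝ) ∉ {v | h v ≠ 0} \ K := fun h0 => h0.1 (hh.eq_zero le_rfl)
  have hsub : {x : LatticeSpace 2 | ∀ m, vecOf 2 x.out m ∉ K} ⊆
      {x | primSum h 1 x = 0} ∪ {x | ∃ m, vecOf 2 x.out m ∈ {v | h v ≠ 0} \ K} := by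
    intro x hx
    by_cases h0 : primSum h 1 x = 0
    · exact Or.inl h0
    · right
      rw [primSum, ENNReal.tsum_eq_zero, not_forall] at h0
      obtain ⟨p, hp⟩ := h0
      rw [inv_one, one_smul] at hp
      exact ⟨p, hp, hx p⟩
  calc _ ≤ (μ {x | primSum h 1 x = 0} + (κ * volume K)⁻¹) * (κ * volume K) := by
        gcongr
        exact (measure_mono hsub).trans ((measure_union_le _ _).trans
          (add_le_add le_rfl ((measure_hit_le le_rfl hμ hU hU0).trans hvol)))
    _ ≤ μ {x | primSum h 1 x = 0} * (κ * ∫⁻ v, h v) + 1 := by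
        rw [add_mul]
        gcongr
        exact ENNReal.inv_mul_le_one _
    _ ≤ 4 + 1 := by
        gcongr
        exact hh.measure_primSum_eq_zero_mul_le hκ hκt hμ
    _ = 5 := by norm_num

lemma measure_miss_eq_zero {n : ℕ} {μ : Measure (LatticeSpace n)} {T : Set (Fin n → ℝ)}
    (hT : MeasurableSet T) (hvol : volume T = ∞) {C : ℝ≥0∞} (hC : C ≠ ∞)
    (hle : ∀ K ⊆ T, IsCompact K → 0 < volume K →
      μ {x | ∀ m, vecOf n x.out m ∉ K} * volume K ≤ C) :
    μ {x | ∀ m, vecOf n x.out m ∉ T} = 0 := by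
  by_contra h0
  obtain ⟨N, hN⟩ := ENNReal.exists_nat_mul_gt h0 hC
  obtain ⟨K, hKT, hK, hNK⟩ := hT.exists_lt_isCompact (μ := volume)
    (r := (N : ℝ≥0∞)) (by rw [hvol]; exact ENNReal.natCast_lt_top N)
  refine absurd (hle K hKT hK (zero_le.trans_lt hNK)) (not_le.2 (hN.trans_le ?_))
  rw [mul_comm]
  gcongr

lemma ae_exists_vecOf_mem_of_three_le {n : ℕ} (hn : 3 ≤ n)
    {μ : Measure (LatticeSpace n)} [IsProbabilityMeasure μ]
    (hμ : ∀ (g : SLR n) (s : Set (LatticeSpace n)), μ ((fun x => g • x) ⁻¹' s) = μ s)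
    {A : Set (Fin n → ℝ)} (hA : MeasurableSet A) (hA0 : (0 : Fin n → ℝ) ∉ A)
    (hvol : volume A = ∞) : ∀ᵐ x ∂μ, ∃ m, vecOf n x.out m ∈ A := by
  have h := measure_miss_eq_zero (μ := μ) hA hvol (C := (∑' a, tailWeight a) ^ 2)
    (ENNReal.pow_ne_top tsum_tailWeight_ne_top) fun K hKA hK hK0 =>
      measure_miss_mul_le hn hμ hK.measurableSet (fun h0 => hA0 (hKA h0)) hK0.ne'
        hK.measure_lt_top.ne
  rw [ae_iff]
  simpa only [not_exists] using h

lemma ae_exists_vecOf_mem_of_pos {μ : Measure (LatticeSpace 2)} [IsProbabilityMeasure μ]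
    (hμ : ∀ (g : SLR 2) (s : Set (LatticeSpace 2)), μ ((fun x => g • x) ⁻¹' s) = μ s)
    {A : Set (Fin 2 → ℝ)} (hA : MeasurableSet A) (hpos : ∀ v ∈ A, 0 < v 0)
    (hvol : volume A = ∞) : ∀ᵐ x ∂μ, ∃ m, vecOf 2 x.out m ∈ A := by
  obtain ⟨κ, hκt, hκ⟩ := exists_lintegral_tsum_toSLR hμ
  have hκ0 : κ ≠ 0 := by
    rintro rfl
    simpa using orbitConstant_mul_tsum hκ hμ
  have h := measure_miss_eq_zero (μ := μ) hA hvol (C := 5 / κ)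
    (ENNReal.div_ne_top (by simp) hκ0) fun K hKA hK _ => by
      rw [ENNReal.le_div_iff_mul_le (Or.inl hκ0) (Or.inl hκt), mul_assoc, mul_comm (volume K)]
      exact measure_miss_plane_mul_le hκ hκt hμ hK fun v hv => hpos v (hKA hv)
  rw [ae_iff]
  simpa only [not_exists] using h

lemma ae_exists_vecOf_mem_plane {μ : Measure (LatticeSpace 2)} [IsProbabilityMeasure μ]
    (hμ : ∀ (g : SLR 2) (s : Set (LatticeSpace 2)), μ ((fun x => g • x) ⁻¹' s) = μ s)
    {A : Set (Fin 2 → ℝ)} (hA : MeasurableSet A)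
    (hvol : volume A = ∞) : ∀ᵐ x ∂μ, ∃ m, vecOf 2 x.out m ∈ A := by
  have hp : MeasurableSet {v : Fin 2 → ℝ | 0 < v 0} :=
    measurableSet_lt measurable_const (measurable_pi_apply 0)
  by_cases h1 : volume (A ∩ {v | 0 < v 0}) = ∞
  · filter_upwards [ae_exists_vecOf_mem_of_pos hμ (hA.inter hp) (fun v hv => hv.2) h1]
      with x ⟨m, hm⟩ using ⟨m, hm.1⟩
  have h2 : volume (Neg.neg ⁻¹' A ∩ {v | 0 < v 0}) = ∞ := by
    by_contra h2
    have h3 : volume (A ∩ {v | v 0 < 0}) ≠ ∞ := by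
      rw [← Measure.measure_preimage_neg] at h2
      convert h2 using 2
      ext v
      simp
    have h4 : volume {v : Fin 2 → ℝ | v 0 = 0} = 0 := by
      have := ae_apply_zero_ne_zero
      rw [ae_iff] at this
      simpa using this
    refine absurd hvol (ne_top_of_le_ne_top (ENNReal.add_ne_top.2
      ⟨ENNReal.add_ne_top.2 ⟨h1, h3⟩, h4.trans_ne zero_ne_top⟩)
      ((measure_mono ?_).trans ((measure_union_le _ _).trans
        (add_le_add (measure_union_le _ _) le_rfl))))
    intro v hv
    rcases lt_trichotomy (v 0) 0 with h | h | h
    · exact Or.inl (Or.inr ⟨hv, h⟩)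
    · exact Or.inr h
    · exact Or.inl (Or.inl ⟨hv, h⟩)
  filter_upwards [ae_exists_vecOf_mem_of_pos hμ ((measurable_neg hA).inter hp)
    (fun v hv => hv.2) h2] with x ⟨m, hm⟩
  refine ⟨-m, ?_⟩
  rw [vecOf_neg]
  exact hm.1

lemma intersects_of_vecOf_out_mem {n : ℕ} {x : LatticeSpace n} {A : Set (Fin n → ℝ)}
    {m : Fin n → ℤ} (hm : vecOf n x.out m ∈ A \ {0}) : Intersects n x A := by
  rintro g rfl
  obtain ⟨⟨γ, hγ⟩, h⟩ := QuotientGroup.mk_out_eq_mul (latticeGamma n) g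
  obtain ⟨γ, rfl⟩ := hγ
  have e : vecOf n (g * Matrix.SpecialLinearGroup.map (Int.castRingHom ℝ) γ) m =
      vecOf n g (γ.1 *ᵥ m) := by
    rw [vecOf, vecOf, Matrix.SpecialLinearGroup.coe_mul, ← Matrix.mulVec_mulVec]
    congr 1
    exact (funext fun i => RingHom.map_mulVec (Int.castRingHom ℝ) γ.1 m i).symm
  rw [h, e] at hm
  refine ⟨γ.1 *ᵥ m, fun h0 => hm.2 ?_, hm.1⟩
  rw [h0]
  exact vecOf_zero n g

/-- If `A ⊆ ℝⁿ` has infinite Lebesgue measure, then almost every unimodular lattice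
contains a nonzero vector lying in `A`. -/
theorem ae_intersects_of_infinite_volume (n : ℕ) (hn : 2 ≤ n)
    (μ : Measure (LatticeSpace n)) [IsProbabilityMeasure μ]
    (hinv : ∀ (g : SLR n) (s : Set (LatticeSpace n)), μ ((fun x => g • x) ⁻¹' s) = μ s)
    (A : Set (Fin n → ℝ)) (hA : MeasurableSet A) (hvol : volume A = ⊤) :
    ∀ᵐ Λ ∂μ, Intersects n Λ A := by
  have : Nonempty (Fin n) := ⟨⟨0, by omega⟩⟩
  have hA' : MeasurableSet (A \ {0}) := hA.diff (measurableSet_singleton 0)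
  have hvol' : volume (A \ {0}) = ∞ := by
    rw [measure_sdiff_null (measure_singleton 0), hvol]
  rcases hn.eq_or_lt with rfl | hn
  · filter_upwards [ae_exists_vecOf_mem_plane hinv hA' hvol'] with x ⟨m, hm⟩
    exact intersects_of_vecOf_out_mem hm
  · filter_upwards [ae_exists_vecOf_mem_of_three_le hn hinv hA' (fun h => h.2 rfl) hvol']
      with x ⟨m, hm⟩
    exact intersects_of_vecOf_out_mem hm
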